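/- arXiv:2209.03852 — 3 statements merged into one kernel-verified Lean document; each statement's English description precedes it below -/
import Mathlib

section
/- Let H²_β be a weighted Hardy space of polynomial growth, and let B(z) = ∏_{j=1}^m (z_j − z)/(1 − conj(z_j)z) be a Blaschke product on 𝔻 with m distinct zero points z_1, …, z_m. Then the sequence {B^n(z)/(β_n (1 − conj(z_j)z)) : 1 ≤ j ≤ m, n = 0, 1, 2, …} is a Riesz basis of H²_β. -/
noncomputable section

open Complex Filter Topology

/-- The sequence-space (ℓ²) model of a weighted Hardy space `H²_β`.
An element `a : H2` represents the analytic function whose `k`-th Taylor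
coefficient is `a k / β k` (so that `‖a‖` is exactly the `H²_β`-norm). -/
abbrev H2 : Type := lp (fun _ : ℕ => ℂ) 2

/-- The direct sum (ℓ²-sense) of `m` copies of `H2`. -/
abbrev Hm (m : ℕ) : Type := PiLp 2 (fun _ : Fin m => H2)

/-- The open unit disk 𝔻 ⊆ ℂ. -/
def unitDisk : Set ℂ := Metric.ball 0 1

/-- `β_0 = 1` and `β_k = ∏_{j=1}^k w_j`. -/
def betaSeq (w : ℕ → ℝ) (k : ℕ) : ℝ := ∏ j ∈ Finset.Icc 1 k, w j

/-- The analytic function on 𝔻 represented by the vector `a` in the model of `H²_β`: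
`f(z) = ∑_k (a k / β k) z^k`. -/
def repFun (β : ℕ → ℝ) (a : H2) (z : ℂ) : ℂ := ∑' k, (a k / (β k : ℂ)) * z ^ k

/-- `T` is (the ℓ²-model of) the multiplication operator `M_g` on `H²_β`.
Existence of such a `T` says precisely that `M_g` is bounded on `H²_β`. -/
def RepMul (β : ℕ → ℝ) (g : ℂ → ℂ) (T : H2 →L[ℂ] H2) : Prop :=
  ∀ a : H2, ∀ z ∈ unitDisk, repFun β (T a) z = g z * repFun β a z

/-- `T` is (the ℓ²-model of) the composition operator `C_ψ` on `H²_β`.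
Existence of such a `T` says precisely that `C_ψ` is bounded on `H²_β`. -/
def RepComp (β : ℕ → ℝ) (ψ : ℂ → ℂ) (T : H2 →L[ℂ] H2) : Prop :=
  ∀ a : H2, ∀ z ∈ unitDisk, repFun β (T a) z = repFun β a (ψ z)

/-- The Möbius factor `φ_{z₀}(z) = (z₀ - z)/(1 - conj z₀ · z)`. -/
def mobius (z₀ z : ℂ) : ℂ := (z₀ - z) / (1 - (starRingEnd ℂ) z₀ * z)

/-- `φ` belongs to `Aut(𝔻)`, i.e. `φ(z) = e^{iθ}(z₀ - z)/(1 - conj z₀ · z)`. -/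
def IsDiskAut (φ : ℂ → ℂ) : Prop :=
  ∃ (θ : ℝ) (z₀ : ℂ), z₀ ∈ unitDisk ∧
    ∀ z, φ z = Complex.exp (θ * Complex.I) * mobius z₀ z

/-- `B` is a finite Blaschke product of order `m`. -/
def IsBlaschke (m : ℕ) (B : ℂ → ℂ) : Prop :=
  ∃ (θ : ℝ) (zs : Fin m → ℂ), (∀ j, zs j ∈ unitDisk) ∧
    ∀ z, B z = Complex.exp (θ * Complex.I) * ∏ j, mobius (zs j) z

/-- `w` is a positive weight sequence tending to `1` such that the weighted Hardy
space `H²_β` is of polynomial growth: `sup_k (k+1)|w_k - 1| < ∞`. -/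
def PolyGrowth (w : ℕ → ℝ) : Prop :=
  (∀ k, 1 ≤ k → 0 < w k) ∧ Tendsto w atTop (nhds 1) ∧
    ∃ M : ℝ, ∀ k : ℕ, 1 ≤ k → ((k : ℝ) + 1) * |w k - 1| ≤ M

/-- `f` is analytic on an open neighbourhood of the closed unit disk. -/
def AnalyticOnClosedDisk (f : ℂ → ℂ) : Prop :=
  ∃ U : Set ℂ, IsOpen U ∧ Metric.closedBall (0:ℂ) 1 ⊆ U ∧ AnalyticOnNhd ℂ f U

/-- A family in `H2` is a Riesz basis if some bounded invertible operator maps it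
to an orthonormal basis. -/
def RieszBasis {ι : Type} (x : ι → H2) : Prop :=
  ∃ V : H2 ≃L[ℂ] H2, Orthonormal ℂ (fun i => V (x i)) ∧
    (Submodule.span ℂ (Set.range fun i => V (x i))).topologicalClosure = ⊤

lemma h2_mem {f : ℕ → ℂ} (h : Summable fun k => ‖f k‖ ^ 2) : Memℓp f 2 := by
  apply memℓp_gen
  simpa using h

def mkH2 (f : ℕ → ℂ) (h : Summable fun k => ‖f k‖ ^ 2) : H2 := ⟨f, h2_mem h⟩

@[simp] lemma mkH2_apply (f : ℕ → ℂ) (h) (k : ℕ) : mkH2 f h k = f k := rfl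

lemma h2_hasSum (f : H2) : HasSum (fun k => ‖f k‖ ^ 2) (‖f‖ ^ 2) := by
  have := lp.hasSum_norm (p := 2) (by norm_num) f
  simpa using this

lemma h2_inner (f g : H2) : HasSum (fun k => starRingEnd ℂ (f k) * g k) (inner ℂ f g) := by
  have := lp.hasSum_inner (𝕜 := ℂ) f g
  simpa [mul_comm] using this

lemma h2_ext {f g : H2} (h : ∀ k, f k = g k) : f = g := by
  apply lp.ext
  funext k
  exact h k

lemma h2_coord_le (f : H2) (k : ℕ) : ‖f k‖ ≤ ‖f‖ :=
  lp.norm_apply_le_norm (by norm_num) f k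

/-- Taylor shift on sequences. -/
def shiftSeq (f : ℕ → ℂ) : ℕ → ℂ
  | 0 => 0
  | k + 1 => f k

lemma shift_hasSum (f : H2) : HasSum (fun k => ‖shiftSeq f k‖ ^ 2) (‖f‖ ^ 2) := by
  rw [← hasSum_nat_add_iff' 1]
  simpa [shiftSeq] using h2_hasSum f

def shiftI : H2 →ₗᵢ[ℂ] H2 where
  toFun f := mkH2 (shiftSeq f) (shift_hasSum f).summable
  map_add' f g := by
    apply h2_ext
    rintro (_ | k) <;> simp [shiftSeq]
  map_smul' c f := by
    apply h2_ext
    rintro (_ | k) <;> simp [shiftSeq]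
  norm_map' f := by
    have h1 := h2_hasSum (mkH2 (shiftSeq f) (shift_hasSum f).summable)
    have h2 := h1.unique (shift_hasSum f)
    exact (sq_eq_sq₀ (norm_nonneg _) (norm_nonneg _)).1 h2

def Sh : H2 →L[ℂ] H2 := shiftI.toContinuousLinearMap

@[simp] lemma Sh_zero (f : H2) : Sh f 0 = 0 := rfl
@[simp] lemma Sh_succ (f : H2) (k : ℕ) : Sh f (k + 1) = f k := rfl

lemma Sh_norm (f : H2) : ‖Sh f‖ = ‖f‖ := shiftI.norm_map f

lemma Sh_inner (f g : H2) : inner ℂ (Sh f) (Sh g) = inner ℂ f g := shiftI.inner_map_map f g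

lemma Sh_opNorm : ‖Sh‖ ≤ 1 := shiftI.norm_toContinuousLinearMap_le

/-- reproducing kernel of `z`. -/
lemma rk_hasSum {z : ℂ} (hz : ‖z‖ < 1) :
    HasSum (fun k : ℕ => ‖(starRingEnd ℂ z) ^ k‖ ^ 2) (1 - ‖z‖ ^ 2)⁻¹ := by
  have : HasSum (fun k : ℕ => (‖z‖ ^ 2) ^ k) (1 - ‖z‖ ^ 2)⁻¹ := by
    apply hasSum_geometric_of_lt_one (by positivity)
    nlinarith [norm_nonneg z]
  convert this using 2 with k
  simp [← pow_mul, mul_comm]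

def rk (z : ℂ) : H2 :=
  if hz : ‖z‖ < 1 then mkH2 (fun k => (starRingEnd ℂ z) ^ k) (rk_hasSum hz).summable else 0

lemma rk_apply {z : ℂ} (hz : ‖z‖ < 1) (k : ℕ) : rk z k = (starRingEnd ℂ z) ^ k := by
  simp [rk, hz]

lemma rk_inner {z : ℂ} (hz : ‖z‖ < 1) (f : H2) :
    HasSum (fun k => z ^ k * f k) (inner ℂ (rk z) f) := by
  simpa [rk_apply hz] using h2_inner (rk z) f

lemma rk_inner_Sh {z : ℂ} (hz : ‖z‖ < 1) (f : H2) :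
    inner ℂ (rk z) (Sh f) = z * inner ℂ (rk z) f := by
  have h1 := (rk_inner hz f).mul_left z
  have h2 := rk_inner hz (Sh f)
  rw [← hasSum_nat_add_iff' 1] at h2
  simp only [Finset.range_one, Finset.sum_singleton, Sh_zero, mul_zero, sub_zero, Sh_succ] at h2
  refine h2.unique ?_
  have e : (fun k => z ^ (k + 1) * f k) = fun k => z * (z ^ k * f k) := by
    funext k
    ring
  rw [e]
  exact h1

lemma rk_inner_rk {z a : ℂ} (hz : ‖z‖ < 1) (ha : ‖a‖ < 1) :
    inner ℂ (rk z) (rk a) = 1 / (1 - starRingEnd ℂ a * z) := by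
  have h1 := rk_inner hz (rk a)
  simp only [rk_apply ha] at h1
  refine h1.unique ?_
  rw [one_div]
  have : HasSum (fun k => (starRingEnd ℂ a * z) ^ k) (1 - starRingEnd ℂ a * z)⁻¹ := by
    apply hasSum_geometric_of_norm_lt_one
    rw [norm_mul, RCLike.norm_conj]
    nlinarith [norm_nonneg z, norm_nonneg a]
  convert this using 2 with k
  rw [mul_pow, mul_comm]

lemma one_sub_ne {z a : ℂ} (hz : ‖z‖ < 1) (ha : ‖a‖ < 1) : 1 - starRingEnd ℂ a * z ≠ 0 := by
  intro h
  have h1 : starRingEnd ℂ a * z = 1 := (sub_eq_zero.1 h).symm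
  have h2 : ‖a‖ * ‖z‖ = 1 := by
    rw [← RCLike.norm_conj a, ← norm_mul, h1, norm_one]
  nlinarith [norm_nonneg z, norm_nonneg a]

/-- `1 - conj a S`. -/
def DenO (a : ℂ) : H2 →L[ℂ] H2 := 1 - starRingEnd ℂ a • Sh

lemma Den_isUnit {a : ℂ} (ha : ‖a‖ < 1) : IsUnit (DenO a) := by
  apply isUnit_one_sub_of_norm_lt_one
  rw [norm_smul, RCLike.norm_conj]
  nlinarith [norm_nonneg a, Sh_opNorm, norm_nonneg Sh]

def NumO (a : ℂ) : H2 →L[ℂ] H2 := a • 1 - Sh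

/-- multiplication by the Moebius factor on the Hardy space. -/
def Tm (a : ℂ) : H2 →L[ℂ] H2 := NumO a * Ring.inverse (DenO a)

lemma Tm_comm (a b : ℂ) : Commute (Tm a) (Tm b) := by
  have c1 : ∀ x : ℂ, Commute Sh (x • Sh) := fun x => (Commute.refl Sh).smul_right x
  have c2 : ∀ x y : ℂ, Commute (x • Sh) (y • Sh) := fun x y => (c1 y).smul_left x
  have d : ∀ x y, Commute (DenO x) (DenO y) := fun x y =>
    Commute.sub_left (Commute.one_left _) (Commute.sub_right (Commute.one_right _) (c2 _ _))
  have n : ∀ x y, Commute (NumO x) (NumO y) := fun x y =>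
    Commute.sub_left ((Commute.one_left _).smul_left x)
      (Commute.sub_right ((Commute.one_right _).smul_right y) (Commute.refl _))
  have nd : ∀ x y, Commute (NumO x) (DenO y) := fun x y =>
    Commute.sub_left ((Commute.one_left _).smul_left x)
      (Commute.sub_right (Commute.one_right _) (c1 _))
  have inv : ∀ (X : H2 →L[ℂ] H2) y, Commute X (DenO y) → Commute X (Ring.inverse (DenO y)) := by
    intro X y h
    by_cases hu : IsUnit (DenO y)
    · obtain ⟨u, hu⟩ := hu
      rw [← hu] at h ⊢
      rw [Ring.inverse_unit]
      exact h.units_inv_right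
    · rw [Ring.inverse_non_unit _ hu]
      exact Commute.zero_right _
  have i1 : Commute (NumO a) (Ring.inverse (DenO b)) := inv _ _ (nd a b)
  have i2 : Commute (Ring.inverse (DenO a)) (NumO b) := (inv _ _ (nd b a)).symm
  have i3 := (d a b).ringInverse_ringInverse
  exact Commute.mul_left ((n a b).mul_right i1) (i2.mul_right i3)

/-- decomposition of `Tm a f`. -/
lemma Tm_exists {a : ℂ} (ha : ‖a‖ < 1) (f : H2) :
    ∃ h : H2, h - starRingEnd ℂ a • Sh h = f ∧ Tm a f = a • h - Sh h := by
  refine ⟨Ring.inverse (DenO a) f, ?_, ?_⟩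
  · have := Ring.mul_inverse_cancel _ (Den_isUnit ha)
    have := congrArg (fun X : H2 →L[ℂ] H2 => X f) this
    simpa [DenO] using this
  · simp [Tm, NumO]

lemma Tm_of {a : ℂ} (ha : ‖a‖ < 1) (h : H2) :
    Tm a (h - starRingEnd ℂ a • Sh h) = a • h - Sh h := by
  have := Ring.inverse_mul_cancel _ (Den_isUnit ha)
  have := congrArg (fun X : H2 →L[ℂ] H2 => NumO a (X h)) this
  simpa [DenO, Tm, NumO] using this

lemma Tm_norm {a : ℂ} (ha : ‖a‖ < 1) (f : H2) : ‖Tm a f‖ = ‖f‖ := by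
  obtain ⟨h, h1, h2⟩ := Tm_exists ha f
  rw [h2, ← h1]
  refine (sq_eq_sq₀ (norm_nonneg _) (norm_nonneg _)).1 ?_
  rw [@norm_sub_sq ℂ, @norm_sub_sq ℂ, inner_smul_left, inner_smul_right, norm_smul, norm_smul,
    Sh_norm, RCLike.norm_conj]
  ring

lemma Tm_inner {a : ℂ} (ha : ‖a‖ < 1) (f g : H2) :
    inner ℂ (Tm a f) (Tm a g) = inner ℂ f g :=
  (LinearIsometry.mk (Tm a).toLinearMap (Tm_norm ha)).inner_map_map f g

lemma Tm_rk {a z : ℂ} (ha : ‖a‖ < 1) (hz : ‖z‖ < 1) (f : H2) :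
    inner ℂ (rk z) (Tm a f) = mobius a z * inner ℂ (rk z) f := by
  obtain ⟨h, h1, h2⟩ := Tm_exists ha f
  rw [h2, ← h1, inner_sub_right, inner_sub_right, inner_smul_right, inner_smul_right,
    rk_inner_Sh hz, mobius]
  have := one_sub_ne hz ha
  rw [div_mul_eq_mul_div, eq_div_iff this]
  ring

lemma Tm_range {a : ℂ} (ha : ‖a‖ < 1) (f : H2) (hf : inner ℂ (rk a) f = 0) :
    ∃ h, f = Tm a h := by
  refine ⟨ContinuousLinearMap.adjoint (Tm a) f, ?_⟩
  set q : H2 := f - Tm a (ContinuousLinearMap.adjoint (Tm a) f) with hq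
  have hTq : ∀ g, inner ℂ q (Tm a g) = 0 := by
    intro g
    rw [hq, inner_sub_left, Tm_inner ha, ContinuousLinearMap.adjoint_inner_left, sub_self]
  have hcoord : ∀ k, q (k + 1) = starRingEnd ℂ a * q k := by
    intro k
    have h1 := hTq (lp.single 2 k 1 - starRingEnd ℂ a • Sh (lp.single 2 k 1))
    rw [Tm_of ha] at h1
    have hs : Sh (lp.single 2 k 1) = (lp.single 2 (k + 1) 1 : H2) := by
      apply h2_ext
      rintro (_ | l)
      · simp [lp.single_apply]
      · simp [lp.single_apply, Pi.single_apply]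
    rw [hs, inner_sub_right, inner_smul_right, lp.inner_single_right, lp.inner_single_right] at h1
    simp only [RCLike.inner_apply, one_mul] at h1
    have h2 := congrArg (starRingEnd ℂ) (sub_eq_zero.1 h1)
    simpa using h2.symm
  have hk : q = q 0 • rk a := by
    apply h2_ext
    intro k
    simp only [lp.coeFn_smul, Pi.smul_apply, smul_eq_mul, rk_apply ha]
    induction k with
    | zero => simp
    | succ k ih => rw [hcoord, ih]; ring
  have h0 : inner ℂ (rk a) q = 0 := by
    rw [hq, inner_sub_right, hf, Tm_rk ha ha]
    simp [mobius]
  have : inner ℂ q q = 0 := by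
    nth_rewrite 1 [hk]
    rw [inner_smul_left, h0, mul_zero]
  have : q = 0 := inner_self_eq_zero.1 this
  exact sub_eq_zero.1 this

def Wb (r q : ℝ) (f : H2) : Prop := ∀ N : ℕ, ∑ k ∈ Finset.range N, ‖f k‖ * r ^ k ≤ q

lemma Wb_coord {r q : ℝ} (hr : 0 < r) {f : H2} (h : Wb r q f) (k : ℕ) :
    ‖f k‖ ≤ q * (r⁻¹) ^ k := by
  have h1 := h (k + 1)
  rw [Finset.sum_range_succ] at h1
  have h2 : 0 ≤ ∑ k ∈ Finset.range k, ‖f k‖ * r ^ k :=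
    Finset.sum_nonneg fun i _ => by positivity
  rw [inv_pow, ← div_eq_mul_inv, le_div_iff₀ (by positivity)]
  linarith

lemma Sh_W {r : ℝ} (hr : 0 < r) (h : H2) (N : ℕ) :
    ∑ k ∈ Finset.range N, ‖Sh h k‖ * r ^ k ≤ r * ∑ k ∈ Finset.range N, ‖h k‖ * r ^ k := by
  cases N with
  | zero => simp
  | succ N =>
    rw [Finset.sum_range_succ', Finset.sum_range_succ]
    have e : ∑ k ∈ Finset.range N, ‖Sh h (k + 1)‖ * r ^ (k + 1)
        = r * ∑ k ∈ Finset.range N, ‖h k‖ * r ^ k := by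
      rw [Finset.mul_sum]
      refine Finset.sum_congr rfl fun k _ => ?_
      rw [Sh_succ]
      ring
    rw [e]
    have : 0 ≤ r * (‖h N‖ * r ^ N) := by positivity
    simp only [Sh_zero, norm_zero, zero_mul, add_zero, mul_add]
    linarith

lemma Tm_W {r q A : ℝ} (hr : 0 < r) {a : ℂ} (ha : ‖a‖ ≤ A) (hA : A < 1) (hAr : A * r < 1) {f : H2}
    (h : Wb r q f) : Wb r ((A + r) / (1 - A * r) * q) (Tm a f) := by
  intro N
  obtain ⟨g, h1, h2⟩ := Tm_exists (ha.trans_lt hA) f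
  have hA0 : 0 ≤ A := (norm_nonneg a).trans ha
  set X := ∑ k ∈ Finset.range N, ‖g k‖ * r ^ k with hX
  have hX0 : 0 ≤ X := Finset.sum_nonneg fun i _ => by positivity
  have hS := Sh_W hr g N
  rw [← hX] at hS
  have e1 : X ≤ q + A * (r * X) := by
    calc X ≤ ∑ k ∈ Finset.range N, (‖f k‖ * r ^ k + A * (‖Sh g k‖ * r ^ k)) := by
          refine Finset.sum_le_sum fun k _ => ?_
          have : g k = f k + starRingEnd ℂ a * Sh g k := by
            rw [← h1]
            change g k = (g k - starRingEnd ℂ a * Sh g k) + starRingEnd ℂ a * Sh g k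
            ring
          have h3 : ‖g k‖ ≤ ‖f k‖ + A * ‖Sh g k‖ := by
            calc ‖g k‖ ≤ ‖f k‖ + ‖starRingEnd ℂ a * Sh g k‖ := by
                  rw [this]; exact norm_add_le _ _
              _ ≤ _ := by
                  rw [norm_mul, RCLike.norm_conj]; gcongr
          calc _ ≤ (‖f k‖ + A * ‖Sh g k‖) * r ^ k := by gcongr
            _ = _ := by ring
      _ ≤ _ := by
          rw [Finset.sum_add_distrib, ← Finset.mul_sum]
          have := h N
          gcongr
  have hd : 0 < 1 - A * r := by linarith
  have e2 : X ≤ q / (1 - A * r) := by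
    rw [le_div_iff₀ hd]; nlinarith
  calc ∑ k ∈ Finset.range N, ‖Tm a f k‖ * r ^ k
      ≤ ∑ k ∈ Finset.range N, (A * (‖g k‖ * r ^ k) + ‖Sh g k‖ * r ^ k) := by
        refine Finset.sum_le_sum fun k _ => ?_
        have : ‖Tm a f k‖ ≤ A * ‖g k‖ + ‖Sh g k‖ := by
          rw [h2]
          calc ‖(a • g - Sh g) k‖ ≤ ‖a * g k‖ + ‖Sh g k‖ :=
                norm_sub_le (a * g k) (Sh g k)
            _ ≤ _ := by rw [norm_mul]; gcongr
        calc _ ≤ (A * ‖g k‖ + ‖Sh g k‖) * r ^ k := by gcongr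
          _ = _ := by ring
    _ ≤ A * X + r * X := by
        rw [Finset.sum_add_distrib, ← Finset.mul_sum]
        gcongr
    _ = (A + r) * X := by ring
    _ ≤ (A + r) * (q / (1 - A * r)) := by gcongr
    _ = _ := by ring

lemma rk_W {r A : ℝ} (hr : 0 < r) {a : ℂ} (ha : ‖a‖ ≤ A) (hA : A < 1) (hAr : A * r < 1) :
    Wb r (1 / (1 - A * r)) (rk a) := by
  intro N
  have hA0 : 0 ≤ A := (norm_nonneg a).trans ha
  calc ∑ k ∈ Finset.range N, ‖rk a k‖ * r ^ k ≤ ∑ k ∈ Finset.range N, (A * r) ^ k := by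
        refine Finset.sum_le_sum fun k _ => ?_
        rw [rk_apply (ha.trans_lt hA), norm_pow, RCLike.norm_conj, mul_pow]
        gcongr
    _ ≤ ∑' k, (A * r) ^ k := by
        apply Summable.sum_le_tsum
        · intro i _; positivity
        · exact summable_geometric_of_lt_one (by positivity) hAr
    _ = _ := by rw [tsum_geometric_of_lt_one (by positivity) hAr, one_div]

lemma h2_W {r : ℝ} (hr : 0 < r) (hr1 : r < 1) (f : H2) : Wb r (‖f‖ / (1 - r)) f := by
  intro N
  calc ∑ k ∈ Finset.range N, ‖f k‖ * r ^ k ≤ ∑ k ∈ Finset.range N, ‖f‖ * r ^ k := by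
        refine Finset.sum_le_sum fun k _ => ?_
        have := h2_coord_le f k
        gcongr
    _ = ‖f‖ * ∑ k ∈ Finset.range N, r ^ k := by rw [Finset.mul_sum]
    _ ≤ ‖f‖ * ∑' k, r ^ k := by
        gcongr
        apply Summable.sum_le_tsum
        · intro i _; positivity
        · exact summable_geometric_of_lt_one (by positivity) hr1
    _ = _ := by rw [tsum_geometric_of_lt_one (by positivity) hr1]; rfl

lemma smul_W {r q : ℝ} {f : H2} (h : Wb r q f) (c : ℂ) : Wb r (‖c‖ * q) (c • f) := by
  intro N
  calc _ = ‖c‖ * ∑ k ∈ Finset.range N, ‖f k‖ * r ^ k := by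
        rw [Finset.mul_sum]
        refine Finset.sum_congr rfl fun k _ => ?_
        simp [mul_assoc]
    _ ≤ _ := by
        have := h N
        gcongr

def MB {m : ℕ} (zs : Fin m → ℂ) (s : Finset (Fin m)) : H2 →L[ℂ] H2 :=
  s.noncommProd (fun j => Tm (zs j)) (fun _ _ _ _ _ => Tm_comm _ _)

lemma MB_empty {m : ℕ} (zs : Fin m → ℂ) : MB zs ∅ = 1 := Finset.noncommProd_empty _ _

lemma MB_insert {m : ℕ} (zs : Fin m → ℂ) {s : Finset (Fin m)} {i : Fin m} (hi : i ∉ s) :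
    MB zs (insert i s) = Tm (zs i) * MB zs s :=
  Finset.noncommProd_insert_of_notMem _ _ _ _ hi

lemma MB_erase {m : ℕ} (zs : Fin m → ℂ) (j : Fin m) :
    MB zs Finset.univ = MB zs (Finset.univ.erase j) * Tm (zs j) :=
  (Finset.noncommProd_erase_mul _ (Finset.mem_univ j) _ _).symm

lemma MB_norm {m : ℕ} {zs : Fin m → ℂ} (hz : ∀ j, ‖zs j‖ < 1) (s : Finset (Fin m)) (f : H2) :
    ‖MB zs s f‖ = ‖f‖ := by
  induction s using Finset.induction_on with
  | empty => simp [MB_empty]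
  | insert i s hi ih => rw [MB_insert zs hi, mul_apply_eq_comp, Tm_norm (hz i), ih]

lemma MB_rk {m : ℕ} {zs : Fin m → ℂ} (hz : ∀ j, ‖zs j‖ < 1) (s : Finset (Fin m)) {z : ℂ}
    (hz1 : ‖z‖ < 1) (f : H2) :
    inner ℂ (rk z) (MB zs s f) = (∏ j ∈ s, mobius (zs j) z) * inner ℂ (rk z) f := by
  induction s using Finset.induction_on with
  | empty => simp [MB_empty]
  | insert i s hi ih =>
    rw [MB_insert zs hi, mul_apply_eq_comp, Tm_rk (hz i) hz1, ih,
      Finset.prod_insert hi, mul_assoc]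

lemma mobius_ne {a z : ℂ} (ha : ‖a‖ < 1) (hz : ‖z‖ < 1) (h : a ≠ z) : mobius a z ≠ 0 :=
  div_ne_zero (sub_ne_zero.2 h) (one_sub_ne hz ha)

lemma mobius_self (a : ℂ) : mobius a a = 0 := by simp [mobius]

lemma MB_range {m : ℕ} {zs : Fin m → ℂ} (hz : ∀ j, ‖zs j‖ < 1) (hinj : Function.Injective zs)
    (s : Finset (Fin m)) (f : H2) (hf : ∀ j ∈ s, inner ℂ (rk (zs j)) f = 0) :
    ∃ h, f = MB zs s h := by
  induction s using Finset.induction_on generalizing f with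
  | empty => exact ⟨f, by simp [MB_empty]⟩
  | insert i s hi ih =>
    obtain ⟨h, rfl⟩ := Tm_range (hz i) f (hf i (Finset.mem_insert_self _ _))
    obtain ⟨h', rfl⟩ := ih h (by
      intro j hj
      have h1 := hf j (Finset.mem_insert_of_mem hj)
      rw [Tm_rk (hz i) (hz j)] at h1
      refine (mul_eq_zero.1 h1).resolve_left (mobius_ne (hz i) (hz j) ?_)
      intro e
      exact hi (hinj e ▸ hj))
    exact ⟨h', by rw [MB_insert zs hi]; rfl⟩

lemma MB_W {m : ℕ} {zs : Fin m → ℂ} {r q A : ℝ} (hr : 0 < r) (hz : ∀ j, ‖zs j‖ ≤ A) (hA : A < 1)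
    (hAr : A * r < 1) (s : Finset (Fin m)) {f : H2} (h : Wb r q f) :
    Wb r (((A + r) / (1 - A * r)) ^ s.card * q) (MB zs s f) := by
  induction s using Finset.induction_on with
  | empty => simpa [MB_empty] using h
  | insert i s hi ih =>
    rw [MB_insert zs hi, mul_apply_eq_comp, Finset.card_insert_of_notMem hi, pow_succ',
      mul_assoc]
    exact Tm_W hr (hz i) hA hAr ih

lemma pow_W {M : H2 →L[ℂ] H2} {r q t : ℝ} (hM : ∀ q f, Wb r q f → Wb r (t * q) (M f)) {f : H2}
    (h : Wb r q f) (n : ℕ) : Wb r (t ^ n * q) ((M ^ n) f) := by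
  induction n with
  | zero => simpa using h
  | succ n ih =>
    rw [pow_succ', pow_succ', mul_apply_eq_comp, mul_assoc]
    exact hM _ _ ih

lemma pow_norm {M : H2 →L[ℂ] H2} (hM : ∀ f, ‖M f‖ = ‖f‖) (n : ℕ) (f : H2) :
    ‖(M ^ n) f‖ = ‖f‖ := by
  induction n with
  | zero => simp
  | succ n ih => rw [pow_succ', mul_apply_eq_comp, hM, ih]

lemma iso_inner {M : H2 →L[ℂ] H2} (hM : ∀ f, ‖M f‖ = ‖f‖) (f g : H2) :
    inner ℂ (M f) (M g) = inner ℂ f g :=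
  (LinearIsometry.mk M.toLinearMap hM).inner_map_map f g

/-- inner products of iterates on wandering vectors -/
lemma wander_inner {M : H2 →L[ℂ] H2} (hM : ∀ f, ‖M f‖ = ‖f‖) {g h : H2}
    (hg : ∀ f, inner ℂ g (M f) = 0) (hh : ∀ f, inner ℂ h (M f) = 0) (n l : ℕ) :
    inner ℂ ((M ^ n) g) ((M ^ l) h) = if n = l then inner ℂ g h else 0 := by
  rcases lt_trichotomy n l with hlt | rfl | hlt
  · obtain ⟨d, rfl⟩ := Nat.exists_eq_add_of_lt hlt
    rw [if_neg (by omega), add_assoc, pow_add, mul_apply_eq_comp,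
      iso_inner (pow_norm hM n), pow_succ', mul_apply_eq_comp, hg]
  · rw [if_pos rfl, iso_inner (pow_norm hM n)]
  · obtain ⟨d, rfl⟩ := Nat.exists_eq_add_of_lt hlt
    rw [if_neg (by omega), add_assoc, pow_add, mul_apply_eq_comp,
      iso_inner (pow_norm hM l), pow_succ', mul_apply_eq_comp, ← inner_conj_symm, hh,
      map_zero]

/-- the unweighted Bessel inequality -/
lemma wander_bessel {M : H2 →L[ℂ] H2} (hM : ∀ f, ‖M f‖ = ‖f‖) {g : H2}
    (hg : ∀ f, inner ℂ g (M f) = 0) (f : H2) (s : Finset ℕ) :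
    ∑ n ∈ s, ‖inner ℂ ((M ^ n) g) f‖ ^ 2 ≤ ‖g‖ ^ 2 * ‖f‖ ^ 2 := by
  by_cases h0 : g = 0
  · simp [h0]
  have hgn : (‖g‖ : ℂ) ≠ 0 := by simpa using h0
  have ho : Orthonormal ℂ (fun n : ℕ => (‖g‖ : ℂ)⁻¹ • (M ^ n) g) := by
    rw [orthonormal_iff_ite]
    intro n l
    rw [inner_smul_left, inner_smul_right, wander_inner hM hg hg]
    split_ifs with h
    · rw [inner_self_eq_norm_sq_to_K]
      simp
      field_simp
    · simp
  have hb := ho.sum_inner_products_le f (s := s)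
  have e : ∀ n, ‖inner ℂ ((M ^ n) g) f‖ ^ 2
      = ‖g‖ ^ 2 * ‖inner ℂ ((‖g‖ : ℂ)⁻¹ • (M ^ n) g) f‖ ^ 2 := by
    intro n
    rw [inner_smul_left]
    simp
    field_simp
  simp_rw [e, ← Finset.mul_sum]
  gcongr

/-- completeness in the unweighted space -/
lemma complete_u {m : ℕ} (hm : 0 < m) {zs : Fin m → ℂ} {A : ℝ} (hz : ∀ j, ‖zs j‖ ≤ A) (hA : A < 1)
    (hinj : Function.Injective zs) (f : H2)
    (hf : ∀ j n, inner ℂ (((MB zs Finset.univ) ^ n) (rk (zs j))) f = 0) : f = 0 := by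
  have hz1 : ∀ j, ‖zs j‖ < 1 := fun j => (hz j).trans_lt hA
  have hA0 : 0 ≤ A := (norm_nonneg _).trans (hz ⟨0, hm⟩)
  set M := MB zs Finset.univ with hMdef
  have hM : ∀ f, ‖M f‖ = ‖f‖ := MB_norm hz1 _
  have hex : ∀ n : ℕ, ∃ h, f = (M ^ n) h := by
    intro n
    induction n with
    | zero => exact ⟨f, by simp⟩
    | succ n ih =>
      obtain ⟨h, hh⟩ := ih
      obtain ⟨h', rfl⟩ := MB_range hz1 hinj Finset.univ h (by
        intro j _
        have := hf j n
        rwa [hh, iso_inner (pow_norm hM n)] at this)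
      exact ⟨h', by rw [hh, pow_succ]; rfl⟩
  set r := (1 - A) / 4 with hr
  have hr0 : 0 < r := by rw [hr]; linarith
  have hr1 : r < 1 := by rw [hr]; linarith
  have hAr : A * r < 1 := by nlinarith
  set t := (A + r) / (1 - A * r) with ht
  have ht0 : 0 ≤ t := by
    apply div_nonneg <;> linarith
  have ht1 : t < 1 := by
    rw [ht, div_lt_one (by linarith), hr]
    nlinarith
  have hρ1 : t ^ m < 1 := pow_lt_one₀ ht0 ht1 (by omega)
  apply h2_ext
  intro k
  have hb : ∀ n : ℕ, ‖f k‖ ≤ (t ^ m) ^ n * (‖f‖ / (1 - r) * (r⁻¹) ^ k) := by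
    intro n
    obtain ⟨h, hh⟩ := hex n
    have hn : ‖h‖ = ‖f‖ := by rw [hh, pow_norm hM]
    have h1 := pow_W (M := M) (r := r) (t := t ^ m) (by
      intro q f hq
      have := MB_W hr0 hz hA hAr Finset.univ hq
      simpa using this) (h2_W hr0 hr1 h) n
    rw [← hh, hn] at h1
    have := Wb_coord hr0 h1 k
    linarith
  have hl : Tendsto (fun n : ℕ => (t ^ m) ^ n * (‖f‖ / (1 - r) * (r⁻¹) ^ k)) atTop (𝓝 0) := by
    have := (tendsto_pow_atTop_nhds_zero_of_lt_one (by positivity) hρ1).mul_const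
      (‖f‖ / (1 - r) * (r⁻¹) ^ k)
    simpa using this
  have := ge_of_tendsto' hl hb
  simpa using this

structure PG (β : ℕ → ℝ) (N : ℕ) : Prop where
  pos : ∀ k, 0 < β k
  mono : Monotone fun k : ℕ => β k * ((k : ℝ) + 1) ^ N
  anti : Antitone fun k : ℕ => β k / ((k : ℝ) + 1) ^ N

lemma PG.ratio {β : ℕ → ℝ} {N : ℕ} (h : PG β N) {K : ℝ} {k n : ℕ}
    (h1 : (k : ℝ) + 1 ≤ K * (n + 1)) (h2 : (n : ℝ) + 1 ≤ K * (k + 1)) : β k ≤ K ^ N * β n := by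
  have hk := h.pos k
  have hn := h.pos n
  have hk1 : (0 : ℝ) < (k : ℝ) + 1 := by positivity
  have hn1 : (0 : ℝ) < (n : ℝ) + 1 := by positivity
  rcases le_total n k with hle | hle
  · have := h.anti hle
    simp only at this
    rw [div_le_div_iff₀ (by positivity) (by positivity)] at this
    have h3 : ((k : ℝ) + 1) ^ N ≤ K ^ N * ((n : ℝ) + 1) ^ N := by
      rw [← mul_pow]; gcongr
    have h4 : β k * ((n : ℝ) + 1) ^ N ≤ (K ^ N * β n) * ((n : ℝ) + 1) ^ N := by
      calc _ ≤ β n * ((k : ℝ) + 1) ^ N := this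
        _ ≤ β n * (K ^ N * ((n : ℝ) + 1) ^ N) := by gcongr
        _ = _ := by ring
    exact le_of_mul_le_mul_right h4 (by positivity)
  · have := h.mono hle
    simp only at this
    have h3 : ((n : ℝ) + 1) ^ N ≤ K ^ N * ((k : ℝ) + 1) ^ N := by
      rw [← mul_pow]; gcongr
    have h4 : β k * ((k : ℝ) + 1) ^ N ≤ (K ^ N * β n) * ((k : ℝ) + 1) ^ N := by
      calc _ ≤ β n * ((n : ℝ) + 1) ^ N := this
        _ ≤ β n * (K ^ N * ((k : ℝ) + 1) ^ N) := by gcongr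
        _ = _ := by ring
    exact le_of_mul_le_mul_right h4 (by positivity)

lemma PG.poly {β : ℕ → ℝ} {N : ℕ} (h : PG β N) (k n : ℕ) :
    β k / β n ≤ ((k : ℝ) + 1) ^ N * ((n : ℝ) + 1) ^ N := by
  rw [div_le_iff₀ (h.pos n), ← mul_pow]
  have hk1 : (0 : ℝ) ≤ (k : ℝ) := by positivity
  have hn1 : (0 : ℝ) ≤ (n : ℝ) := by positivity
  apply h.ratio <;> nlinarith [mul_nonneg hk1 hn1, mul_nonneg (mul_nonneg hk1 hn1) hn1,
    mul_nonneg (mul_nonneg hk1 hn1) hk1]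

lemma decay {x Y : ℝ} (hx : 0 < x) (hx1 : x < 1) (hY : 0 < Y) :
    ∃ D : ℕ, ∀ k n : ℕ, D * n ≤ k → (x ^ 2) ^ k * Y ^ n ≤ x ^ (k + n) := by
  obtain ⟨D, hD⟩ := exists_pow_lt_of_lt_one (show 0 < x / Y by positivity) hx1
  refine ⟨D, fun k n h => ?_⟩
  have h1 : x ^ D * Y ≤ x := ((lt_div_iff₀ hY).1 hD).le
  have h2 : x ^ k ≤ (x ^ D) ^ n := by
    rw [← pow_mul]
    exact pow_le_pow_of_le_one hx.le hx1.le h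
  calc (x ^ 2) ^ k * Y ^ n = x ^ k * (x ^ k * Y ^ n) := by ring
    _ ≤ x ^ k * ((x ^ D) ^ n * Y ^ n) := by gcongr
    _ = x ^ k * (x ^ D * Y) ^ n := by rw [mul_pow]
    _ ≤ x ^ k * x ^ n := by gcongr
    _ = _ := by rw [pow_add]

def Loc (u : ℕ → H2) : Prop := ∃ (C τ : ℝ) (D : ℕ), 0 ≤ C ∧ 0 < τ ∧ τ < 1 ∧
  ∀ n k, (D * n ≤ k ∨ D * k ≤ n) → ‖u n k‖ ≤ C * τ ^ (k + n)

lemma loc_of {u : ℕ → H2} {C1 C2 Q R ρ r : ℝ} (hC1 : 0 ≤ C1) (hC2 : 0 ≤ C2)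
    (hR : 1 < R) (hQ : 0 < Q) (hρ0 : 0 < ρ) (hρ : ρ < 1) (hr : 0 < r)
    (h1 : ∀ n, Wb R (Q ^ n * C1) (u n)) (h2 : ∀ n, Wb r (ρ ^ n * C2) (u n)) : Loc u := by
  have hRi : R⁻¹ < 1 := inv_lt_one_of_one_lt₀ hR
  have hRp : 0 < R⁻¹ := by positivity
  obtain ⟨D1, hD1⟩ := decay (x := √R⁻¹) (Y := Q) (Real.sqrt_pos.2 hRp)
    (by rw [Real.sqrt_lt' one_pos]; simpa using hRi) hQ
  obtain ⟨D2, hD2⟩ := decay (x := √ρ) (Y := r⁻¹) (Real.sqrt_pos.2 hρ0)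
    (by rw [Real.sqrt_lt' one_pos]; simpa using hρ) (by positivity)
  rw [Real.sq_sqrt hRp.le] at hD1
  rw [Real.sq_sqrt hρ0.le] at hD2
  refine ⟨max C1 C2, max (√R⁻¹) (√ρ), max D1 D2, le_max_of_le_left hC1,
    lt_max_of_lt_left (Real.sqrt_pos.2 hRp), ?_, ?_⟩
  · apply max_lt
    · rw [Real.sqrt_lt' one_pos]; simpa using hRi
    · rw [Real.sqrt_lt' one_pos]; simpa using hρ
  rintro n k (h | h)
  · have e1 := Wb_coord (by linarith) (h1 n) k
    have e2 := hD1 k n (le_trans (Nat.mul_le_mul_right _ (le_max_left _ _)) h)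
    calc ‖u n k‖ ≤ C1 * (R⁻¹ ^ k * Q ^ n) := by linarith
      _ ≤ C1 * (√R⁻¹) ^ (k + n) := by gcongr
      _ ≤ _ := by gcongr <;> exact le_max_left _ _
  · have e1 := Wb_coord hr (h2 n) k
    have e2 := hD2 n k (le_trans (Nat.mul_le_mul_right _ (le_max_right _ _)) h)
    calc ‖u n k‖ ≤ C2 * (ρ ^ n * r⁻¹ ^ k) := by linarith
      _ ≤ C2 * (√ρ) ^ (n + k) := by gcongr
      _ = C2 * (√ρ) ^ (k + n) := by rw [add_comm]
      _ ≤ _ := by gcongr <;> exact le_max_right _ _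

def yy (τ : ℝ) (N k : ℕ) : ℝ := τ ^ k * ((k : ℝ) + 1) ^ N

lemma yy_summable {τ : ℝ} (h0 : 0 < τ) (h1 : τ < 1) (N : ℕ) :
    Summable fun k => (yy τ N k) ^ 2 := by
  have h2 : τ ^ 2 < 1 := by nlinarith
  have hs : Summable fun k : ℕ => (k : ℝ) ^ (2 * N) * (τ ^ 2) ^ k :=
    summable_pow_mul_geometric_of_norm_lt_one _ (by
      rw [Real.norm_of_nonneg (by positivity)]; exact h2)
  have hs' := ((summable_nat_add_iff 1).2 hs).mul_left ((τ ^ 2)⁻¹)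
  refine hs'.congr fun k => ?_
  simp only [yy]
  push_cast
  field_simp
  ring

/-- dyadic level -/
def lv (k : ℕ) : ℕ := Nat.log 2 (k + 1)

lemma lv_le (k : ℕ) : 2 ^ lv k ≤ k + 1 := Nat.pow_log_le_self 2 (by omega)
lemma lv_lt (k : ℕ) : k + 1 < 2 ^ (lv k + 1) := Nat.lt_pow_succ_log_self (by norm_num) _

def Nr (L q : ℕ) : Finset ℕ :=
  (Finset.range (2 ^ (q + L + 1))).filter (fun k => q ≤ lv k + L ∧ lv k ≤ q + L)

lemma mem_Nr {L q k : ℕ} : k ∈ Nr L q ↔ q ≤ lv k + L ∧ lv k ≤ q + L := by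
  simp only [Nr, Finset.mem_filter, Finset.mem_range, and_iff_right_iff_imp]
  rintro ⟨_, h⟩
  have h1 := lv_lt k
  have h2 : 2 ^ (lv k + 1) ≤ 2 ^ (q + L + 1) := Nat.pow_le_pow_right (by norm_num) (by omega)
  omega

lemma lv_le_of {k n D L : ℕ} (hD : D ≤ 2 ^ L) (h : k < D * n) : lv k ≤ lv n + L := by
  apply Nat.le_of_lt_succ
  apply Nat.log_lt_of_lt_pow (by omega)
  have h1 := lv_lt n
  calc k + 1 ≤ D * n := h
    _ ≤ 2 ^ L * n := Nat.mul_le_mul_right _ hD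
    _ < 2 ^ L * 2 ^ (lv n + 1) := Nat.mul_lt_mul_of_pos_left (by omega) (by positivity)
    _ = 2 ^ (lv n + L + 1) := by rw [← pow_add]; congr 1; omega

lemma not_Nr {k n D L : ℕ} (hD : D ≤ 2 ^ L) (h : k ∉ Nr L (lv n)) : D * n ≤ k ∨ D * k ≤ n := by
  by_contra hc
  push Not at hc
  exact h (mem_Nr.2 ⟨lv_le_of hD hc.2, lv_le_of hD hc.1⟩)

lemma PG.near {β : ℕ → ℝ} {N : ℕ} (h : PG β N) {L q k : ℕ} (hk : k ∈ Nr L q) :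
    β k ≤ (2 ^ (L + 1)) ^ N * β (2 ^ q - 1) ∧ β (2 ^ q - 1) ≤ (2 ^ (L + 1)) ^ N * β k := by
  obtain ⟨h1, h2⟩ := mem_Nr.1 hk
  have e : (((2 ^ q - 1 : ℕ) : ℝ)) + 1 = 2 ^ q := by
    have : 1 ≤ 2 ^ q := Nat.one_le_two_pow
    push_cast [Nat.cast_sub this]
    ring
  have a1 : ((k : ℝ)) + 1 ≤ 2 ^ (L + 1) * 2 ^ q := by
    rw [← pow_add]
    have := lv_lt k
    have h3 : 2 ^ (lv k + 1) ≤ 2 ^ (L + 1 + q) := Nat.pow_le_pow_right (by norm_num) (by omega)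
    exact_mod_cast this.le.trans h3
  have a2 : (2 : ℝ) ^ q ≤ 2 ^ (L + 1) * ((k : ℝ) + 1) := by
    have := lv_le k
    have h3 : 2 ^ q ≤ 2 ^ (L + 1 + lv k) := Nat.pow_le_pow_right (by norm_num) (by omega)
    have h4 : 2 ^ (L + 1 + lv k) ≤ 2 ^ (L + 1) * (k + 1) := by
      rw [pow_add]; exact Nat.mul_le_mul_left _ this
    exact_mod_cast h3.trans h4
  constructor
  · apply h.ratio <;> rw [e] <;> assumption
  · apply h.ratio <;> rw [e] <;> assumption

lemma Nr_overlap (L : ℕ) (t : Finset ℕ) (f : H2) :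
    ∑ q ∈ t, ∑ k ∈ Nr L q, ‖f k‖ ^ 2 ≤ (2 * L + 1 : ℕ) * ‖f‖ ^ 2 := by
  rw [Finset.sum_comm' (t' := t.biUnion (Nr L)) (s' := fun k => t.filter (fun q => k ∈ Nr L q))
    (by intro x y; simp only [Finset.mem_biUnion, Finset.mem_filter]; tauto)]
  calc _ ≤ ∑ k ∈ t.biUnion (Nr L), (2 * L + 1 : ℕ) * ‖f k‖ ^ 2 := by
        refine Finset.sum_le_sum fun k _ => ?_
        rw [Finset.sum_const, nsmul_eq_mul]
        have : (t.filter (fun q => k ∈ Nr L q)).card ≤ 2 * L + 1 := by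
          calc _ ≤ (Finset.Icc (lv k - L) (lv k + L)).card := by
                apply Finset.card_le_card
                intro q hq
                have := mem_Nr.1 (Finset.mem_filter.1 hq).2
                rw [Finset.mem_Icc]
                omega
            _ ≤ _ := by rw [Nat.card_Icc]; omega
        gcongr
    _ = (2 * L + 1 : ℕ) * ∑ k ∈ t.biUnion (Nr L), ‖f k‖ ^ 2 := by rw [Finset.mul_sum]
    _ ≤ _ := by
        gcongr
        exact sum_le_hasSum _ (fun i _ => by positivity) (h2_hasSum f)

lemma far_bound {β : ℕ → ℝ} {N : ℕ} (hβ : PG β N) {u : ℕ → H2} {C τ : ℝ} {D : ℕ} (hC : 0 ≤ C)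
    (h0 : 0 < τ) (hu : ∀ n k, (D * n ≤ k ∨ D * k ≤ n) → ‖u n k‖ ≤ C * τ ^ (k + n))
    (n k : ℕ) (h : D * n ≤ k ∨ D * k ≤ n) :
    ‖u n k * ((β k / β n : ℝ) : ℂ)‖ ≤ C * yy τ N n * yy τ N k := by
  have hp : 0 ≤ β k / β n := (div_pos (hβ.pos k) (hβ.pos n)).le
  rw [norm_mul, Complex.norm_real, Real.norm_of_nonneg hp]
  calc _ ≤ (C * τ ^ (k + n)) * (((k : ℝ) + 1) ^ N * ((n : ℝ) + 1) ^ N) := by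
        have := hu n k h
        have := hβ.poly k n
        gcongr
    _ = _ := by simp only [yy]; ring

lemma wseq_exists {β : ℕ → ℝ} {N : ℕ} (hβ : PG β N) {u : ℕ → H2} (hu : Loc u) :
    ∃ c : ℕ → H2, ∀ n k, c n k = u n k * ((β k / β n : ℝ) : ℂ) := by
  obtain ⟨C, τ, D, hC, h0, h1, hu⟩ := hu
  have hs : ∀ n, Summable fun k => ‖u n k * ((β k / β n : ℝ) : ℂ)‖ ^ 2 := by
    intro n
    refine Summable.of_norm_bounded_eventually_nat
      (g := fun k => (C * yy τ N n) ^ 2 * (yy τ N k) ^ 2) ((yy_summable h0 h1 N).mul_left _) ?_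
    filter_upwards [eventually_ge_atTop (D * n)] with k hk
    rw [Real.norm_of_nonneg (by positivity), ← mul_pow]
    have := far_bound hβ hC h0 hu n k (Or.inl hk)
    gcongr
  exact ⟨fun n => mkH2 _ (hs n), fun n k => rfl⟩

lemma wbessel {β : ℕ → ℝ} {N : ℕ} (hβ : PG β N) {u : ℕ → H2} (hu : Loc u) {G : ℝ} (hG : 0 ≤ G)
    (hb : ∀ (f : H2) (s : Finset ℕ), ∑ n ∈ s, ‖inner ℂ (u n) f‖ ^ 2 ≤ G * ‖f‖ ^ 2)
    {c : ℕ → H2} (hc : ∀ n k, c n k = u n k * ((β k / β n : ℝ) : ℂ)) :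
    ∃ G' : ℝ, 0 ≤ G' ∧
      ∀ (f : H2) (s : Finset ℕ), ∑ n ∈ s, ‖inner ℂ (c n) f‖ ^ 2 ≤ G' * ‖f‖ ^ 2 := by
  obtain ⟨C, τ, D, hC, h0, h1, hu⟩ := hu
  obtain ⟨L, hL⟩ : ∃ L : ℕ, D ≤ 2 ^ L := ⟨D, Nat.lt_two_pow_self.le⟩
  set Z := ∑' k, (yy τ N k) ^ 2 with hZ
  have hys := yy_summable h0 h1 N
  have hZ0 : 0 ≤ Z := tsum_nonneg fun k => by positivity
  set K : ℝ := (2 ^ (L + 1)) ^ N with hK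
  have hK0 : 0 < K := by positivity
  -- near and far parts
  let nr : ℕ → H2 := fun n => ∑ k ∈ Nr L (lv n), lp.single 2 k (c n k)
  let fr : ℕ → H2 := fun n => c n - nr n
  have hfr : ∀ n k, fr n k = if k ∈ Nr L (lv n) then 0 else c n k := by
    intro n k
    have : nr n k = if k ∈ Nr L (lv n) then c n k else 0 := by
      simp only [nr]
      rw [lp.coeFn_sum, Finset.sum_apply]
      simp [lp.single_apply, Pi.single_apply]
    change c n k - nr n k = _
    rw [this]
    split_ifs <;> simp
  have hfn : ∀ n, ‖fr n‖ ^ 2 ≤ C ^ 2 * Z * (yy τ N n) ^ 2 := by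
    intro n
    have e1 := h2_hasSum (fr n)
    have e2 := (hys.hasSum).mul_left ((C * yy τ N n) ^ 2)
    have := hasSum_le (fun k => ?_) e1 e2
    · calc _ ≤ _ := this
        _ = _ := by rw [← hZ]; ring
    · rw [hfr]
      split_ifs with h
      · simp; positivity
      · rw [hc, ← mul_pow]
        have := far_bound hβ hC h0 hu n k (not_Nr hL h)
        gcongr
  -- the near estimate
  have hnear : ∀ (f : H2) (s : Finset ℕ),
      ∑ n ∈ s, ‖inner ℂ (nr n) f‖ ^ 2 ≤ K ^ 4 * G * (2 * L + 1 : ℕ) * ‖f‖ ^ 2 := by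
    intro f s
    let P : ℕ → H2 := fun q => ∑ k ∈ Nr L q, lp.single 2 k ((β k : ℂ) * f k)
    have hP : ∀ q, ‖P q‖ ^ 2 ≤ (K * β (2 ^ q - 1)) ^ 2 * ∑ k ∈ Nr L q, ‖f k‖ ^ 2 := by
      intro q
      have e := lp.norm_sum_single (p := 2) (by norm_num) (fun k => (β k : ℂ) * f k) (Nr L q)
      have e' : ‖P q‖ ^ 2 = ∑ k ∈ Nr L q, ‖(β k : ℂ) * f k‖ ^ 2 := by
        simpa [P] using e
      rw [e', Finset.mul_sum]
      refine Finset.sum_le_sum fun k hk => ?_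
      have h3 := (hβ.near hk).1
      have h4 := hβ.pos k
      rw [norm_mul, Complex.norm_real, Real.norm_of_nonneg h4.le, mul_pow]
      gcongr
    have hin : ∀ n, inner ℂ (nr n) f = ((β n)⁻¹ : ℝ) * inner ℂ (u n) (P (lv n)) := by
      intro n
      simp only [nr, P]
      rw [sum_inner, inner_sum, Finset.mul_sum]
      refine Finset.sum_congr rfl fun k _ => ?_
      rw [lp.inner_single_left, lp.inner_single_right, hc]
      simp [Complex.conj_ofReal]
      ring
    have hblock : ∀ q, ∑ n ∈ s with lv n = q, ‖inner ℂ (nr n) f‖ ^ 2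
        ≤ K ^ 4 * G * ∑ k ∈ Nr L q, ‖f k‖ ^ 2 := by
      intro q
      have hβq := hβ.pos (2 ^ q - 1)
      calc _ ≤ ∑ n ∈ s with lv n = q, (K * (β (2 ^ q - 1))⁻¹) ^ 2 * ‖inner ℂ (u n) (P q)‖ ^ 2 := by
            refine Finset.sum_le_sum fun n hn => ?_
            have hq := (Finset.mem_filter.1 hn).2
            have h3 := (hβ.near (L := L) (q := q) (k := n) (mem_Nr.2 (by omega))).2
            have h4 := hβ.pos n
            rw [hin, hq, norm_mul, Complex.norm_real, Real.norm_of_nonneg (by positivity), mul_pow]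
            have : (β n)⁻¹ ≤ K * (β (2 ^ q - 1))⁻¹ := by
              rw [← div_eq_mul_inv, le_div_iff₀ hβq, inv_mul_le_iff₀ h4]
              linarith
            gcongr
        _ = (K * (β (2 ^ q - 1))⁻¹) ^ 2 * ∑ n ∈ s with lv n = q, ‖inner ℂ (u n) (P q)‖ ^ 2 := by
            rw [Finset.mul_sum]
        _ ≤ (K * (β (2 ^ q - 1))⁻¹) ^ 2 * (G * ‖P q‖ ^ 2) := by
            have := hb (P q) (s.filter fun n => lv n = q)
            gcongr
        _ ≤ (K * (β (2 ^ q - 1))⁻¹) ^ 2 *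
              (G * ((K * β (2 ^ q - 1)) ^ 2 * ∑ k ∈ Nr L q, ‖f k‖ ^ 2)) := by
            have := hP q
            gcongr
        _ = _ := by field_simp
    calc _ = ∑ q ∈ s.image lv, ∑ n ∈ s with lv n = q, ‖inner ℂ (nr n) f‖ ^ 2 :=
          (Finset.sum_fiberwise_of_maps_to (fun n hn => Finset.mem_image_of_mem _ hn) _).symm
      _ ≤ ∑ q ∈ s.image lv, K ^ 4 * G * ∑ k ∈ Nr L q, ‖f k‖ ^ 2 :=
          Finset.sum_le_sum fun q _ => hblock q
      _ = K ^ 4 * G * ∑ q ∈ s.image lv, ∑ k ∈ Nr L q, ‖f k‖ ^ 2 := by rw [Finset.mul_sum]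
      _ ≤ K ^ 4 * G * ((2 * L + 1 : ℕ) * ‖f‖ ^ 2) := by
          have := Nr_overlap L (s.image lv) f
          gcongr
      _ = _ := by ring
  have hfar : ∀ (f : H2) (s : Finset ℕ),
      ∑ n ∈ s, ‖inner ℂ (fr n) f‖ ^ 2 ≤ C ^ 2 * Z * Z * ‖f‖ ^ 2 := by
    intro f s
    calc _ ≤ ∑ n ∈ s, C ^ 2 * Z * ‖f‖ ^ 2 * (yy τ N n) ^ 2 := by
          refine Finset.sum_le_sum fun n _ => ?_
          calc _ ≤ (‖fr n‖ * ‖f‖) ^ 2 := by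
                gcongr
                exact norm_inner_le_norm _ _
            _ = ‖fr n‖ ^ 2 * ‖f‖ ^ 2 := by ring
            _ ≤ (C ^ 2 * Z * (yy τ N n) ^ 2) * ‖f‖ ^ 2 := by
                have := hfn n
                gcongr
            _ = _ := by ring
      _ = C ^ 2 * Z * ‖f‖ ^ 2 * ∑ n ∈ s, (yy τ N n) ^ 2 := by rw [Finset.mul_sum]
      _ ≤ C ^ 2 * Z * ‖f‖ ^ 2 * Z := by
          gcongr
          exact hys.sum_le_tsum _ (fun i _ => by positivity)
      _ = _ := by ring
  refine ⟨2 * (K ^ 4 * G * (2 * L + 1 : ℕ)) + 2 * (C ^ 2 * Z * Z), by positivity, fun f s => ?_⟩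
  calc _ ≤ ∑ n ∈ s, (2 * ‖inner ℂ (nr n) f‖ ^ 2 + 2 * ‖inner ℂ (fr n) f‖ ^ 2) := by
        refine Finset.sum_le_sum fun n _ => ?_
        have e : c n = nr n + fr n := by simp [fr]
        have h3 : ‖inner ℂ (c n) f‖ ≤ ‖inner ℂ (nr n) f‖ + ‖inner ℂ (fr n) f‖ := by
          rw [e, inner_add_left]
          exact norm_add_le _ _
        calc _ ≤ (‖inner ℂ (nr n) f‖ + ‖inner ℂ (fr n) f‖) ^ 2 := by gcongr
          _ ≤ _ := by nlinarith [sq_nonneg (‖inner ℂ (nr n) f‖ - ‖inner ℂ (fr n) f‖)]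
    _ = 2 * ∑ n ∈ s, ‖inner ℂ (nr n) f‖ ^ 2 + 2 * ∑ n ∈ s, ‖inner ℂ (fr n) f‖ ^ 2 := by
        rw [Finset.sum_add_distrib, Finset.mul_sum, Finset.mul_sum]
    _ ≤ 2 * (K ^ 4 * G * (2 * L + 1 : ℕ) * ‖f‖ ^ 2) + 2 * (C ^ 2 * Z * Z * ‖f‖ ^ 2) := by
        have := hnear f s
        have := hfar f s
        gcongr
    _ = _ := by ring

section
open ContinuousLinearMap

def Bes {ι : Type} (c : ι → H2) : Prop :=
  ∃ G : ℝ, 0 ≤ G ∧ ∀ (f : H2) (s : Finset ι), ∑ n ∈ s, ‖inner ℂ (c n) f‖ ^ 2 ≤ G * ‖f‖ ^ 2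

lemma Bes.comp {ι κ : Type} {c : ι → H2} (h : Bes c) (e : κ ≃ ι) : Bes (c ∘ e) := by
  obtain ⟨G, h0, h⟩ := h
  refine ⟨G, h0, fun f s => ?_⟩
  have := h f (s.map e.toEmbedding)
  simpa using this

lemma Bes.prod {m : ℕ} {c : Fin m × ℕ → H2} (h : ∀ j, Bes (fun n => c (j, n))) : Bes c := by
  choose G h0 h using h
  refine ⟨∑ j, G j, Finset.sum_nonneg fun j _ => h0 j, fun f s => ?_⟩
  calc _ ≤ ∑ p ∈ (Finset.univ : Finset (Fin m)) ×ˢ (s.image Prod.snd), ‖inner ℂ (c p) f‖ ^ 2 := by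
        apply Finset.sum_le_sum_of_subset_of_nonneg
        · intro p hp
          simp only [Finset.mem_product, Finset.mem_univ, true_and]
          exact Finset.mem_image_of_mem _ hp
        · intros; positivity
    _ = ∑ j, ∑ n ∈ s.image Prod.snd, ‖inner ℂ (c (j, n)) f‖ ^ 2 := Finset.sum_product _ _ _
    _ ≤ ∑ j, G j * ‖f‖ ^ 2 := Finset.sum_le_sum fun j _ => h j f _
    _ = _ := by rw [Finset.sum_mul]

lemma Bes.theta {c : ℕ → H2} (h : Bes c) :
    ∃ T : H2 →L[ℂ] H2, ∀ f k, T f k = inner ℂ (c k) f := by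
  obtain ⟨G, h0, h⟩ := h
  have hs : ∀ f : H2, Summable fun k => ‖inner ℂ (c k) f‖ ^ 2 := fun f =>
    summable_of_sum_le (fun k => by positivity) (h f)
  let T : H2 →ₗ[ℂ] H2 :=
    { toFun := fun f => mkH2 (fun k => inner ℂ (c k) f) (hs f)
      map_add' := fun f g => by
        apply h2_ext
        intro k
        simp [inner_add_right]
      map_smul' := fun a f => by
        apply h2_ext
        intro k
        simp [inner_smul_right] }
  refine ⟨T.mkContinuous (√G) fun f => ?_, fun f k => rfl⟩
  have e1 := h2_hasSum (T f)
  have e2 : ‖T f‖ ^ 2 ≤ G * ‖f‖ ^ 2 := hasSum_le_of_sum_le e1 (h f)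
  apply le_of_sq_le_sq _ (by positivity)
  rw [mul_pow, Real.sq_sqrt h0]
  exact e2

abbrev ee (k : ℕ) : H2 := lp.single 2 k 1

lemma clm_ext {X Y : H2 →L[ℂ] H2} (h : ∀ k, X (ee k) = Y (ee k)) : X = Y := by
  apply lp.ext_continuousLinearMap (by norm_num)
  intro k
  apply ContinuousLinearMap.ext_ring
  have := h k
  simpa using this

lemma ee_inner (k : ℕ) (f : H2) : inner ℂ (ee k) f = f k := by
  rw [lp.inner_single_left]; simp

lemma inner_ee (k : ℕ) (f : H2) : inner ℂ f (ee k) = starRingEnd ℂ (f k) := by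
  rw [← inner_conj_symm, ee_inner]

lemma theta_adj {c : ℕ → H2} {T : H2 →L[ℂ] H2} (hT : ∀ f k, T f k = inner ℂ (c k) f) (k : ℕ) :
    adjoint T (ee k) = c k := by
  apply ext_inner_right ℂ
  intro f
  rw [adjoint_inner_left, ee_inner, hT]

lemma theta_biorth {c d : ℕ → H2} {T U : H2 →L[ℂ] H2} (hT : ∀ f k, T f k = inner ℂ (c k) f)
    (hU : ∀ f k, U f k = inner ℂ (d k) f)
    (h : ∀ i l, inner ℂ (d i) (c l) = if i = l then 1 else 0) : U * adjoint T = 1 := by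
  apply clm_ext
  intro l
  rw [mul_apply_eq_comp, theta_adj hT]
  apply h2_ext
  intro i
  rw [hU, h]
  simp [ee, lp.single_apply, Pi.single_apply]

lemma theta_cross {c d : ℕ → H2} {T U : H2 →L[ℂ] H2} (hT : ∀ f k, T f k = inner ℂ (c k) f)
    (hU : ∀ f k, U f k = inner ℂ (d k) f) (k l : ℕ) :
    (adjoint T (U (ee k))) l = ∑' i, c i l * starRingEnd ℂ (d i k) := by
  rw [← ee_inner, adjoint_inner_right, ← (h2_inner _ _).tsum_eq]
  simp [hT, hU, inner_ee]

lemma riesz_main {u v c d : ℕ → H2} (hu : Bes u) (hv : Bes v) (hc : Bes c) (hd : Bes d)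
    (hbi : ∀ i l, inner ℂ (v i) (u l) = if i = l then 1 else 0)
    (hcomp : ∀ f, (∀ i, inner ℂ (u i) f = 0) → f = 0)
    {t s : ℕ → ℝ} (ht : ∀ k, t k ≠ 0) (hs : ∀ k, s k ≠ 0)
    (hcu : ∀ i k, c i k = u i k * ((t k / s i : ℝ) : ℂ))
    (hdv : ∀ i k, d i k = v i k * ((s i / t k : ℝ) : ℂ)) : RieszBasis c := by
  obtain ⟨U, hU⟩ := hu.theta
  obtain ⟨V, hV⟩ := hv.theta
  obtain ⟨T, hT⟩ := hc.theta
  obtain ⟨D, hD⟩ := hd.theta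
  have h1 : V * adjoint U = 1 := theta_biorth hU hV hbi
  have h2 : U * adjoint V = 1 := by
    have := congrArg adjoint h1
    rw [← star_eq_adjoint, ← star_eq_adjoint, star_mul, ← star_eq_adjoint, star_star, star_one]
      at this
    exact this
  have h3 : adjoint V * U = 1 := by
    ext1 f
    apply sub_eq_zero.1
    apply hcomp
    intro i
    rw [← hU, map_sub]
    have : U ((adjoint V * U) f) = U f := by
      change (U * adjoint V) (U f) = U f
      rw [h2]; rfl
    rw [this]
    simp
  have h4 : adjoint U * V = 1 := by
    have := congrArg star h3
    rw [star_mul, star_one, star_eq_adjoint, star_eq_adjoint, adjoint_adjoint] at this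
    exact this
  have h5 : D * adjoint T = 1 := by
    apply theta_biorth hT hD
    intro i l
    rw [← (h2_inner _ _).tsum_eq]
    have e : ∀ k, starRingEnd ℂ (d i k) * c l k
        = ((s i / s l : ℝ) : ℂ) * (starRingEnd ℂ (v i k) * u l k) := by
      intro k
      rw [hcu, hdv, map_mul, Complex.conj_ofReal]
      have := ht k
      have := hs l
      have a1 : (t k : ℂ) ≠ 0 := by exact_mod_cast ht k
      have a2 : (s l : ℂ) ≠ 0 := by exact_mod_cast hs l
      push_cast
      field_simp
    simp_rw [e]
    rw [tsum_mul_left, (h2_inner _ _).tsum_eq, hbi]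
    split_ifs with h
    · rw [h, div_self (hs l)]; simp
    · simp
  have h6 : adjoint T * D = 1 := by
    apply clm_ext
    intro k
    apply h2_ext
    intro l
    rw [mul_apply_eq_comp, theta_cross hT hD]
    have e : ∀ i, c i l * starRingEnd ℂ (d i k)
        = ((t l / t k : ℝ) : ℂ) * (u i l * starRingEnd ℂ (v i k)) := by
      intro i
      rw [hcu, hdv, map_mul, Complex.conj_ofReal]
      have a1 : (t k : ℂ) ≠ 0 := by exact_mod_cast ht k
      have a2 : (s i : ℂ) ≠ 0 := by exact_mod_cast hs i
      push_cast
      field_simp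
    simp_rw [e]
    rw [tsum_mul_left, ← theta_cross hU hV, ← mul_apply_eq_comp, h4]
    simp only [one_apply_eq_self]
    by_cases h : l = k
    · rw [h, div_self (ht k)]; simp
    · simp [ee, lp.single_apply, Pi.single_apply, h]
  let E : H2 ≃L[ℂ] H2 := ContinuousLinearEquiv.equivOfInverse D (adjoint T)
    (fun f => by rw [← mul_apply_eq_comp, h6]; rfl) (fun f => by rw [← mul_apply_eq_comp, h5]; rfl)
  have hE : (fun i => E (c i)) = ee := by
    funext i
    change D (c i) = _
    rw [← theta_adj hT, ← mul_apply_eq_comp, h5]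
    rfl
  let b : HilbertBasis ℕ ℂ H2 := HilbertBasis.ofRepr (LinearIsometryEquiv.refl ℂ H2)
  have hb : (b : ℕ → H2) = ee := by
    funext i
    rw [← b.repr_symm_single]
    rfl
  refine ⟨E, ?_, ?_⟩
  · rw [hE, ← hb]; exact b.orthonormal
  · rw [hE, ← hb]; exact b.dense_span

lemma riesz_comp {ι κ : Type} {c : ι → H2} (e : κ ≃ ι) (h : RieszBasis (c ∘ e)) : RieszBasis c := by
  obtain ⟨V, h1, h2⟩ := h
  refine ⟨V, ?_, ?_⟩
  · have := h1.comp e.symm e.symm.injective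
    convert this using 2 with i
    simp
  · have e1 : Set.range (fun i => V (c i)) = Set.range (fun i => V ((c ∘ e) i)) :=
      (e.surjective.range_comp (fun i => V (c i))).symm
    rw [e1]
    exact h2

end

lemma pg_inv {w : ℕ → ℝ} (hw : PolyGrowth w) : PolyGrowth (fun k => (w k)⁻¹) := by
  obtain ⟨hp, ht, M, hM⟩ := hw
  have ht' : Tendsto (fun k => (w k)⁻¹) atTop (𝓝 1) := by
    simpa using ht.inv₀ one_ne_zero
  refine ⟨fun k hk => inv_pos.2 (hp k hk), ht', ?_⟩
  obtain ⟨b, hb⟩ := ht'.bddAbove_range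
  refine ⟨M * b, fun k hk => ?_⟩
  have h1 : (w k)⁻¹ ≤ b := hb ⟨k, rfl⟩
  have h2 := hp k hk
  have h3 : |(w k)⁻¹ - 1| = |w k - 1| * (w k)⁻¹ := by
    have : (w k)⁻¹ - 1 = -((w k - 1) * (w k)⁻¹) := by
      field_simp
      ring
    rw [this, abs_neg, abs_mul, abs_of_pos (inv_pos.2 h2)]
  rw [h3, ← mul_assoc]
  have h4 := hM k hk
  have h5 : 0 ≤ ((k : ℝ) + 1) * |w k - 1| := by positivity
  have h6 : 0 < (w k)⁻¹ := inv_pos.2 h2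
  exact mul_le_mul h4 h1 h6.le (h5.trans h4)

lemma pg_upper {w : ℕ → ℝ} (hw : PolyGrowth w) :
    ∃ N0 : ℕ, ∀ N ≥ N0, ∀ k : ℕ, w (k + 1) * ((k : ℝ) + 1) ^ N ≤ ((k : ℝ) + 1 + 1) ^ N := by
  obtain ⟨hp, ht, M, hM⟩ := hw
  obtain ⟨N0, hN0⟩ := exists_nat_ge M
  refine ⟨N0, fun N hN k => ?_⟩
  have h1 := hM (k + 1) (by omega)
  have hk : (0 : ℝ) < (k : ℝ) + 1 := by positivity
  have hNM : M ≤ N := hN0.trans (by exact_mod_cast hN)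
  have h2 : w (k + 1) ≤ 1 + N * (1 / ((k : ℝ) + 1)) := by
    push_cast at h1
    have h3 := le_abs_self (w (k + 1) - 1)
    have h4 : (w (k + 1) - 1) * ((k : ℝ) + 1) ≤ N := by
      have h5 : |w (k + 1) - 1| * ((k : ℝ) + 1) ≤ ((k : ℝ) + 1 + 1) * |w (k + 1) - 1| := by
        nlinarith [abs_nonneg (w (k + 1) - 1)]
      nlinarith
    have h6 : w (k + 1) - 1 ≤ N / ((k : ℝ) + 1) := by rwa [le_div_iff₀ hk]
    rw [mul_one_div]
    linarith
  have h3 : 1 + N * (1 / ((k : ℝ) + 1)) ≤ (1 + 1 / ((k : ℝ) + 1)) ^ N :=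
    one_add_mul_le_pow (by have : 0 < 1 / ((k : ℝ) + 1) := by positivity
                           linarith) N
  calc _ ≤ (1 + 1 / ((k : ℝ) + 1)) ^ N * ((k : ℝ) + 1) ^ N := by
        have := h2.trans h3
        gcongr
    _ = _ := by
        rw [← mul_pow]
        congr 1
        field_simp

lemma beta_succ (w : ℕ → ℝ) (k : ℕ) : betaSeq w (k + 1) = betaSeq w k * w (k + 1) := by
  simp only [betaSeq]
  rw [Finset.prod_Icc_succ_top (by omega)]

lemma beta_pos {w : ℕ → ℝ} (hw : PolyGrowth w) (k : ℕ) : 0 < betaSeq w k :=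
  Finset.prod_pos fun j hj => hw.1 j (Finset.mem_Icc.1 hj).1

lemma pg_of {w : ℕ → ℝ} (hw : PolyGrowth w) :
    ∃ N, PG (betaSeq w) N ∧ PG (fun k => (betaSeq w k)⁻¹) N := by
  obtain ⟨N1, h1⟩ := pg_upper hw
  obtain ⟨N2, h2⟩ := pg_upper (pg_inv hw)
  set N := max N1 N2
  have h1' := h1 N (le_max_left _ _)
  have h2' := h2 N (le_max_right _ _)
  have up : ∀ k : ℕ, betaSeq w (k + 1) * ((k : ℝ) + 1) ^ N ≤ betaSeq w k * ((k : ℝ) + 1 + 1) ^ N := by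
    intro k
    rw [beta_succ, mul_assoc]
    exact mul_le_mul_of_nonneg_left (h1' k) (beta_pos hw k).le
  have lo : ∀ k : ℕ, betaSeq w k * ((k : ℝ) + 1) ^ N
      ≤ betaSeq w (k + 1) * ((k : ℝ) + 1 + 1) ^ N := by
    intro k
    rw [beta_succ, mul_assoc]
    refine mul_le_mul_of_nonneg_left ?_ (beta_pos hw k).le
    have := h2' k
    have hp := hw.1 (k + 1) (by omega)
    rwa [inv_mul_le_iff₀ hp] at this
  refine ⟨N, ⟨beta_pos hw, ?_, ?_⟩, ⟨fun k => inv_pos.2 (beta_pos hw k), ?_, ?_⟩⟩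
  · apply monotone_nat_of_le_succ
    intro k
    push_cast
    exact lo k
  · apply antitone_nat_of_succ_le
    intro k
    push_cast
    rw [div_le_div_iff₀ (by positivity) (by positivity)]
    exact up k
  · apply monotone_nat_of_le_succ
    intro k
    push_cast
    have a := beta_pos hw k
    have b := beta_pos hw (k + 1)
    rw [inv_mul_eq_div, inv_mul_eq_div, div_le_div_iff₀ a b]
    have := up k
    linarith
  · apply antitone_nat_of_succ_le
    intro k
    push_cast
    have a := beta_pos hw k
    have b := beta_pos hw (k + 1)
    rw [div_eq_mul_inv, div_eq_mul_inv, ← mul_inv, ← mul_inv]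
    exact inv_anti₀ (by positivity) (lo k)

lemma loc_MB {m : ℕ} (hm : 0 < m) {zs : Fin m → ℂ} {A : ℝ} (hz : ∀ j, ‖zs j‖ ≤ A) (hA : A < 1)
    {g : H2} (hg : ∀ r : ℝ, 0 < r → A * r < 1 → ∃ q : ℝ, 0 ≤ q ∧ Wb r q g) :
    Loc (fun n => ((MB zs Finset.univ) ^ n) g) := by
  have hA0 : 0 ≤ A := (norm_nonneg _).trans (hz ⟨0, hm⟩)
  have key : ∀ r : ℝ, 0 < r → A * r < 1 → ∃ q : ℝ, 0 ≤ q ∧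
      ∀ n, Wb r ((((A + r) / (1 - A * r)) ^ m) ^ n * q) (((MB zs Finset.univ) ^ n) g) := by
    intro r hr hAr
    obtain ⟨q, hq0, hq⟩ := hg r hr hAr
    refine ⟨q, hq0, fun n => pow_W (fun q f h => ?_) hq n⟩
    simpa using MB_W hr hz hA hAr Finset.univ h
  set R : ℝ := 2 / (1 + A) with hR
  set r : ℝ := (1 - A) / 4 with hr
  have hR1 : 1 < R := by rw [hR, lt_div_iff₀ (by linarith)]; linarith
  have hAR : A * R < 1 := by
    rw [hR, mul_div_assoc', div_lt_one (by linarith)]; linarith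
  have hr0 : 0 < r := by rw [hr]; linarith
  have hAr : A * r ≤ r := by nlinarith
  have hr1 : r ≤ 1 / 4 := by rw [hr]; linarith
  obtain ⟨C1, hC1, h1⟩ := key R (by linarith) hAR
  obtain ⟨C2, hC2, h2⟩ := key r hr0 (by linarith)
  have p1 : 0 < 1 - A * R := by linarith
  have p2 : 0 < 1 - A * r := by linarith
  have p3 : 0 < (A + r) / (1 - A * r) := by positivity
  have p4 : (A + r) / (1 - A * r) < 1 := by
    rw [div_lt_one p2]
    linarith
  have p5 : 0 < (A + R) / (1 - A * R) := by
    apply div_pos _ p1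
    linarith
  exact loc_of hC1 hC2 hR1 (by positivity) (by positivity)
    (pow_lt_one₀ p3.le p4 hm.ne') hr0 h1 h2

lemma rk_pow {m : ℕ} {zs : Fin m → ℂ} (hz : ∀ j, ‖zs j‖ < 1) {z : ℂ} (hz1 : ‖z‖ < 1) (f : H2)
    (n : ℕ) : inner ℂ (rk z) (((MB zs Finset.univ) ^ n) f)
      = (∏ j, mobius (zs j) z) ^ n * inner ℂ (rk z) f := by
  induction n with
  | zero => simp
  | succ n ih => rw [pow_succ', mul_apply_eq_comp, MB_rk hz _ hz1, ih]; ring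

lemma wander_rk {m : ℕ} {zs : Fin m → ℂ} (hz : ∀ j, ‖zs j‖ < 1) (j : Fin m) (f : H2) :
    inner ℂ (rk (zs j)) (MB zs Finset.univ f) = 0 := by
  rw [MB_rk hz _ (hz j), Finset.prod_eq_zero (Finset.mem_univ j) (mobius_self _), zero_mul]

lemma wander_dual {m : ℕ} {zs : Fin m → ℂ} (hz : ∀ j, ‖zs j‖ < 1) (j : Fin m) (σ : ℂ) (f : H2) :
    inner ℂ (σ • MB zs (Finset.univ.erase j) (rk (zs j))) (MB zs Finset.univ f) = 0 := by
  rw [MB_erase zs j, mul_apply_eq_comp, inner_smul_left, iso_inner (MB_norm hz _), Tm_rk (hz j) (hz j),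
    mobius_self, zero_mul, mul_zero]

lemma dual_exists {m : ℕ} {zs : Fin m → ℂ} (hz : ∀ j, ‖zs j‖ < 1) (hinj : Function.Injective zs)
    (j : Fin m) : ∃ σ : ℂ, ∀ i,
      inner ℂ (σ • MB zs (Finset.univ.erase j) (rk (zs j))) (rk (zs i)) = if j = i then 1 else 0 := by
  set x := inner ℂ (MB zs (Finset.univ.erase j) (rk (zs j))) (rk (zs j)) with hx
  have hx0 : x ≠ 0 := by
    rw [hx, ← inner_conj_symm, (map_ne_zero_iff (starRingEnd ℂ) (RingHom.injective _)),
      MB_rk hz _ (hz j), rk_inner_rk (hz j) (hz j)]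
    refine mul_ne_zero (Finset.prod_ne_zero_iff.2 fun l hl => ?_)
      (one_div_ne_zero (one_sub_ne (hz j) (hz j)))
    exact mobius_ne (hz l) (hz j) fun h => (Finset.mem_erase.1 hl).1 (hinj h)
  refine ⟨starRingEnd ℂ x⁻¹, fun i => ?_⟩
  rw [inner_smul_left, Complex.conj_conj]
  split_ifs with h
  · subst h
    exact inv_mul_cancel₀ hx0
  · rw [← inner_conj_symm, MB_rk hz _ (hz i),
      Finset.prod_eq_zero (Finset.mem_erase.2 ⟨fun e => h e.symm, Finset.mem_univ i⟩)
        (mobius_self _)]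
    simp

lemma bes_wander {M : H2 →L[ℂ] H2} (hM : ∀ f, ‖M f‖ = ‖f‖) {g : H2}
    (hg : ∀ f, inner ℂ g (M f) = 0) : Bes (fun n : ℕ => (M ^ n) g) :=
  ⟨‖g‖ ^ 2, sq_nonneg _, fun f s => wander_bessel hM hg f s⟩

lemma bes_w {β : ℕ → ℝ} {N : ℕ} (hβ : PG β N) {u : ℕ → H2} (hu : Loc u) (hb : Bes u)
    {c : ℕ → H2} (hc : ∀ n k, c n k = u n k * ((β k / β n : ℝ) : ℂ)) : Bes c := by
  obtain ⟨G, hG, hb⟩ := hb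
  exact wbessel hβ hu hG hb hc

theorem final13 (w : ℕ → ℝ) (hw : PolyGrowth w) (m : ℕ) (hm : 0 < m)
    (zs : Fin m → ℂ) (hzs : ∀ j, zs j ∈ unitDisk) (hinj : Function.Injective zs)
    (B : ℂ → ℂ) (hB : ∀ z, B z = ∏ j, mobius (zs j) z) :
    ∃ c : Fin m × ℕ → H2,
      (∀ (j : Fin m) (n : ℕ), ∀ z ∈ unitDisk,
        repFun (betaSeq w) (c (j, n)) z =
          B z ^ n / ((betaSeq w n : ℂ) * (1 - (starRingEnd ℂ) (zs j) * z))) ∧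
      RieszBasis c := by
  have hz1 : ∀ j, ‖zs j‖ < 1 := fun j => by simpa [unitDisk] using hzs j
  have : NeZero m := ⟨hm.ne'⟩
  obtain ⟨A, hA, hzA⟩ : ∃ A : ℝ, A < 1 ∧ ∀ j, ‖zs j‖ ≤ A := by
    obtain ⟨j0, h⟩ := Finite.exists_max (fun j => ‖zs j‖)
    exact ⟨_, hz1 j0, h⟩
  set M := MB zs Finset.univ with hM
  have hMn : ∀ f, ‖M f‖ = ‖f‖ := MB_norm hz1 _
  choose σ hσ using dual_exists hz1 hinj
  set v : Fin m → H2 := fun j => σ j • MB zs (Finset.univ.erase j) (rk (zs j)) with hv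
  have hwu : ∀ j f, inner ℂ (rk (zs j)) (M f) = 0 := fun j f => wander_rk hz1 j f
  have hwv : ∀ j f, inner ℂ (v j) (M f) = 0 := fun j f => wander_dual hz1 j _ f
  have hrkW : ∀ j (r : ℝ), 0 < r → A * r < 1 → ∃ q : ℝ, 0 ≤ q ∧ Wb r q (rk (zs j)) :=
    fun j r hr hAr => ⟨1 / (1 - A * r), by
      have : 0 < 1 - A * r := by linarith
      positivity, rk_W hr (hzA j) hA hAr⟩
  have hlu : ∀ j, Loc (fun n => (M ^ n) (rk (zs j))) := fun j => loc_MB hm hzA hA (hrkW j)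
  have hlv : ∀ j, Loc (fun n => (M ^ n) (v j)) := fun j => by
    apply loc_MB hm hzA hA
    intro r hr hAr
    obtain ⟨q, hq, h⟩ := hrkW j r hr hAr
    have hA0 : 0 ≤ A := (norm_nonneg _).trans (hzA j)
    have : 0 < 1 - A * r := by linarith
    exact ⟨_, by positivity, smul_W (MB_W hr hzA hA hAr (Finset.univ.erase j) h) (σ j)⟩
  obtain ⟨N, hp1, hp2⟩ := pg_of hw
  choose c hc using fun j => wseq_exists hp1 (hlu j)
  choose d hd using fun j => wseq_exists hp2 (hlv j)
  have hβ := beta_pos hw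
  refine ⟨fun p => c p.1 p.2, ?_, ?_⟩
  · intro j n z hz
    have hz : ‖z‖ < 1 := by simpa [unitDisk] using hz
    have h1 := (rk_inner hz ((M ^ n) (rk (zs j)))).tsum_eq
    rw [rk_pow hz1 hz, rk_inner_rk hz (hz1 j), ← hB] at h1
    have e : ∀ k, c j n k / (betaSeq w k : ℂ) * z ^ k
        = (betaSeq w n : ℂ)⁻¹ * (z ^ k * ((M ^ n) (rk (zs j))) k) := by
      intro k
      rw [hc]
      have a1 : (betaSeq w k : ℂ) ≠ 0 := by exact_mod_cast (hβ k).ne'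
      have a2 : (betaSeq w n : ℂ) ≠ 0 := by exact_mod_cast (hβ n).ne'
      push_cast
      field_simp
    simp only [repFun]
    simp_rw [e]
    rw [tsum_mul_left, h1]
    have a2 : (betaSeq w n : ℂ) ≠ 0 := by exact_mod_cast (hβ n).ne'
    have := one_sub_ne hz (hz1 j)
    field_simp
  · let e : ℕ ≃ Fin m × ℕ := (Nat.divModEquiv m).trans (Equiv.prodComm _ _)
    apply riesz_comp e
    have bu1 : ∀ j, Bes (fun n : ℕ => (M ^ n) (rk (zs j))) := fun j => bes_wander hMn (hwu j)
    have bv1 : ∀ j, Bes (fun n : ℕ => (M ^ n) (v j)) := fun j => bes_wander hMn (hwv j)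
    have bu : Bes (fun p : Fin m × ℕ => (M ^ p.2) (rk (zs p.1))) :=
      Bes.prod (c := fun p : Fin m × ℕ => (M ^ p.2) (rk (zs p.1))) bu1
    have bv : Bes (fun p : Fin m × ℕ => (M ^ p.2) (v p.1)) :=
      Bes.prod (c := fun p : Fin m × ℕ => (M ^ p.2) (v p.1)) bv1
    have bc : Bes (fun p : Fin m × ℕ => c p.1 p.2) :=
      Bes.prod (c := fun p : Fin m × ℕ => c p.1 p.2) fun j => bes_w hp1 (hlu j) (bu1 j) (hc j)
    have bd : Bes (fun p : Fin m × ℕ => d p.1 p.2) :=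
      Bes.prod (c := fun p : Fin m × ℕ => d p.1 p.2) fun j => bes_w hp2 (hlv j) (bv1 j) (hd j)
    refine riesz_main (bu.comp e) (bv.comp e) (bc.comp e) (bd.comp e) ?_ ?_
      (t := betaSeq w) (s := fun i => betaSeq w (e i).2) (fun k => (hβ k).ne')
      (fun k => (hβ _).ne') ?_ ?_
    · intro i l
      simp only [Function.comp]
      rw [wander_inner hMn (hwv _) (hwu _), hσ]
      by_cases h : i = l
      · simp [h]
      · rw [if_neg h]
        split_ifs with h1 h2
        · exact absurd (e.injective (Prod.ext h2 h1)) h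
        · rfl
        · rfl
    · intro f hf
      apply complete_u hm hzA hA hinj f
      intro j n
      have := hf (e.symm (j, n))
      simpa only [Function.comp, Equiv.apply_symm_apply] using this
    · intro i k
      exact hc _ _ _
    · intro i k
      simp only [Function.comp]
      rw [hd]
      congr 2
      rw [div_eq_mul_inv, inv_inv, div_eq_mul_inv, mul_comm]

/-- Let `H²_β` be of polynomial growth and let
`B(z) = ∏_{j=1}^m (z_j - z)/(1 - conj z_j · z)` be a Blaschke product with `m`
distinct zeros.  Then the family `{B^n/(β_n (1 - conj z_j · z))}` is a Riesz basis
of `H²_β`. -/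
theorem statement13 (w : ℕ → ℝ) (hw : PolyGrowth w) (m : ℕ) (hm : 0 < m)
    (zs : Fin m → ℂ) (hzs : ∀ j, zs j ∈ unitDisk) (hinj : Function.Injective zs)
    (B : ℂ → ℂ) (hB : ∀ z, B z = ∏ j, mobius (zs j) z) :
    ∃ c : Fin m × ℕ → H2,
      (∀ (j : Fin m) (n : ℕ), ∀ z ∈ unitDisk,
        repFun (betaSeq w) (c (j, n)) z =
          B z ^ n / ((betaSeq w n : ℂ) * (1 - (starRingEnd ℂ) (zs j) * z))) ∧
      RieszBasis c := by
  exact final13 w hw m hm zs hzs hinj B hB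
end
end

section
/- Let t ∈ (0,1), φ_t(z) = (t − z)/(1 − tz), and α ≥ 1/2. Then for all sufficiently large n, ‖φ_t^n‖_{A²_α} / ‖z^n‖_{A²_α} ≥ (1/2)·‖(φ_t')^α‖_{H²}, where (φ_t')^α(z) = (1 − t²)^α(1 − tz)^{−2α} (principal branch). -/
noncomputable section

open Complex Filter Topology

/-- The `k`-th Taylor coefficient of `f` at `0`. -/
def taylorCoef (f : ℂ → ℂ) (k : ℕ) : ℂ := iteratedDeriv k f 0 / (Nat.factorial k : ℂ)

/-- The squared norm of `f` in the classical Hardy space `H²`. -/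
def hardyNormSq (f : ℂ → ℂ) : ℝ := ∑' k, ‖taylorCoef f k‖ ^ 2

/-- The squared norm of `f` in the weighted Hardy space with weights `γ`. -/
def wNormSq (γ : ℕ → ℝ) (f : ℂ → ℂ) : ℝ := ∑' k, ‖taylorCoef f k‖ ^ 2 * γ k ^ 2

/-- The weights `β^{(α)}_k = ∏_{j=1}^k √((j+1)/(j+2α+1))` of the weighted Bergman
space `A²_α`. -/
def bergBeta (α : ℝ) (k : ℕ) : ℝ :=
  ∏ j ∈ Finset.Icc 1 k, Real.sqrt (((j : ℝ) + 1) / ((j : ℝ) + 2 * α + 1))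

theorem aux_prod (u : ℕ → ℂ) (x : ℂ) (hs : Summable fun k => ‖u k‖) (h : HasSum u x) :
    HasSum (fun p : ℕ × ℕ => u p.1 * (starRingEnd ℂ) (u p.2)) (x * (starRingEnd ℂ) x) := by
  have hc : HasSum (fun k => (starRingEnd ℂ) (u k)) ((starRingEnd ℂ) x) :=
    by
    have := h.map (starRingEnd ℂ).toAddMonoidHom Complex.continuous_conj
    exact this
  have hs2 : Summable fun k => ‖(starRingEnd ℂ) (u k)‖ := by
    simp only [RCLike.norm_conj]; exact hs
  have h3 := summable_mul_of_summable_norm (f := u) (g := fun k => (starRingEnd ℂ) (u k)) hs hs2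
  exact HasSum.mul (f := u) (g := fun k => (starRingEnd ℂ) (u k)) h hc h3

/-- Parseval for absolutely convergent one-sided Fourier series. -/
theorem aux_parseval (a : ℕ → ℂ) (ha : Summable fun k => ‖a k‖) (F : ℝ → ℂ)
    (hF : ∀ θ : ℝ, HasSum (fun k : ℕ => a k * Complex.exp (k * θ * I)) (F θ)) :
    HasSum (fun k => ‖a k‖ ^ 2 * (2 * Real.pi)) (∫ θ in (0:ℝ)..(2 * Real.pi), ‖F θ‖ ^ 2) := by
  let f : ℕ × ℕ → ℝ → ℂ := fun p θ =>
    (a p.1 * Complex.exp (p.1 * θ * I)) * (starRingEnd ℂ) (a p.2 * Complex.exp (p.2 * θ * I))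
  have hn : ∀ (k : ℕ) (θ : ℝ), ‖a k * Complex.exp (k * θ * I)‖ = ‖a k‖ := by
    intro k θ
    rw [norm_mul]
    have : ‖Complex.exp (k * θ * I)‖ = 1 := by
      have := Complex.norm_exp_ofReal_mul_I (k * θ)
      push_cast at this
      exact this
    rw [this, mul_one]
  have h1 : HasSum (fun p : ℕ × ℕ => ∫ θ in (0:ℝ)..(2 * Real.pi), f p θ)
      (∫ θ in (0:ℝ)..(2 * Real.pi), F θ * (starRingEnd ℂ) (F θ)) := by
    refine intervalIntegral.hasSum_integral_of_dominated_convergence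
      (fun p _ => ‖a p.1‖ * ‖a p.2‖) ?_ ?_ ?_ ?_ ?_
    · intro p
      apply Continuous.aestronglyMeasurable
      dsimp only [f]
      have := Complex.continuous_conj
      fun_prop
    · intro p
      refine Filter.Eventually.of_forall fun θ _ => ?_
      dsimp only [f]
      rw [norm_mul, RCLike.norm_conj, hn, hn]
    · refine Filter.Eventually.of_forall fun θ _ => ?_
      exact ha.mul_of_nonneg ha (fun _ => norm_nonneg _) (fun _ => norm_nonneg _)
    · simp
    · refine Filter.Eventually.of_forall fun θ _ => ?_
      have hs : Summable fun k : ℕ => ‖a k * Complex.exp (k * θ * I)‖ := by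
        simp only [hn]; exact ha
      exact aux_prod (fun k : ℕ => a k * Complex.exp (k * θ * I)) _ hs (hF θ)
  have h2 : ∀ p : ℕ × ℕ, p ∉ Set.range (fun k : ℕ => (k, k)) →
      ∫ θ in (0:ℝ)..(2 * Real.pi), f p θ = 0 := by
    rintro ⟨j, k⟩ hp
    have hjk : j ≠ k := fun h => hp ⟨j, by simp [h]⟩
    have hc : (((j:ℂ) - k) * I) ≠ 0 := by
      refine mul_ne_zero (sub_ne_zero.2 ?_) I_ne_zero
      exact_mod_cast hjk
    have : ∀ θ : ℝ, f (j, k) θ = (a j * (starRingEnd ℂ) (a k)) * Complex.exp ((((j:ℂ) - k) * I) * θ) := by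
      intro θ
      dsimp only [f]
      rw [map_mul, ← Complex.exp_conj]
      simp only [map_mul, Complex.conj_ofReal, Complex.conj_I, map_natCast]
      rw [mul_mul_mul_comm, ← Complex.exp_add]
      congr 2; ring
    simp_rw [this]
    rw [intervalIntegral.integral_const_mul, integral_exp_mul_complex hc]
    have e : Complex.exp (((j:ℂ) - k) * I * ((2 * Real.pi : ℝ) : ℂ)) = 1 := by
      have := Complex.exp_int_mul_two_pi_mul_I ((j:ℤ) - k)
      rw [← this]; congr 1; push_cast; ring
    rw [e]; simp
  have h3 := (Function.Injective.hasSum_iff (f := fun p : ℕ × ℕ => ∫ θ in (0:ℝ)..(2 * Real.pi), f p θ)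
    (g := fun k : ℕ => (k, k)) (fun i j h => by simpa using h) h2).2 h1
  have h4 : ∀ k, ∫ θ in (0:ℝ)..(2 * Real.pi), f (k, k) θ = ((‖a k‖ ^ 2 * (2 * Real.pi) : ℝ) : ℂ) := by
    intro k
    have : ∀ θ, f (k, k) θ = ((‖a k‖ ^ 2 : ℝ) : ℂ) := by
      intro θ
      dsimp only [f]
      rw [Complex.mul_conj, Complex.normSq_eq_norm_sq, hn]
    simp_rw [this]
    simp [mul_comm]
  have h5 : (∫ θ in (0:ℝ)..(2 * Real.pi), F θ * (starRingEnd ℂ) (F θ)) =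
      ((∫ θ in (0:ℝ)..(2 * Real.pi), ‖F θ‖ ^ 2 : ℝ) : ℂ) := by
    rw [← intervalIntegral.integral_ofReal]
    congr 1; ext θ
    rw [Complex.mul_conj, Complex.normSq_eq_norm_sq]
  rw [h5] at h3
  have h6 : HasSum (fun k => ((‖a k‖ ^ 2 * (2 * Real.pi) : ℝ) : ℂ))
    ((∫ θ in (0:ℝ)..(2 * Real.pi), ‖F θ‖ ^ 2 : ℝ) : ℂ) := by
    refine h3.congr_fun ?_
    intro k; simp only [Function.comp, h4]
  exact_mod_cast h6

theorem aux_parseval_taylor (f : ℂ → ℂ) (R r : ℝ) (hr : 0 ≤ r) (hrR : r < R)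
    (hf : DifferentiableOn ℂ f (Metric.ball 0 R)) :
    HasSum (fun k => ‖taylorCoef f k‖ ^ 2 * r ^ (2 * k) * (2 * Real.pi))
      (∫ θ in (0:ℝ)..(2 * Real.pi), ‖f (r * Complex.exp (θ * I))‖ ^ 2) := by
  have key : ∀ z ∈ Metric.ball (0:ℂ) R, HasSum (fun k => taylorCoef f k * z ^ k) (f z) := by
    intro z hz
    have := Complex.hasSum_taylorSeries_on_ball hf hz
    refine this.congr_fun ?_
    intro k
    simp only [taylorCoef, sub_zero, smul_eq_mul]
    field_simp
  have hrr : (r:ℂ) ∈ Metric.ball (0:ℂ) R := by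
    simp [abs_of_nonneg hr, hrR]
  have hs := (key _ hrr).summable.norm
  have := aux_parseval (fun k => taylorCoef f k * (r:ℂ) ^ k) hs
    (fun θ => f (r * Complex.exp (θ * I))) ?_
  · refine this.congr_fun ?_
    intro k
    simp only [norm_mul, norm_pow, Complex.norm_real, Real.norm_eq_abs, abs_of_nonneg hr]
    ring
  · intro θ
    have hz : (r * Complex.exp (θ * I)) ∈ Metric.ball (0:ℂ) R := by
      simp [Complex.norm_exp_ofReal_mul_I, abs_of_nonneg hr, hrR]
    refine (key _ hz).congr_fun ?_
    intro k
    rw [mul_pow, ← Complex.exp_nat_mul]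
    ring_nf

/-- The Poisson-type kernel. -/
def auxP (t θ : ℝ) : ℝ := (1 - t ^ 2) / (1 - 2 * t * Real.cos θ + t ^ 2)

theorem auxP_den_pos (t θ : ℝ) (h0 : 0 ≤ t) (h1 : t < 1) : 0 < 1 - 2 * t * Real.cos θ + t ^ 2 := by
  nlinarith [Real.cos_le_one θ, Real.neg_one_le_cos θ, mul_nonneg h0 (sub_nonneg.2 (Real.cos_le_one θ)), mul_pos (sub_pos.2 h1) (sub_pos.2 h1)]

theorem auxP_pos (t θ : ℝ) (h0 : 0 < t) (h1 : t < 1) : 0 < auxP t θ :=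
  div_pos (by nlinarith) (auxP_den_pos t θ h0.le h1)

theorem auxP_cont (t : ℝ) (h0 : 0 < t) (h1 : t < 1) : Continuous (auxP t) := by
  unfold auxP
  refine Continuous.div (by fun_prop) (by fun_prop) fun θ => (auxP_den_pos t θ h0.le h1).ne'

def auxPsi (t θ : ℝ) : ℝ :=
  Real.pi + θ + 2 * Real.arctan (t * Real.sin θ / (1 - t * Real.cos θ))

theorem aux_d (t θ : ℝ) (h0 : 0 < t) (h1 : t < 1) : 0 < 1 - t * Real.cos θ := by
  nlinarith [Real.cos_le_one θ]

theorem auxPsi_deriv (t θ : ℝ) (h0 : 0 < t) (h1 : t < 1) :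
    HasDerivAt (auxPsi t) (auxP t θ) θ := by
  have hd := aux_d t θ h0 h1
  have hD := auxP_den_pos t θ h0.le h1
  have h := ((((Real.hasDerivAt_sin θ).const_mul t).div
    (((Real.hasDerivAt_cos θ).const_mul t).const_sub 1) hd.ne').arctan.const_mul 2)
  have h' := ((hasDerivAt_id θ).const_add Real.pi).add h
  refine h'.congr_deriv ?_
  have hD' : 0 < (1 - t * Real.cos θ) ^ 2 + (t * Real.sin θ) ^ 2 := by positivity
  have hDD : (1 - t * Real.cos θ) ^ 2 + (t * Real.sin θ) ^ 2 = 1 - 2 * t * Real.cos θ + t ^ 2 := by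
    linear_combination t ^ 2 * Real.sin_sq_add_cos_sq θ
  have e : 1 + (t * Real.sin θ / (1 - t * Real.cos θ)) ^ 2 =
      (1 - 2 * t * Real.cos θ + t ^ 2) / (1 - t * Real.cos θ) ^ 2 := by
    rw [← hDD]; field_simp
  simp only [Pi.div_apply] at *
  rw [e]
  unfold auxP
  field_simp
  linear_combination (-2 * t ^ 2) * Real.sin_sq_add_cos_sq θ

theorem auxP_psi (t θ : ℝ) (h0 : 0 < t) (h1 : t < 1) :
    auxP t (auxPsi t θ) = (auxP t θ)⁻¹ := by
  have hd := aux_d t θ h0 h1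
  have hD := auxP_den_pos t θ h0.le h1
  have hDD : (1 - t * Real.cos θ) ^ 2 + (t * Real.sin θ) ^ 2 = 1 - 2 * t * Real.cos θ + t ^ 2 := by
    linear_combination t ^ 2 * Real.sin_sq_add_cos_sq θ
  set A := Real.arctan (t * Real.sin θ / (1 - t * Real.cos θ)) with hA
  have e : 1 + (t * Real.sin θ / (1 - t * Real.cos θ)) ^ 2 =
      (1 - 2 * t * Real.cos θ + t ^ 2) / (1 - t * Real.cos θ) ^ 2 := by
    rw [← hDD]; field_simp
  have hc : Real.cos A ^ 2 = (1 - t * Real.cos θ) ^ 2 / (1 - 2 * t * Real.cos θ + t ^ 2) := by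
    rw [hA, Real.cos_sq_arctan, e]; simp
  have hs : Real.sin A = (t * Real.sin θ / (1 - t * Real.cos θ)) * Real.cos A := by
    have := Real.tan_arctan (t * Real.sin θ / (1 - t * Real.cos θ))
    rw [← hA, Real.tan_eq_sin_div_cos] at this
    have hcp : 0 < Real.cos A := Real.cos_arctan_pos _
    rw [← this]; field_simp
  have hcos : Real.cos (auxPsi t θ) = -(Real.cos θ * (2 * Real.cos A ^ 2 - 1) -
      Real.sin θ * (2 * (t * Real.sin θ / (1 - t * Real.cos θ)) * Real.cos A ^ 2)) := by
    have : auxPsi t θ = (θ + 2 * A) + Real.pi := by unfold auxPsi; ring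
    rw [this, Real.cos_add_pi, Real.cos_add, Real.cos_two_mul, Real.sin_two_mul, hs]
    ring
  unfold auxP
  rw [hcos, hc, inv_div]
  have key : 1 - 2 * t * (-(Real.cos θ * (2 * ((1 - t * Real.cos θ) ^ 2 / (1 - 2 * t * Real.cos θ + t ^ 2)) - 1) -
      Real.sin θ * (2 * (t * Real.sin θ / (1 - t * Real.cos θ)) * ((1 - t * Real.cos θ) ^ 2 / (1 - 2 * t * Real.cos θ + t ^ 2))))) + t ^ 2
      = (1 - t ^ 2) ^ 2 / (1 - 2 * t * Real.cos θ + t ^ 2) := by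
    field_simp
    have := Real.sin_sq_add_cos_sq θ
    have h2 : Real.sin θ ^ 2 = 1 - Real.cos θ ^ 2 := by linarith
    ring_nf
    rw [h2]
    ring
  rw [key]
  have : (1 - t^2) ≠ 0 := by nlinarith
  field_simp

theorem aux_subst (t : ℝ) (h0 : 0 < t) (h1 : t < 1) (g : ℝ → ℝ) (hg : Continuous g)
    (hp : Function.Periodic g (2 * Real.pi)) :
    ∫ θ in (0:ℝ)..(2 * Real.pi), g (auxPsi t θ) * auxP t θ = ∫ θ in (0:ℝ)..(2 * Real.pi), g θ := by
  have := intervalIntegral.integral_comp_mul_deriv (a := 0) (b := 2 * Real.pi) (f := auxPsi t)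
    (f' := auxP t) (g := g) (fun x _ => auxPsi_deriv t x h0 h1) (auxP_cont t h0 h1).continuousOn hg
  simp only [Function.comp] at this
  rw [this]
  have e1 : auxPsi t 0 = Real.pi := by simp [auxPsi]
  have e2 : auxPsi t (2 * Real.pi) = Real.pi + 2 * Real.pi := by simp [auxPsi]
  rw [e1, e2, hp.intervalIntegral_add_eq Real.pi 0, zero_add]

theorem aux_ineq (t b : ℝ) (h0 : 0 < t) (h1 : t < 1) (hb : 0 ≤ b) :
    ∫ θ in (0:ℝ)..(2 * Real.pi), auxP t θ ^ b ≤ ∫ θ in (0:ℝ)..(2 * Real.pi), auxP t θ ^ (-b) := by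
  have hP := auxP_cont t h0 h1
  have hpos := fun θ => auxP_pos t θ h0 h1
  have hc : ∀ c : ℝ, Continuous fun θ => auxP t θ ^ c := fun c =>
    hP.rpow_const fun θ => Or.inl (hpos θ).ne'
  have hper : Function.Periodic (auxP t) (2 * Real.pi) := by
    intro θ; simp [auxP]
  have e1 := aux_subst t h0 h1 (fun θ => auxP t θ ^ (-b)) (hc _) (fun θ => by simp only [hper θ])
  have e2 := aux_subst t h0 h1 (fun θ => 1) continuous_const (fun θ => rfl)
  simp only [one_mul] at e2
  rw [← e1]
  have e3 : ∀ θ, auxP t (auxPsi t θ) ^ (-b) * auxP t θ = auxP t θ ^ b * auxP t θ := by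
    intro θ
    rw [auxP_psi t θ h0 h1, Real.inv_rpow (hpos θ).le, Real.rpow_neg (hpos θ).le, inv_inv]
  simp_rw [e3]
  have : ∫ θ in (0:ℝ)..(2 * Real.pi), (auxP t θ ^ b + (auxP t θ - 1)) ≤
      ∫ θ in (0:ℝ)..(2 * Real.pi), auxP t θ ^ b * auxP t θ := by
    refine intervalIntegral.integral_mono (by positivity) ?_ ?_ ?_
    · exact ((hc b).add (hP.sub continuous_const)).intervalIntegrable _ _
    · exact ((hc b).mul hP).intervalIntegrable _ _
    · intro θ
      dsimp only
      rcases le_total 1 (auxP t θ) with h | h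
      · nlinarith [Real.one_le_rpow h hb]
      · nlinarith [Real.rpow_le_one (hpos θ).le h hb]
  have hI : IntervalIntegrable (fun θ => auxP t θ - 1) MeasureTheory.volume 0 (2 * Real.pi) :=
    (hP.sub continuous_const).intervalIntegrable _ _
  rw [intervalIntegral.integral_add ((hc b).intervalIntegrable _ _) hI,
    intervalIntegral.integral_sub (hP.intervalIntegrable _ _) (continuous_const.intervalIntegrable _ _), e2] at this
  linarith

def auxJ (b : ℝ) (k : ℕ) : ℝ := ∫ s in (0:ℝ)..1, s ^ (b - 1) * (1 - s) ^ (k + 1)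

theorem aux_rc (b : ℝ) (hb : 1 ≤ b) : Continuous fun s : ℝ => s ^ (b - 1) :=
  continuous_id.rpow_const fun _ => Or.inr (by linarith)

theorem auxJ_rec (b : ℝ) (hb : 1 ≤ b) (k : ℕ) :
    auxJ b (k + 1) * (b + k + 2) = (k + 2) * auxJ b k := by
  have hd : ∀ s : ℝ, HasDerivAt (fun s : ℝ => s ^ b * (1 - s) ^ (k + 2))
      (b * s ^ (b - 1) * (1 - s) ^ (k + 2) + s ^ b * (((k + 2 : ℕ) : ℝ) * (1 - s) ^ (k + 1) * (-1))) s := by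
    intro s
    have h1 := Real.hasDerivAt_rpow_const (x := s) (p := b) (Or.inr hb)
    have h2 := ((hasDerivAt_id s).const_sub 1).pow (k + 2)
    exact h1.mul h2
  have hc := aux_rc b hb
  have hcb : Continuous fun s : ℝ => s ^ b := continuous_id.rpow_const fun _ => Or.inr (by linarith)
  have h := intervalIntegral.integral_eq_sub_of_hasDerivAt (a := 0) (b := 1) (fun s _ => hd s)
    (Continuous.intervalIntegrable (by fun_prop) _ _)
  have hz : (0:ℝ) ^ b = 0 := Real.zero_rpow (by linarith)
  simp only [sub_self, hz, ne_eq, Nat.add_eq_zero_iff, OfNat.ofNat_ne_zero, and_false,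
    not_false_eq_true, zero_pow, mul_zero, zero_mul] at h
  have e : ∫ s in (0:ℝ)..1, (b * s ^ (b - 1) * (1 - s) ^ (k + 2) + s ^ b * (((k + 2 : ℕ) : ℝ) * (1 - s) ^ (k + 1) * (-1)))
     = ∫ s in (0:ℝ)..1, ((b + k + 2) * (s ^ (b - 1) * (1 - s) ^ (k + 1 + 1)) - (k + 2) * (s ^ (b - 1) * (1 - s) ^ (k + 1))) := by
    refine intervalIntegral.integral_congr fun s hs => ?_
    rw [Set.uIcc_of_le zero_le_one] at hs
    have : s ^ b = s ^ (b - 1) * s := by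
      rcases hs.1.eq_or_lt with h | h
      · rw [← h, hz, mul_zero]
      · rw [Real.rpow_sub_one h.ne']; field_simp
    rw [this]; push_cast; ring
  rw [e, intervalIntegral.integral_sub (Continuous.intervalIntegrable (by fun_prop) _ _)
    (Continuous.intervalIntegrable (by fun_prop) _ _), intervalIntegral.integral_const_mul,
    intervalIntegral.integral_const_mul] at h
  unfold auxJ
  linarith

theorem auxJ_pos (b : ℝ) (hb : 1 ≤ b) (k : ℕ) : 0 < auxJ b k := by
  unfold auxJ
  have hc := aux_rc b hb
  refine intervalIntegral.intervalIntegral_pos_of_pos_on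
    (Continuous.intervalIntegrable (by fun_prop) _ _) ?_ zero_lt_one
  intro s hs
  have := hs.1
  have h2 : 0 < 1 - s := by linarith [hs.2]
  positivity

theorem aux_beta (α : ℝ) (hα : 1 / 2 ≤ α) (k : ℕ) :
    auxJ (2 * α) 0 * bergBeta α k ^ 2 = auxJ (2 * α) k := by
  induction k with
  | zero => simp [bergBeta]
  | succ k ih =>
    have hr := auxJ_rec (2 * α) (by linarith) k
    have e : bergBeta α (k + 1) = bergBeta α k *
        Real.sqrt ((((k + 1 : ℕ) : ℝ) + 1) / (((k + 1 : ℕ) : ℝ) + 2 * α + 1)) := by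
      unfold bergBeta
      rw [Finset.prod_Icc_succ_top (by omega)]
    have hk : (0:ℝ) ≤ k := Nat.cast_nonneg k
    rw [e, mul_pow, Real.sq_sqrt (by positivity), ← mul_assoc, ih]
    have : (k:ℝ) + 1 + 2 * α + 1 ≠ 0 := by positivity
    push_cast
    field_simp
    linarith

theorem aux_beta_pos (α : ℝ) (hα : 1 / 2 ≤ α) (k : ℕ) : 0 < bergBeta α k := by
  unfold bergBeta
  refine Finset.prod_pos fun j _ => Real.sqrt_pos.2 ?_
  positivity

theorem auxJ_le (b : ℝ) (hb : 1 ≤ b) (n : ℕ) : (n:ℝ) ^ b * auxJ b n ≤ Real.Gamma b := by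
  have hn : (0:ℝ) < n + 1 := by positivity
  have hG := Real.integral_rpow_mul_exp_neg_mul_Ioi (a := b) (r := (n:ℝ) + 1) (by linarith) hn
  have hI : MeasureTheory.IntegrableOn (fun x : ℝ => x ^ (b - 1) * Real.exp (-(((n:ℝ) + 1) * x))) (Set.Ioi 0) := by
    have := integrableOn_rpow_mul_exp_neg_mul_rpow (p := 1) (s := b - 1) (b := (n:ℝ) + 1) (by linarith) one_pos hn
    simpa only [Real.rpow_one, neg_mul] using this
  have hc := aux_rc b hb
  have h1 : auxJ b n ≤ ∫ s in Set.Ioi (0:ℝ), s ^ (b - 1) * Real.exp (-(((n:ℝ) + 1) * s)) := by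
    unfold auxJ
    rw [intervalIntegral.integral_of_le zero_le_one]
    calc _ ≤ ∫ s in Set.Ioc (0:ℝ) 1, s ^ (b - 1) * Real.exp (-(((n:ℝ) + 1) * s)) := by
          refine MeasureTheory.setIntegral_mono_on ?_ (hI.mono_set Set.Ioc_subset_Ioi_self) measurableSet_Ioc ?_
          · refine (Continuous.integrableOn_Icc (a := (0:ℝ)) (b := 1) ?_).mono_set Set.Ioc_subset_Icc_self
            fun_prop
          · intro s hs
            have := hs.1
            refine mul_le_mul_of_nonneg_left ?_ (by positivity)
            have h2 : 1 - s ≤ Real.exp (-s) := by linarith [Real.add_one_le_exp (-s)]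
            calc (1 - s) ^ (n + 1) ≤ Real.exp (-s) ^ (n + 1) :=
                  pow_le_pow_left₀ (by linarith [hs.2]) h2 _
              _ = _ := by rw [← Real.exp_nat_mul]; push_cast; ring_nf
      _ ≤ _ := by
          refine MeasureTheory.setIntegral_mono_set hI ?_ (Filter.Eventually.of_forall Set.Ioc_subset_Ioi_self)
          refine (MeasureTheory.ae_restrict_iff' measurableSet_Ioi).2 (Filter.Eventually.of_forall fun s hs => ?_)
          have : 0 < s := hs
          simp only [Pi.zero_apply]; positivity
  rw [hG] at h1
  have hΓ : 0 < Real.Gamma b := Real.Gamma_pos_of_pos (by linarith)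
  calc (n:ℝ) ^ b * auxJ b n ≤ (n:ℝ) ^ b * ((1 / ((n:ℝ) + 1)) ^ b * Real.Gamma b) := by gcongr
    _ = ((n:ℝ) * (1 / ((n:ℝ) + 1))) ^ b * Real.Gamma b := by
        rw [Real.mul_rpow (by positivity) (by positivity)]; ring
    _ ≤ 1 * Real.Gamma b := by
        refine mul_le_mul_of_nonneg_right ?_ hΓ.le
        refine Real.rpow_le_one (by positivity) ?_ (by linarith)
        rw [mul_one_div, div_le_one hn]; linarith
    _ = _ := one_mul _

def auxQ (t s θ : ℝ) : ℝ :=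
  (1 - t ^ 2) / (1 - 2 * t * Real.sqrt (1 - s) * Real.cos θ + t ^ 2 * (1 - s))

theorem auxQ_den (t s θ : ℝ) (h0 : 0 < t) (h1 : t < 1) (hs0 : 0 ≤ s) (hs1 : s ≤ 1) :
    0 < 1 - 2 * t * Real.sqrt (1 - s) * Real.cos θ + t ^ 2 * (1 - s) := by
  have hr : Real.sqrt (1 - s) ≤ 1 := by rw [Real.sqrt_le_one]; linarith
  have h := auxP_den_pos (t * Real.sqrt (1 - s)) θ (by positivity)
    (by nlinarith [Real.sqrt_nonneg (1 - s)])
  rw [mul_pow, Real.sq_sqrt (by linarith)] at h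
  linarith

theorem aux_normsq (t ρ θ : ℝ) : ‖1 - (t:ℂ) * (ρ * Complex.exp (θ * I))‖ ^ 2 =
    1 - 2 * t * ρ * Real.cos θ + t ^ 2 * ρ ^ 2 := by
  rw [← Complex.normSq_eq_norm_sq, Complex.exp_mul_I, ← Complex.ofReal_cos, ← Complex.ofReal_sin,
    Complex.normSq_apply]
  simp [-Complex.ofReal_cos, -Complex.ofReal_sin]
  linear_combination (t ^ 2 * ρ ^ 2) * Real.sin_sq_add_cos_sq θ

theorem aux_normsq2 (t ρ θ : ℝ) : ‖(t:ℂ) - (ρ * Complex.exp (θ * I))‖ ^ 2 =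
    t ^ 2 - 2 * t * ρ * Real.cos θ + ρ ^ 2 := by
  rw [← Complex.normSq_eq_norm_sq, Complex.exp_mul_I, ← Complex.ofReal_cos, ← Complex.ofReal_sin,
    Complex.normSq_apply]
  simp [-Complex.ofReal_cos, -Complex.ofReal_sin]
  linear_combination (ρ ^ 2) * Real.sin_sq_add_cos_sq θ

theorem aux_mob (t s θ : ℝ) (h0 : 0 < t) (h1 : t < 1) (hs0 : 0 ≤ s) (hs1 : s ≤ 1) :
    ‖mobius t (Real.sqrt (1 - s) * Complex.exp (θ * I))‖ ^ 2 = 1 - s * auxQ t s θ := by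
  have hd := auxQ_den t s θ h0 h1 hs0 hs1
  unfold mobius auxQ
  rw [Complex.conj_ofReal, norm_div, div_pow, aux_normsq, aux_normsq2, Real.sq_sqrt (by linarith), mul_div_assoc', eq_sub_iff_add_eq,
    ← add_div, div_eq_one_iff_eq hd.ne']
  ring

theorem aux_ball (t : ℝ) (h0 : 0 < t) (z : ℂ) (hz : z ∈ Metric.ball (0:ℂ) (1 / t)) :
    ‖(t:ℂ) * z‖ < 1 := by
  rw [mem_ball_zero_iff, lt_div_iff₀ h0] at hz
  rw [norm_mul, Complex.norm_real, Real.norm_eq_abs, abs_of_pos h0]; linarith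

theorem aux_diff1 (t : ℝ) (h0 : 0 < t) (n : ℕ) :
    DifferentiableOn ℂ (fun z => mobius (t : ℂ) z ^ n) (Metric.ball (0:ℂ) (1 / t)) := by
  unfold mobius
  refine DifferentiableOn.pow (DifferentiableOn.div (by fun_prop) (by fun_prop) ?_) n
  intro z hz h
  have := aux_ball t h0 z hz
  rw [Complex.conj_ofReal] at h
  rw [← sub_eq_zero.1 h] at this
  simp at this

theorem aux_diff2 (t α : ℝ) (h0 : 0 < t) :
    DifferentiableOn ℂ (fun z => (((1 - t ^ 2) ^ α : ℝ) : ℂ) * (1 - (t : ℂ) * z) ^ ((-(2 * α) : ℝ) : ℂ))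
      (Metric.ball (0:ℂ) (1 / t)) := by
  refine DifferentiableOn.const_mul ?_ _
  refine DifferentiableOn.cpow_const (by fun_prop) ?_
  intro z hz
  have := aux_ball t h0 z hz
  left
  have h2 := (Complex.abs_re_le_norm ((t:ℂ) * z)).trans_lt this
  have := (abs_lt.1 h2).2
  simp only [Complex.sub_re, Complex.one_re]; linarith

theorem aux_hardy (t α : ℝ) (h0 : 0 < t) (h1 : t < 1) :
    (hardyNormSq fun z =>
          (((1 - t ^ 2) ^ α : ℝ) : ℂ) * (1 - (t : ℂ) * z) ^ ((-(2 * α) : ℝ) : ℂ)) * (2 * Real.pi) =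
    ∫ θ in (0:ℝ)..(2 * Real.pi), auxP t θ ^ (2 * α) := by
  have h := aux_parseval_taylor _ (1 / t) 1 zero_le_one (by rw [lt_div_iff₀ h0]; linarith) (aux_diff2 t α h0)
  simp only [one_pow, mul_one] at h
  unfold hardyNormSq
  rw [← tsum_mul_right, h.tsum_eq]
  congr 1; ext θ
  have ht : 0 < 1 - t ^ 2 := by nlinarith
  have hD := auxP_den_pos t θ h0.le h1
  have hn := aux_normsq t 1 θ
  simp only [one_pow, mul_one] at hn
  rw [norm_mul, Complex.norm_real, Complex.norm_cpow_real, Real.norm_eq_abs,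
    abs_of_pos (by positivity), mul_pow, ← Real.rpow_mul_natCast ht.le, ← Real.rpow_mul_natCast (norm_nonneg _)]
  unfold auxP
  rw [Real.div_rpow ht.le hD.le, ← hn, ← Real.rpow_natCast_mul (norm_nonneg _), div_eq_mul_inv,
    ← Real.rpow_neg (norm_nonneg _)]
  congr 2 <;> push_cast <;> ring

def auxG (t : ℝ) (n : ℕ) (s : ℝ) : ℝ := ∫ θ in (0:ℝ)..(2 * Real.pi), (1 - s * auxQ t s θ) ^ n

theorem aux_G_hasSum (t : ℝ) (h0 : 0 < t) (h1 : t < 1) (n : ℕ) (s : ℝ) (hs0 : 0 ≤ s) (hs1 : s ≤ 1) :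
    HasSum (fun k => ‖taylorCoef (fun z => mobius (t : ℂ) z ^ n) k‖ ^ 2 * (1 - s) ^ k * (2 * Real.pi))
      (auxG t n s) := by
  have hr : Real.sqrt (1 - s) ≤ 1 := by rw [Real.sqrt_le_one]; linarith
  have h1t : 1 < 1 / t := by rw [lt_div_iff₀ h0]; linarith
  have h := aux_parseval_taylor _ (1 / t) (Real.sqrt (1 - s)) (Real.sqrt_nonneg _)
    (by linarith) (aux_diff1 t h0 n)
  simp only [pow_mul, Real.sq_sqrt (sub_nonneg.2 hs1)] at h
  have e : (∫ θ in (0:ℝ)..(2 * Real.pi), ‖mobius (t:ℂ) (Real.sqrt (1 - s) * Complex.exp (θ * I)) ^ n‖ ^ 2)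
      = auxG t n s := by
    unfold auxG
    congr 1; ext θ
    rw [norm_pow, ← pow_mul, mul_comm n 2, pow_mul, aux_mob t s θ h0 h1 hs0 hs1]
  rw [e] at h
  exact h

theorem aux_wnorm (t α : ℝ) (h0 : 0 < t) (h1 : t < 1) (hα : 1 / 2 ≤ α) (n : ℕ) :
    auxJ (2 * α) 0 * wNormSq (bergBeta α) (fun z => mobius (t : ℂ) z ^ n) * (2 * Real.pi) =
    ∫ s in (0:ℝ)..1, s ^ (2 * α - 1) * (1 - s) * auxG t n s := by
  set c := taylorCoef (fun z => mobius (t : ℂ) z ^ n) with hc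
  have hsum := (aux_G_hasSum t h0 h1 n 0 le_rfl zero_le_one).summable
  simp only [sub_zero, one_pow, mul_one, ← hc] at hsum
  have hrc := aux_rc (2 * α) (by linarith)
  have h : HasSum (fun k => ∫ s in (0:ℝ)..1, (s ^ (2 * α - 1) * (1 - s)) * (‖c k‖ ^ 2 * (1 - s) ^ k * (2 * Real.pi)))
      (∫ s in (0:ℝ)..1, s ^ (2 * α - 1) * (1 - s) * auxG t n s) := by
    refine intervalIntegral.hasSum_integral_of_dominated_convergence
      (fun k _ => ‖c k‖ ^ 2 * (2 * Real.pi)) ?_ ?_ ?_ ?_ ?_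
    · intro k
      apply Continuous.aestronglyMeasurable
      fun_prop
    · intro k
      refine Filter.Eventually.of_forall fun s hs => ?_
      rw [Set.uIoc_of_le zero_le_one] at hs
      have hs0 := hs.1
      have hs1 : 0 ≤ 1 - s := by linarith [hs.2]
      have a1 : s ^ (2 * α - 1) ≤ 1 := Real.rpow_le_one hs0.le hs.2 (by linarith)
      have a2 : (1 - s) ^ k ≤ 1 := pow_le_one₀ hs1 (by linarith)
      have hpi := Real.pi_pos
      rw [Real.norm_eq_abs, abs_of_nonneg (by positivity)]
      have a3 : s ^ (2 * α - 1) * (1 - s) ≤ 1 := mul_le_one₀ a1 hs1 (by linarith)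
      calc _ ≤ 1 * (‖c k‖ ^ 2 * 1 * (2 * Real.pi)) := by gcongr
        _ = _ := by ring
    · exact Filter.Eventually.of_forall fun s _ => hsum
    · simp
    · refine Filter.Eventually.of_forall fun s hs => ?_
      rw [Set.uIoc_of_le zero_le_one] at hs
      exact (aux_G_hasSum t h0 h1 n s hs.1.le hs.2).mul_left _
  rw [← h.tsum_eq]
  unfold wNormSq
  rw [← tsum_mul_left, ← tsum_mul_right]
  congr 1; ext k
  rw [← hc]
  have : ∀ s : ℝ, (s ^ (2 * α - 1) * (1 - s)) * (‖c k‖ ^ 2 * (1 - s) ^ k * (2 * Real.pi)) =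
    (‖c k‖ ^ 2 * (2 * Real.pi)) * (s ^ (2 * α - 1) * (1 - s) ^ (k + 1)) := by intro s; ring
  simp_rw [this]
  rw [intervalIntegral.integral_const_mul]
  have hb := aux_beta α hα k
  unfold auxJ at hb ⊢
  rw [← hb]; ring

theorem aux_q_bounds (t s θ : ℝ) (h0 : 0 < t) (h1 : t < 1) (hs0 : 0 ≤ s) (hs1 : s ≤ 1) (n : ℕ) :
    0 ≤ (1 - s * auxQ t s θ) ^ n ∧
      (1 - s * auxQ t s θ) ^ n ≤ Real.exp (-((1 - t ^ 2) / (1 + t) ^ 2 * (n * s))) := by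
  have h : 0 ≤ 1 - s * auxQ t s θ := by rw [← aux_mob t s θ h0 h1 hs0 hs1]; positivity
  refine ⟨pow_nonneg h _, ?_⟩
  have hd := auxQ_den t s θ h0 h1 hs0 hs1
  have hr : Real.sqrt (1 - s) ≤ 1 := by rw [Real.sqrt_le_one]; linarith
  have hr0 := Real.sqrt_nonneg (1 - s)
  have hq : (1 - t ^ 2) / (1 + t) ^ 2 ≤ auxQ t s θ := by
    unfold auxQ
    refine div_le_div_of_nonneg_left (by nlinarith) hd ?_
    have h3 : -(Real.sqrt (1 - s) * Real.cos θ) ≤ 1 := by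
      nlinarith [Real.neg_one_le_cos θ, mul_nonneg hr0 (by linarith [Real.neg_one_le_cos θ] : 0 ≤ 1 + Real.cos θ)]
    nlinarith [mul_nonneg h0.le (by linarith : 0 ≤ 1 + Real.sqrt (1 - s) * Real.cos θ), mul_nonneg (sq_nonneg t) hs0]
  have h2 : 1 - s * auxQ t s θ ≤ Real.exp (-((1 - t ^ 2) / (1 + t) ^ 2 * s)) := by
    have := Real.add_one_le_exp (-((1 - t ^ 2) / (1 + t) ^ 2 * s))
    nlinarith [mul_le_mul_of_nonneg_right hq hs0]
  calc _ ≤ Real.exp (-((1 - t ^ 2) / (1 + t) ^ 2 * s)) ^ n := pow_le_pow_left₀ h h2 n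
    _ = _ := by rw [← Real.exp_nat_mul]; ring_nf

theorem aux_meas (t : ℝ) (n : ℕ) :
    Measurable (fun p : ℝ × ℝ => (1 - p.1 * auxQ t p.1 p.2) ^ n) := by
  unfold auxQ
  fun_prop

theorem aux_G_meas (t : ℝ) (n : ℕ) : Measurable (auxG t n) := by
  have h := (aux_meas t n).stronglyMeasurable.integral_prod_right'
    (ν := MeasureTheory.volume.restrict (Set.Ioc (0:ℝ) (2 * Real.pi)))
  have e : auxG t n = fun x => ∫ θ in Set.Ioc (0:ℝ) (2 * Real.pi), (1 - x * auxQ t x θ) ^ n := by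
    ext x
    unfold auxG
    rw [intervalIntegral.integral_of_le (by positivity)]
  rw [e]
  exact h.measurable

theorem aux_G_bound (t s : ℝ) (h0 : 0 < t) (h1 : t < 1) (hs0 : 0 ≤ s) (hs1 : s ≤ 1) (n : ℕ) :
    |auxG t n s| ≤ Real.exp (-((1 - t ^ 2) / (1 + t) ^ 2 * (n * s))) * (2 * Real.pi) := by
  have hpi := Real.pi_pos
  have := intervalIntegral.norm_integral_le_of_norm_le_const (a := (0:ℝ)) (b := 2 * Real.pi)
    (f := fun θ => (1 - s * auxQ t s θ) ^ n)
    (C := Real.exp (-((1 - t ^ 2) / (1 + t) ^ 2 * (n * s)))) (fun θ _ => by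
      have h := aux_q_bounds t s θ h0 h1 hs0 hs1 n
      rw [Real.norm_eq_abs, abs_of_nonneg h.1]; exact h.2)
  rw [sub_zero, abs_of_pos (by positivity : 0 < 2 * Real.pi)] at this
  exact this

theorem aux_G_lim (t u : ℝ) (h0 : 0 < t) (h1 : t < 1) (hu : 0 < u) :
    Tendsto (fun n : ℕ => auxG t n (u / n)) atTop
      (𝓝 (∫ θ in (0:ℝ)..(2 * Real.pi), Real.exp (-(u * auxP t θ)))) := by
  have hlim : Tendsto (fun n : ℕ => u / (n:ℝ)) atTop (𝓝 0) := tendsto_const_div_atTop_nhds_zero_nat u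
  have hev : ∀ᶠ n : ℕ in atTop, u / (n:ℝ) ≤ 1 := (hlim.eventually_lt_const one_pos).mono fun _ h => h.le
  unfold auxG
  refine intervalIntegral.tendsto_integral_filter_of_dominated_convergence (fun _ => 1) ?_ ?_ ?_ ?_
  · refine Filter.Eventually.of_forall fun n => ?_
    exact ((aux_meas t n).comp (measurable_const.prodMk measurable_id)).aestronglyMeasurable
  · filter_upwards [hev] with n hn
    refine Filter.Eventually.of_forall fun θ _ => ?_
    have hs : 0 ≤ u / (n:ℝ) := by positivity
    have h := aux_q_bounds t (u / n) θ h0 h1 hs hn n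
    rw [Real.norm_eq_abs, abs_of_nonneg h.1]
    refine h.2.trans (Real.exp_le_one_iff.2 ?_)
    have : 0 < 1 - t ^ 2 := by nlinarith
    have : 0 ≤ (1 - t ^ 2) / (1 + t) ^ 2 * (n * (u / n)) := by positivity
    linarith
  · simp
  · refine Filter.Eventually.of_forall fun θ _ => ?_
    have hQ : Tendsto (fun n : ℕ => auxQ t (u / n) θ) atTop (𝓝 (auxP t θ)) := by
      have hc : ContinuousAt (fun s => auxQ t s θ) 0 := by
        unfold auxQ
        refine ContinuousAt.div (by fun_prop) (by fun_prop) ?_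
        exact (auxQ_den t 0 θ h0 h1 le_rfl zero_le_one).ne'
      have h0' : auxQ t 0 θ = auxP t θ := by simp [auxQ, auxP]
      have := hc.tendsto.comp hlim
      simp only [h0'] at this
      exact this
    have := Real.tendsto_one_add_pow_exp_of_tendsto (g := fun n : ℕ => -(u / n * auxQ t (u / n) θ))
      (t := -(u * auxP t θ)) ?_
    · simpa only [← sub_eq_add_neg] using this
    · have h2 := (hQ.const_mul u).neg
      refine h2.congr' ?_
      filter_upwards [eventually_gt_atTop 0] with n hn
      have : (n:ℝ) ≠ 0 := by positivity
      field_simp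

theorem aux_int (b c : ℝ) (hb : 1 ≤ b) (hc : 0 < c) :
    MeasureTheory.IntegrableOn (fun x : ℝ => x ^ (b - 1) * Real.exp (-(c * x))) (Set.Ioi 0) := by
  have := integrableOn_rpow_mul_exp_neg_mul_rpow (p := 1) (s := b - 1) (b := c) (by linarith) one_pos hc
  simpa only [Real.rpow_one, neg_mul] using this

theorem aux_c_pos (t : ℝ) (h0 : 0 < t) (h1 : t < 1) : 0 < (1 - t ^ 2) / (1 + t) ^ 2 := by
  have : 0 < 1 - t ^ 2 := by nlinarith
  positivity

theorem aux_lim (t b : ℝ) (h0 : 0 < t) (h1 : t < 1) (hb : 1 ≤ b) :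
    Tendsto (fun n : ℕ => (n:ℝ) ^ b * ∫ s in (0:ℝ)..1, s ^ (b - 1) * (1 - s) * auxG t n s) atTop
      (𝓝 (∫ u in Set.Ioi (0:ℝ), u ^ (b - 1) * ∫ θ in (0:ℝ)..(2 * Real.pi), Real.exp (-(u * auxP t θ)))) := by
  have hcp := aux_c_pos t h0 h1
  have hpi := Real.pi_pos
  have hmain : Tendsto (fun n : ℕ => ∫ u in Set.Ioi (0:ℝ),
      (Set.Ioc (0:ℝ) n).indicator (fun u => u ^ (b - 1) * ((1 - u / n) * auxG t n (u / n))) u) atTop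
      (𝓝 (∫ u in Set.Ioi (0:ℝ), u ^ (b - 1) * ∫ θ in (0:ℝ)..(2 * Real.pi), Real.exp (-(u * auxP t θ)))) := by
    refine MeasureTheory.tendsto_integral_of_dominated_convergence
      (fun u => (u ^ (b - 1) * Real.exp (-((1 - t ^ 2) / (1 + t) ^ 2 * u))) * (2 * Real.pi)) ?_ ?_ ?_ ?_
    · intro n
      refine Measurable.aestronglyMeasurable (Measurable.indicator ?_ measurableSet_Ioc)
      have := aux_G_meas t n
      fun_prop
    · exact (aux_int b _ hb hcp).mul_const _
    · intro n
      refine (MeasureTheory.ae_restrict_iff' measurableSet_Ioi).2 (Filter.Eventually.of_forall fun u hu => ?_)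
      have hu : 0 < u := hu
      by_cases hun : u ∈ Set.Ioc (0:ℝ) n
      · rw [Set.indicator_of_mem hun]
        have hn : (0:ℝ) < n := hu.trans_le hun.2
        have hs1 : u / n ≤ 1 := (div_le_one hn).2 hun.2
        have hs0 : 0 ≤ u / n := by positivity
        have hG := aux_G_bound t (u / n) h0 h1 hs0 hs1 n
        rw [mul_div_cancel₀ _ hn.ne'] at hG
        rw [norm_mul, norm_mul, Real.norm_eq_abs, Real.norm_eq_abs, Real.norm_eq_abs,
          abs_of_nonneg (by positivity : 0 ≤ u ^ (b - 1)), abs_of_nonneg (by linarith : 0 ≤ 1 - u / n), mul_assoc]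
        refine mul_le_mul_of_nonneg_left ?_ (by positivity)
        calc _ ≤ 1 * |auxG t n (u / n)| := by
              refine mul_le_mul_of_nonneg_right (by linarith) (abs_nonneg _)
          _ ≤ _ := by rw [one_mul]; exact hG
      · rw [Set.indicator_of_notMem hun, norm_zero]; positivity
    · refine (MeasureTheory.ae_restrict_iff' measurableSet_Ioi).2 (Filter.Eventually.of_forall fun u hu => ?_)
      have hu : 0 < u := hu
      have hlim : Tendsto (fun n : ℕ => u / (n:ℝ)) atTop (𝓝 0) := tendsto_const_div_atTop_nhds_zero_nat u
      have h := ((hlim.const_sub 1).mul (aux_G_lim t u h0 h1 hu)).const_mul (u ^ (b - 1))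
      rw [sub_zero, one_mul] at h
      refine h.congr' ?_
      filter_upwards [eventually_ge_atTop ⌈u⌉₊] with n hn
      rw [Set.indicator_of_mem]
      exact ⟨hu, (Nat.le_ceil u).trans (by exact_mod_cast hn)⟩
  refine hmain.congr' ?_
  filter_upwards [eventually_gt_atTop 0] with n hn
  have hn : (0:ℝ) < n := by exact_mod_cast hn
  rw [MeasureTheory.setIntegral_indicator measurableSet_Ioc,
    Set.inter_eq_right.2 (Set.Ioc_subset_Ioi_self), ← intervalIntegral.integral_of_le hn.le]
  have h := intervalIntegral.integral_comp_div (a := 0) (b := (n:ℝ))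
    (fun s => s ^ (b - 1) * (1 - s) * auxG t n s) hn.ne'
  rw [zero_div, div_self hn.ne', smul_eq_mul] at h
  have e : (n:ℝ) ^ b = (n:ℝ) ^ (b - 1) * n := by rw [Real.rpow_sub_one hn.ne']; field_simp
  rw [e, mul_assoc, ← h, ← intervalIntegral.integral_const_mul]
  refine intervalIntegral.integral_congr fun u hu => ?_
  rw [Set.uIcc_of_le hn.le] at hu
  rw [Real.div_rpow hu.1 hn.le]
  have : (n:ℝ) ^ (b - 1) ≠ 0 := by positivity
  field_simp

theorem aux_c_le (t θ : ℝ) (h0 : 0 < t) (h1 : t < 1) : (1 - t ^ 2) / (1 + t) ^ 2 ≤ auxP t θ := by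
  unfold auxP
  refine div_le_div_of_nonneg_left (by nlinarith) (auxP_den_pos t θ h0.le h1) ?_
  nlinarith [mul_nonneg h0.le (by linarith [Real.neg_one_le_cos θ] : 0 ≤ 1 + Real.cos θ)]

theorem aux_fubini (t b : ℝ) (h0 : 0 < t) (h1 : t < 1) (hb : 1 ≤ b) :
    (∫ u in Set.Ioi (0:ℝ), u ^ (b - 1) * ∫ θ in (0:ℝ)..(2 * Real.pi), Real.exp (-(u * auxP t θ))) =
      Real.Gamma b * ∫ θ in (0:ℝ)..(2 * Real.pi), auxP t θ ^ (-b) := by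
  have hP := auxP_cont t h0 h1
  have hpos := fun θ => auxP_pos t θ h0 h1
  have hcp := aux_c_pos t h0 h1
  have hrc := aux_rc b hb
  have h := MeasureTheory.intervalIntegral_integral_swap (a := 0) (b := 2 * Real.pi)
    (μ := MeasureTheory.volume.restrict (Set.Ioi (0:ℝ)))
    (f := fun θ u => u ^ (b - 1) * Real.exp (-(u * auxP t θ))) ?_
  · simp only [intervalIntegral.integral_const_mul] at h
    rw [← h, ← intervalIntegral.integral_const_mul]
    congr 1; ext θ
    have hG := Real.integral_rpow_mul_exp_neg_mul_Ioi (a := b) (r := auxP t θ) (by linarith) (hpos θ)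
    simp only [mul_comm (auxP t θ)] at hG
    rw [hG, one_div, Real.inv_rpow (hpos θ).le, Real.rpow_neg (hpos θ).le, mul_comm]
  · have hbd : MeasureTheory.Integrable (fun p : ℝ × ℝ => (1:ℝ) *
        (p.2 ^ (b - 1) * Real.exp (-((1 - t ^ 2) / (1 + t) ^ 2 * p.2))))
        ((MeasureTheory.volume.restrict (Set.uIoc 0 (2 * Real.pi))).prod
          (MeasureTheory.volume.restrict (Set.Ioi (0:ℝ)))) := by
      refine MeasureTheory.Integrable.mul_prod (f := fun _ : ℝ => (1:ℝ)) ?_ (aux_int b _ hb hcp)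
      exact (intervalIntegrable_iff.1 (continuous_const.intervalIntegrable 0 (2 * Real.pi)))
    refine hbd.mono' ?_ ?_
    · apply Continuous.aestronglyMeasurable
      have : Continuous fun p : ℝ × ℝ => p.2 ^ (b - 1) := hrc.comp continuous_snd
      simp only [Function.uncurry_def]
      fun_prop
    · rw [MeasureTheory.Measure.prod_restrict]
      refine (MeasureTheory.ae_restrict_iff' (measurableSet_uIoc.prod measurableSet_Ioi)).2
        (Filter.Eventually.of_forall fun p hp => ?_)
      have hu : 0 < p.2 := hp.2
      simp only [Function.uncurry_def]
      rw [Real.norm_eq_abs, abs_of_nonneg (by positivity), one_mul]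
      refine mul_le_mul_of_nonneg_left ?_ (by positivity)
      refine Real.exp_le_exp.2 ?_
      nlinarith [mul_le_mul_of_nonneg_right (aux_c_le t p.1 h0 h1) hu.le]

/-- For `t ∈ (0,1)` and `α ≥ 1/2`, for all sufficiently large `n`,
`‖φ_t^n‖_{A²_α}/‖z^n‖_{A²_α} ≥ (1/2)‖(φ_t')^α‖_{H²}`. -/
theorem statement15 (t α : ℝ) (ht : t ∈ Set.Ioo (0:ℝ) 1) (hα : 1/2 ≤ α) :
    ∃ N : ℕ, ∀ n : ℕ, N ≤ n →
      (1/2) * Real.sqrt (hardyNormSq fun z =>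
          (((1 - t ^ 2) ^ α : ℝ) : ℂ) * (1 - (t : ℂ) * z) ^ ((-(2 * α) : ℝ) : ℂ)) ≤
        Real.sqrt (wNormSq (bergBeta α) fun z => mobius (t : ℂ) z ^ n) / bergBeta α n := by

  obtain ⟨h0, h1⟩ := ht
  have hb : 1 ≤ 2 * α := by linarith
  have hpi := Real.pi_pos
  set H := hardyNormSq fun z =>
          (((1 - t ^ 2) ^ α : ℝ) : ℂ) * (1 - (t : ℂ) * z) ^ ((-(2 * α) : ℝ) : ℂ) with hH
  have hh : H * (2 * Real.pi) = _ := aux_hardy t α h0 h1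
  have hineq := aux_ineq t (2 * α) h0 h1 (by linarith)
  have hHpos : 0 < H * (2 * Real.pi) := by
    rw [hh]
    refine intervalIntegral.intervalIntegral_pos_of_pos_on ?_ (fun θ _ => ?_) (by positivity)
    · exact ((auxP_cont t h0 h1).rpow_const fun θ => Or.inl (auxP_pos t θ h0 h1).ne').intervalIntegrable _ _
    · have := auxP_pos t θ h0 h1
      positivity
  have hΓ : 0 < Real.Gamma (2 * α) := Real.Gamma_pos_of_pos (by linarith)
  have hlim := aux_lim t (2 * α) h0 h1 hb
  rw [aux_fubini t (2 * α) h0 h1 hb] at hlim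
  have hlt : Real.Gamma (2 * α) * (H * (2 * Real.pi)) / 4 <
      Real.Gamma (2 * α) * ∫ θ in (0:ℝ)..(2 * Real.pi), auxP t θ ^ (-(2 * α)) := by
    have a1 : 0 < Real.Gamma (2 * α) * (H * (2 * Real.pi)) := mul_pos hΓ hHpos
    have a2 := mul_le_mul_of_nonneg_left (hh.le.trans hineq) hΓ.le
    linarith
  obtain ⟨N, hN⟩ := eventually_atTop.1 ((hlim.eventually_const_lt hlt).and (eventually_gt_atTop 0))
  refine ⟨N, fun n hn => ?_⟩
  obtain ⟨h2, hn0⟩ := hN n hn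
  have hn0 : (0:ℝ) < n := by exact_mod_cast hn0
  rw [← aux_wnorm t α h0 h1 hα n] at h2
  set W := wNormSq (bergBeta α) fun z => mobius (t : ℂ) z ^ n with hW
  have hJ := auxJ_le (2 * α) hb n
  rw [← aux_beta α hα n] at hJ
  have hJ0 := auxJ_pos (2 * α) hb 0
  have hbp := aux_beta_pos α hα n
  have hHp : 0 < H := by
    by_contra hneg
    nlinarith
  have key : H * bergBeta α n ^ 2 / 4 ≤ W := by
    have hK : 0 < (n:ℝ) ^ (2 * α) * auxJ (2 * α) 0 * (2 * Real.pi) := by positivity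
    refine le_of_mul_le_mul_left ?_ hK
    have := mul_le_mul_of_nonneg_right hJ hHpos.le
    nlinarith
  rw [le_div_iff₀ hbp]
  refine Real.le_sqrt_of_sq_le ?_
  rw [mul_pow, mul_pow, Real.sq_sqrt hHp.le]
  linarith
end
end

section
/- Let H²_β be the weighted Hardy space induced by a weight sequence w = (w_k)_{k≥1} with w_k → 1. Suppose there exist a sequence of positive numbers (α_j) tending to infinity and a sequence of positive integers (n_j) tending to infinity such that β_{n_j}/β_k ≥ β^{(α_j)}_k / β^{(α_j)}_{n_j} for every j and every 0 ≤ k ≤ n_j. Then for every t ∈ (0,1), with φ_t(z) = (t − z)/(1 − tz), the ratios ‖φ_t^{n_j}‖²_{H²_{β⁻¹}} / ‖z^{n_j}‖²_{H²_{β⁻¹}} tend to infinity as j → ∞; consequently the composition operator C_{φ_t} is unbounded on H²_{β⁻¹} and unbounded on H²_β. In particular, these conclusions hold whenever lim_{k→∞} (k+1)(w_k − 1) = +∞ or lim_{k→∞} (k+1)(w_k − 1) = −∞. -/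
noncomputable section

open Complex Filter Topology

/-! ### Power series of powers of the Moebius map -/

def geoS (t : ℝ) : PowerSeries ℝ := PowerSeries.mk (fun k => t ^ k)

def FF (t : ℝ) (s n : ℕ) : PowerSeries ℝ :=
  (PowerSeries.C t - PowerSeries.X) ^ n * geoS t ^ (n + s)

def cf (t : ℝ) (s n k : ℕ) : ℝ := PowerSeries.coeff k (FF t s n)

lemma geoS_mul (t : ℝ) : (1 - PowerSeries.C t * PowerSeries.X) * geoS t = 1 := by
  ext k
  rw [sub_mul, one_mul, map_sub, mul_assoc, PowerSeries.coeff_C_mul]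
  cases k with
  | zero => simp [geoS]
  | succ k =>
    rw [PowerSeries.coeff_succ_X_mul]
    simp [geoS, PowerSeries.coeff_one]
    ring

lemma FF_down (t : ℝ) (s n : ℕ) :
    FF t s n = (1 - PowerSeries.C t * PowerSeries.X) * FF t (s+1) n := by
  have h := geoS_mul t
  unfold FF
  calc _ = (PowerSeries.C t - PowerSeries.X) ^ n * geoS t ^ (n + s) * 1 := by ring
    _ = (PowerSeries.C t - PowerSeries.X) ^ n * geoS t ^ (n + s) *
        ((1 - PowerSeries.C t * PowerSeries.X) * geoS t) := by rw [h]
    _ = _ := by ring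

lemma FF_step (t : ℝ) (s n : ℕ) :
    FF t s (n+1) = (PowerSeries.C t - PowerSeries.X) * FF t (s+1) n := by
  unfold FF; ring

lemma cf_down_zero (t : ℝ) (s n : ℕ) : cf t s n 0 = cf t (s+1) n 0 := by
  unfold cf; rw [FF_down]; simp

lemma cf_down_succ (t : ℝ) (s n k : ℕ) :
    cf t s n (k+1) = cf t (s+1) n (k+1) - t * cf t (s+1) n k := by
  unfold cf
  rw [FF_down, sub_mul, one_mul, map_sub, mul_assoc, PowerSeries.coeff_C_mul,
    PowerSeries.coeff_succ_X_mul]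

lemma cf_step_zero (t : ℝ) (s n : ℕ) : cf t s (n+1) 0 = t * cf t (s+1) n 0 := by
  unfold cf; rw [FF_step]; simp

lemma cf_step_succ (t : ℝ) (s n k : ℕ) :
    cf t s (n+1) (k+1) = t * cf t (s+1) n (k+1) - cf t (s+1) n k := by
  unfold cf
  rw [FF_step, sub_mul, map_sub, PowerSeries.coeff_C_mul,
    PowerSeries.coeff_succ_X_mul]

lemma good_geo {t ρ : ℝ} (ht : 0 < t) (h : t < ρ) (f : PowerSeries ℝ)
    (hf : ∃ C, ∀ k, |PowerSeries.coeff k f| ≤ C * ρ ^ k) :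
    ∃ C, ∀ k, |PowerSeries.coeff k (geoS t * f)| ≤ C * ρ ^ k := by
  obtain ⟨C, hC⟩ := hf
  have hρ : 0 < ρ := ht.trans h
  have hC0 : 0 ≤ C := by have := hC 0; simp at this; exact (abs_nonneg _).trans this
  have e : f = (1 - PowerSeries.C t * PowerSeries.X) * (geoS t * f) := by
    rw [← mul_assoc, geoS_mul, one_mul]
  refine ⟨C * ρ / (ρ - t), fun k => ?_⟩
  have hd : 0 < ρ - t := by linarith
  induction k with
  | zero =>
    have h0 : PowerSeries.coeff 0 (geoS t * f) = PowerSeries.coeff 0 f := by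
      conv_rhs => rw [e]
      simp
    rw [h0]
    refine (hC 0).trans ?_
    simp
    rw [le_div_iff₀ hd]
    nlinarith
  | succ k ih =>
    have h1 : PowerSeries.coeff (k+1) (geoS t * f) =
        PowerSeries.coeff (k+1) f + t * PowerSeries.coeff k (geoS t * f) := by
      have := congrArg (PowerSeries.coeff (k+1)) e
      rw [sub_mul, one_mul, map_sub, mul_assoc, PowerSeries.coeff_C_mul,
        PowerSeries.coeff_succ_X_mul] at this
      linarith
    rw [h1]
    calc _ ≤ |PowerSeries.coeff (k+1) f| + |t * PowerSeries.coeff k (geoS t * f)| := abs_add_le _ _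
      _ ≤ C * ρ^(k+1) + t * (C * ρ / (ρ - t) * ρ ^ k) := by
        rw [abs_mul, abs_of_pos ht]
        gcongr
        exact hC _
      _ = _ := by field_simp; ring

lemma good_lin {t ρ : ℝ} (ht : 0 < t) (h : t < ρ) (f : PowerSeries ℝ)
    (hf : ∃ C, ∀ k, |PowerSeries.coeff k f| ≤ C * ρ ^ k) :
    ∃ C, ∀ k, |PowerSeries.coeff k ((PowerSeries.C t - PowerSeries.X) * f)| ≤ C * ρ ^ k := by
  obtain ⟨C, hC⟩ := hf
  have hρ : 0 < ρ := ht.trans h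
  have hC0 : 0 ≤ C := by have := hC 0; simp at this; exact (abs_nonneg _).trans this
  refine ⟨C * t + C / ρ, fun k => ?_⟩
  have hd : 0 ≤ C / ρ := by positivity
  cases k with
  | zero =>
    have := hC 0
    simp [abs_mul, abs_of_pos ht] at this ⊢
    nlinarith
  | succ k =>
    rw [sub_mul, map_sub, PowerSeries.coeff_C_mul, PowerSeries.coeff_succ_X_mul]
    calc _ ≤ |t * PowerSeries.coeff (k+1) f| + |PowerSeries.coeff k f| := abs_sub _ _
      _ ≤ t * (C * ρ^(k+1)) + C * ρ ^ k := by
        rw [abs_mul, abs_of_pos ht]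
        gcongr
        · exact hC _
        · exact hC _
      _ = _ := by field_simp; ring

lemma cf_bound {t ρ : ℝ} (ht : 0 < t) (h : t < ρ) (s n : ℕ) :
    ∃ C, ∀ k, |cf t s n k| ≤ C * ρ ^ k := by
  have hρ : 0 < ρ := ht.trans h
  have key : ∀ m, ∃ C, ∀ k, |PowerSeries.coeff k (geoS t ^ m)| ≤ C * ρ ^ k := by
    intro m
    induction m with
    | zero =>
      refine ⟨1, fun k => ?_⟩
      rw [pow_zero, PowerSeries.coeff_one]
      split_ifs with hk
      · simp [hk]
      · simp; positivity
    | succ m ih => rw [pow_succ']; exact good_geo ht h _ ih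
  have key2 : ∀ j m, ∃ C, ∀ k,
      |PowerSeries.coeff k ((PowerSeries.C t - PowerSeries.X)^j * geoS t ^ m)| ≤ C * ρ ^ k := by
    intro j m
    induction j with
    | zero => simpa using key m
    | succ j ih => rw [pow_succ', mul_assoc]; exact good_lin ht h _ ih
  exact key2 n (n+s)

lemma cf_summable {t : ℝ} (ht : t ∈ Set.Ioo (0:ℝ) 1) (s n d : ℕ) :
    Summable (fun k : ℕ => (k.choose d : ℝ) * cf t s n k ^ 2) := by
  obtain ⟨ρ, h1, h2⟩ := exists_between ht.2
  have hρ : 0 < ρ := ht.1.trans h1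
  obtain ⟨C, hC⟩ := cf_bound ht.1 h1 s n
  have hs := (summable_pow_mul_geometric_of_norm_lt_one (R := ℝ) d (r := ρ^2) (by
    rw [Real.norm_of_nonneg (by positivity)]; nlinarith)).mul_left (C^2)
  refine Summable.of_nonneg_of_le (fun k => by positivity) (fun k => ?_) hs
  have a1 : (k.choose d : ℝ) ≤ (k:ℝ)^d := by exact_mod_cast Nat.choose_le_pow k d
  have a2 : cf t s n k ^ 2 ≤ (C * ρ^k)^2 := by
    rw [← sq_abs]; gcongr; exact hC k
  calc _ ≤ (k:ℝ)^d * (C * ρ^k)^2 := by gcongr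
    _ = _ := by ring

def MM (t : ℝ) (s n d : ℕ) : ℝ := ∑' k : ℕ, (k.choose d : ℝ) * cf t s n k ^ 2

lemma cf_diff_zero (t : ℝ) (s n : ℕ) :
    cf t s (n+1) 0 ^ 2 - cf t s n 0 ^ 2 = - (1 - t^2) * cf t (s+1) n 0 ^ 2 := by
  rw [cf_step_zero, cf_down_zero t s n]; ring

lemma cf_diff_succ (t : ℝ) (s n k : ℕ) :
    cf t s (n+1) (k+1) ^ 2 - cf t s n (k+1) ^ 2 =
      (1 - t^2) * (cf t (s+1) n k ^ 2 - cf t (s+1) n (k+1) ^ 2) := by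
  rw [cf_step_succ, cf_down_succ t s n k]; ring

lemma MM_nonneg (t : ℝ) (s n d : ℕ) : 0 ≤ MM t s n d :=
  tsum_nonneg fun k => by positivity

lemma MM_zero {t : ℝ} (ht : t ∈ Set.Ioo (0:ℝ) 1) (s n : ℕ) :
    MM t s (n+1) 0 = MM t s n 0 := by
  have h1 := cf_summable ht s (n+1) 0
  have h2 := cf_summable ht s n 0
  have h3 := cf_summable ht (s+1) n 0
  rw [← sub_eq_zero]
  unfold MM
  rw [← h1.tsum_sub h2, (h1.sub h2).tsum_eq_zero_add]
  have : ∀ k : ℕ, (((k+1).choose 0 : ℕ) : ℝ) * cf t s (n+1) (k+1) ^ 2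
      - (((k+1).choose 0 : ℕ) : ℝ) * cf t s n (k+1) ^ 2 =
      (1 - t^2) * (((k.choose 0 : ℕ) : ℝ) * cf t (s+1) n k ^ 2
        - (((k+1).choose 0 : ℕ) : ℝ) * cf t (s+1) n (k+1) ^ 2) := by
    intro k
    simp only [Nat.choose_zero_right, Nat.cast_one, one_mul]
    exact cf_diff_succ t s n k
  simp_rw [this]
  have h4 := (summable_nat_add_iff 1).2 h3
  rw [tsum_mul_left, h3.tsum_sub h4, h3.tsum_eq_zero_add]
  have := cf_diff_zero t s n
  simp only [Nat.choose_zero_right, Nat.cast_one, one_mul] at *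
  linarith

lemma MM_succ {t : ℝ} (ht : t ∈ Set.Ioo (0:ℝ) 1) (s n d : ℕ) :
    MM t s (n+1) (d+1) = MM t s n (d+1) + (1 - t^2) * MM t (s+1) n d := by
  have h1 := cf_summable ht s (n+1) (d+1)
  have h2 := cf_summable ht s n (d+1)
  have h3 := cf_summable ht (s+1) n (d+1)
  have h5 := cf_summable ht (s+1) n d
  rw [← sub_eq_iff_eq_add']
  unfold MM
  rw [← h1.tsum_sub h2, (h1.sub h2).tsum_eq_zero_add]
  have : ∀ k : ℕ, (((k+1).choose (d+1) : ℕ) : ℝ) * cf t s (n+1) (k+1) ^ 2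
      - (((k+1).choose (d+1) : ℕ) : ℝ) * cf t s n (k+1) ^ 2 =
      (1 - t^2) * (((k.choose d : ℕ) : ℝ) * cf t (s+1) n k ^ 2
        + (((k.choose (d+1) : ℕ) : ℝ) * cf t (s+1) n k ^ 2
        - (((k+1).choose (d+1) : ℕ) : ℝ) * cf t (s+1) n (k+1) ^ 2)) := by
    intro k
    rw [← mul_sub, cf_diff_succ t s n k, Nat.choose_succ_succ]
    push_cast
    ring
  simp_rw [this]
  have h4 := (summable_nat_add_iff 1).2 h3
  rw [tsum_mul_left, h5.tsum_add (h3.sub h4), h3.tsum_sub h4, h3.tsum_eq_zero_add]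
  simp

lemma MM_zero' {t : ℝ} (ht : t ∈ Set.Ioo (0:ℝ) 1) (s n : ℕ) :
    MM t s n 0 = MM t s 0 0 := by
  induction n with
  | zero => rfl
  | succ n ih => rw [MM_zero ht, ih]

lemma MM_bound {t : ℝ} (ht : t ∈ Set.Ioo (0:ℝ) 1) (d : ℕ) : ∀ s, ∃ C, 0 ≤ C ∧ ∀ n : ℕ,
    MM t s n d ≤ C * ((n:ℝ)+1)^d := by
  have h1 : 0 < 1 - t^2 := by nlinarith [ht.1, ht.2]
  induction d with
  | zero =>
    intro s
    exact ⟨MM t s 0 0, MM_nonneg _ _ _ _, fun n => by simp [MM_zero' ht s n]⟩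
  | succ d ih =>
    intro s
    obtain ⟨C, hC, h⟩ := ih (s+1)
    refine ⟨MM t s 0 (d+1) + (1-t^2) * C, by have := MM_nonneg t s 0 (d+1); positivity, ?_⟩
    set A := MM t s 0 (d+1) with hA
    have hA0 : 0 ≤ A := MM_nonneg _ _ _ _
    intro n
    have key : MM t s n (d+1) ≤ A + (1-t^2) * C * n * ((n:ℝ)+1)^d := by
      induction n with
      | zero => simp [hA]
      | succ n ihn =>
        rw [MM_succ ht]
        have := h n
        have e : ((n:ℝ)+1)^d ≤ ((n:ℝ)+1+1)^d := by gcongr; linarith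
        have hc : 0 ≤ (1-t^2) * C := by positivity
        push_cast
        calc _ ≤ A + (1-t^2) * C * n * ((n:ℝ)+1)^d + (1-t^2) * (C * ((n:ℝ)+1)^d) := by gcongr
          _ = A + (1-t^2) * C * (n+1) * ((n:ℝ)+1)^d := by ring
          _ ≤ _ := by gcongr
    refine key.trans ?_
    have e1 : 1 ≤ ((n:ℝ)+1)^(d+1) := one_le_pow₀ (by linarith [(Nat.cast_nonneg n : (0:ℝ) ≤ n)])
    have e2 : (n:ℝ) * ((n:ℝ)+1)^d ≤ ((n:ℝ)+1)^(d+1) := by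
      rw [pow_succ']; gcongr; linarith
    have hc : 0 ≤ (1-t^2) * C := by positivity
    nlinarith

lemma cf_one_zero (t : ℝ) (k : ℕ) : cf t 1 0 k = t ^ k := by
  simp [cf, FF, geoS]

lemma cf_two_zero (t : ℝ) (k : ℕ) : cf t 2 0 k = (k + 1) * t ^ k := by
  induction k with
  | zero => rw [← cf_down_zero, cf_one_zero]; simp
  | succ k ih =>
    have := cf_down_succ t 1 0 k
    rw [cf_one_zero, ih] at this
    push_cast
    have h : cf t 2 0 (k+1) = t^(k+1) + t * ((k+1) * t^k) := by linarith
    rw [h]; ring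

lemma cf_zero_zero (t : ℝ) (k : ℕ) : cf t 0 0 k = if k = 0 then 1 else 0 := by
  simp [cf, FF, PowerSeries.coeff_one]

lemma MM000 (t : ℝ) : MM t 0 0 0 = 1 := by
  unfold MM
  rw [tsum_eq_single 0]
  · simp [cf_zero_zero]
  · intro k hk; simp [cf_zero_zero, hk]

lemma MM001 (t : ℝ) : MM t 0 0 1 = 0 := by
  unfold MM
  rw [tsum_eq_single 0]
  · simp
  · intro k hk; simp [cf_zero_zero, hk]

lemma MM100 {t : ℝ} (ht : t ∈ Set.Ioo (0:ℝ) 1) : (1 - t^2) * MM t 1 0 0 = 1 := by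
  have h1 : 0 < 1 - t^2 := by nlinarith [ht.1, ht.2]
  have h2 : t^2 < 1 := by linarith
  have : MM t 1 0 0 = ∑' k : ℕ, (t^2)^k := by
    unfold MM
    congr 1; ext k; rw [cf_one_zero]; simp; ring
  rw [this, tsum_geometric_of_lt_one (by positivity) h2]
  field_simp

lemma MM200 {t : ℝ} (ht : t ∈ Set.Ioo (0:ℝ) 1) :
    (1 - t^2)^2 * MM t 2 0 0 = (1 + t^2) / (1 - t^2) := by
  have h1 : 0 < 1 - t^2 := by nlinarith [ht.1, ht.2]
  have h2 : ‖t^2‖ < 1 := by rw [Real.norm_of_nonneg (by positivity)]; linarith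
  have a := (hasSum_choose_mul_geometric_of_norm_lt_one 2 h2).mul_left 2
  have b := hasSum_choose_mul_geometric_of_norm_lt_one 1 h2
  have : MM t 2 0 0 = 2 * (1 / (1 - t ^ 2) ^ (2 + 1)) - 1 / (1 - t ^ 2) ^ (1 + 1) := by
    unfold MM
    refine HasSum.tsum_eq ?_
    convert! a.sub b using 1
    ext k
    rw [cf_two_zero]
    have e : (((k+2).choose 2 : ℕ) : ℝ) = (k+2) * (k+1) / 2 := by
      rw [Nat.cast_choose_two]; push_cast; ring
    rw [e]
    simp
    ring
  rw [this]
  field_simp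
  ring

lemma MM_one {t : ℝ} (ht : t ∈ Set.Ioo (0:ℝ) 1) (n : ℕ) : MM t 0 n 1 = n := by
  induction n with
  | zero => simp [MM001]
  | succ n ih => rw [MM_succ ht, ih, MM_zero' ht, MM100 ht]; push_cast; rfl

lemma MM_two {t : ℝ} (ht : t ∈ Set.Ioo (0:ℝ) 1) (n : ℕ) :
    (1 + t^2) / (1 - t^2) * (n * (n - 1) / 2) ≤ MM t 0 n 2 := by
  have h1 : 0 < 1 - t^2 := by nlinarith [ht.1, ht.2]
  have key : ∀ n : ℕ, (1 + t^2) / (1 - t^2) * n ≤ (1-t^2) * MM t 1 n 1 := by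
    intro n
    induction n with
    | zero => simp; have := MM_nonneg t 1 0 1; positivity
    | succ n ih =>
      rw [MM_succ ht, MM_zero' ht]
      have := MM200 ht
      push_cast
      nlinarith
  induction n with
  | zero => simpa using MM_nonneg t 0 0 2
  | succ n ih =>
    rw [MM_succ ht]
    have := key n
    push_cast
    nlinarith

lemma deficit {t : ℝ} (ht : t ∈ Set.Ioo (0:ℝ) 1) : ∃ ε > 0, ∀ n : ℕ, 3 ≤ n →
    ε * n ≤ ∑ k ∈ Finset.range (n+1), ((n:ℝ) - k) * cf t 0 n k ^ 2 := by
  have h1 : 0 < 1 - t^2 := by nlinarith [ht.1, ht.2]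
  obtain ⟨C, hC, hb⟩ := MM_bound ht 3 0
  set κ := (1 + t^2) / (1 - t^2) with hκ
  have hκ1 : 1 < κ := by
    rw [hκ, lt_div_iff₀ h1]; nlinarith [ht.1]
  set s := (κ - 1) / (96 * C + κ) with hs
  have hden : 0 < 96 * C + κ := by positivity
  have hs0 : 0 < s := div_pos (by linarith) hden
  have hs1 : s ≤ 1 := by rw [hs, div_le_one hden]; linarith
  have hsC : 96 * C * s ≤ κ - 1 := by
    have : s * (96 * C + κ) = κ - 1 := by rw [hs]; field_simp
    nlinarith
  refine ⟨s * (κ-1) / 2, by have : 0 < κ - 1 := by linarith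
                            positivity, fun n hn => ?_⟩
  have hnR : (3:ℝ) ≤ n := by exact_mod_cast hn
  have s0 := (cf_summable ht 0 n 0).hasSum
  have s1 := (cf_summable ht 0 n 1).hasSum
  have s2 := (cf_summable ht 0 n 2).hasSum
  have s3 := (cf_summable ht 0 n 3).hasSum
  change HasSum _ (MM t 0 n 0) at s0
  change HasSum _ (MM t 0 n 1) at s1
  change HasSum _ (MM t 0 n 2) at s2
  change HasSum _ (MM t 0 n 3) at s3
  rw [MM_zero' ht, MM000] at s0
  rw [MM_one ht] at s1
  have S := (((s0.mul_left ((n:ℝ)^3)).add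
    (s1.mul_left (-(n:ℝ)^2 - 2*s*n^2 + 2*s*n + s^2*n - s^2))).add
    (s2.mul_left (2*(2*s*n+s^2*n) - 6*s^2))).add (s3.mul_left (-6*s^2))
  have G : HasSum (fun k : ℕ => if k ∈ Finset.range (n+1) then
      (n:ℝ)^2 * (((n:ℝ) - k) * cf t 0 n k ^ 2) else 0)
      (∑ k ∈ Finset.range (n+1), (n:ℝ)^2 * (((n:ℝ) - k) * cf t 0 n k ^ 2)) := by
    have := hasSum_sum_of_ne_finset_zero (s := Finset.range (n+1)) (f := fun k : ℕ =>
      if k ∈ Finset.range (n+1) then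
      (n:ℝ)^2 * (((n:ℝ) - k) * cf t 0 n k ^ 2) else 0) (L := .unconditional ℕ) (fun b hb => by simp only [if_neg hb])
    convert! this using 1
    exact Finset.sum_congr rfl fun k hk => by simp only [if_pos hk]
  have le := hasSum_le (fun k => ?_) S G
  · rw [← Finset.mul_sum] at le
    have m2 := MM_two ht n
    have m3 := hb n
    rw [← hκ] at m2
    set T := ∑ k ∈ Finset.range (n+1), ((n:ℝ) - k) * cf t 0 n k ^ 2
    set N := (n:ℝ)
    have M20 := MM_nonneg t 0 n 2
    have A : (4*s*N) * (κ * (N * (N-1)/2)) ≤ (2*(2*s*N+s^2*N) - 6*s^2) * MM t 0 n 2 := by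
      have : (4*s*N) * (κ * (N * (N-1)/2)) ≤ (4*s*N) * MM t 0 n 2 := by gcongr
      have : 0 ≤ (s^2 * (2 * N - 6)) * MM t 0 n 2 := by
        have : 0 ≤ 2 * N - 6 := by linarith
        positivity
      nlinarith
    have B : s^2 * MM t 0 n 3 ≤ s^2 * (C * (2*N)^3) := by
      have : C * (N+1)^3 ≤ C * (2*N)^3 := by gcongr; linarith
      have := m3.trans this
      gcongr
    have D : s * (96 * C * s) * N^3 ≤ s * (κ - 1) * N^3 := by gcongr
    have E : s * (κ-1) * N^2 * N ≤ s * (κ-1) * N^2 * (2*(N-1)) := by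
      have : 0 < κ - 1 := by linarith
      gcongr; linarith
    have F : 0 ≤ s^2 * (N * (N - 1)) := by
      have : 0 ≤ N - 1 := by linarith
      positivity
    have : N^2 * (s * (κ-1)/2 * N) ≤ N^2 * T := by nlinarith
    exact le_of_mul_le_mul_left this (by positivity)
  · have e2 : ((k.choose 2 : ℕ) : ℝ) = k * (k-1) / 2 := Nat.cast_choose_two ℝ k
    have e3 : ((k.choose 3 : ℕ) : ℝ) = k * (k-1) * (k-2) / 6 := by
      have := Nat.cast_choose_eq_descPochhammer_div ℝ k 3
      rw [this]
      simp [descPochhammer_succ_right, Nat.factorial]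
    simp only [e2, e3, Nat.choose_zero_right, Nat.choose_one_right, Nat.cast_one]
    have id : (n:ℝ)^3 * (1 * cf t 0 n k ^ 2) +
        (-(n:ℝ)^2 - 2*s*n^2 + 2*s*n + s^2*n - s^2) * (k * cf t 0 n k ^ 2) +
        (2*(2*s*n+s^2*n) - 6*s^2) * ((k * (k-1)/2 : ℝ) * cf t 0 n k ^ 2) +
        (-6*s^2) * ((k * (k-1) * (k-2)/6 : ℝ) * cf t 0 n k ^ 2)
        = ((n:ℝ) - k) * (n - s * k)^2 * cf t 0 n k ^ 2 := by ring
    refine id.le.trans ?_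
    split_ifs with hk
    · have hk' : (k:ℝ) ≤ n := by
        have := Finset.mem_range.1 hk
        exact_mod_cast Nat.lt_succ_iff.1 this
      have q0 : 0 ≤ (n:ℝ) - k := by linarith
      have q1 : (n - s * k)^2 ≤ (n:ℝ)^2 := by
        have : (k:ℝ) * s ≤ k * 1 := by gcongr
        have : 0 ≤ s * k := by positivity
        apply sq_le_sq' <;> nlinarith
      calc _ ≤ ((n:ℝ) - k) * n^2 * cf t 0 n k ^ 2 := by gcongr
        _ = _ := by ring
    · have hk' : (n:ℝ) ≤ k := by
        have : ¬ k < n + 1 := fun h => hk (Finset.mem_range.2 h)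
        exact_mod_cast (by omega : n ≤ k)
      have q0 : 0 ≤ (k:ℝ) - n := by linarith
      have : 0 ≤ ((k:ℝ) - n) * (n - s * k)^2 * cf t 0 n k ^ 2 := by positivity
      nlinarith

lemma cf_hasSum {t : ℝ} (ht : t ∈ Set.Ioo (0:ℝ) 1) {z : ℂ} (hz : z ∈ unitDisk) (n : ℕ) :
    HasSum (fun k => (cf t 0 n k : ℂ) * z ^ k) (mobius (t:ℂ) z ^ n) := by
  have hz1 : ‖z‖ < 1 := by simpa [unitDisk] using hz
  have hne : (1 - (t:ℂ) * z) ≠ 0 := by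
    intro h
    have h2 : (t:ℂ) * z = 1 := by linear_combination -h
    have h3 : t * ‖z‖ = 1 := by
      have := congrArg norm h2
      simpa [abs_of_pos ht.1] using this
    nlinarith [ht.1, ht.2, norm_nonneg z]
  obtain ⟨ρ, h1, h2⟩ := exists_between ht.2
  have hρ : 0 < ρ := ht.1.trans h1
  have main : ∀ n, ∃ A : ℂ, HasSum (fun k => (cf t 0 n k : ℂ) * z ^ k) ((1 - t * z) * A) ∧
      HasSum (fun k => (cf t 0 (n+1) k : ℂ) * z ^ k) ((t - z) * A) := by
    intro n
    obtain ⟨C, hC⟩ := cf_bound ht.1 h1 1 n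
    have hs : Summable (fun k => (cf t 1 n k : ℂ) * z ^ k) := by
      refine Summable.of_norm_bounded
        ((summable_geometric_of_lt_one hρ.le h2).mul_left C) (fun k => ?_)
      rw [norm_mul, norm_pow, Complex.norm_real, Real.norm_eq_abs]
      calc _ ≤ |cf t 1 n k| * 1 := by gcongr; exact pow_le_one₀ (norm_nonneg _) hz1.le
        _ ≤ _ := by rw [mul_one]; exact hC k
    obtain ⟨A, hA⟩ := hs
    have hA1 := (hasSum_nat_add_iff' (f := fun k => (cf t 1 n k : ℂ) * z ^ k) 1).2 hA
    refine ⟨A, ?_, ?_⟩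
    · have e := hA1.sub (hA.mul_left (t * z))
      have e2 : HasSum (fun k => (cf t 0 n (k+1) : ℂ) * z ^ (k+1))
          (A - ∑ i ∈ Finset.range 1, (cf t 1 n i : ℂ) * z ^ i - t * z * A) := by
        convert! e using 1
        ext k
        rw [cf_down_succ]; push_cast; ring
      have e3 := (hasSum_nat_add_iff (f := fun k => (cf t 0 n k : ℂ) * z ^ k) 1).1 e2
      convert! e3 using 1
      simp [cf_down_zero t 0 n]; ring
    · have e := (hA1.mul_left (t:ℂ)).sub (hA.mul_left z)
      have e2 : HasSum (fun k => (cf t 0 (n+1) (k+1) : ℂ) * z ^ (k+1))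
          (t * (A - ∑ i ∈ Finset.range 1, (cf t 1 n i : ℂ) * z ^ i) - z * A) := by
        convert! e using 1
        ext k
        rw [cf_step_succ]; push_cast; ring
      have e3 := (hasSum_nat_add_iff (f := fun k => (cf t 0 (n+1) k : ℂ) * z ^ k) 1).1 e2
      convert! e3 using 1
      simp [cf_step_zero t 0 n]; ring
  induction n with
  | zero =>
    have := hasSum_single (f := fun k => (cf t 0 0 k : ℂ) * z ^ k) 0 (fun k hk => by
      simp [cf_zero_zero, hk])
    simpa [cf_zero_zero] using this
  | succ n ih =>
    obtain ⟨A, hA, hB⟩ := main n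
    have := hA.unique ih
    have e : mobius (t:ℂ) z ^ (n+1) = (t - z) * A := by
      rw [pow_succ, ← this]
      unfold mobius
      rw [Complex.conj_ofReal]
      field_simp
    rw [e]; exact hB

lemma taylor_unique {g : ℂ → ℂ} {a : ℕ → ℂ}
    (h : ∀ z ∈ unitDisk, HasSum (fun k => a k * z ^ k) (g z)) (k : ℕ) :
    taylorCoef g k = a k := by
  have hp : HasFPowerSeriesOnBall g (FormalMultilinearSeries.ofScalars ℂ a) 0
      ((1/2 : NNReal) : ENNReal) := by
    refine ⟨?_, by simp, ?_⟩
    · have hs := (h (1/2) (by simp [unitDisk]; norm_num)).summable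
      apply FormalMultilinearSeries.le_radius_of_summable_norm
      have := hs.norm
      convert! this using 1
      ext k
      rw [FormalMultilinearSeries.ofScalars_norm, norm_mul, norm_pow]
      simp
    · intro y hy
      have hy' : y ∈ unitDisk := by
        have h1 : y ∈ Metric.ball (0:ℂ) (1/2 : NNReal) := by
          rw [← Metric.eball_coe]; exact hy
        simp only [unitDisk, Metric.mem_ball, dist_zero_right] at h1 ⊢
        refine h1.trans ?_
        norm_num
      simpa [FormalMultilinearSeries.ofScalars_apply_eq, mul_comm] using h y hy'
  have e := hp.factorial_smul 1 k
  rw [← iteratedDeriv_eq_iteratedFDeriv, FormalMultilinearSeries.ofScalars_apply_eq] at e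
  unfold taylorCoef
  rw [← e]
  have : (Nat.factorial k : ℂ) ≠ 0 := by exact_mod_cast Nat.factorial_ne_zero k
  simp
  field_simp

lemma betaSeq_zero (w : ℕ → ℝ) : betaSeq w 0 = 1 := by simp [betaSeq]

lemma betaSeq_succ (w : ℕ → ℝ) (k : ℕ) : betaSeq w (k+1) = betaSeq w k * w (k+1) := by
  unfold betaSeq; rw [Finset.prod_Icc_succ_top (by omega)]

lemma betaSeq_pos {w : ℕ → ℝ} (hpos : ∀ k, 1 ≤ k → 0 < w k) (k : ℕ) : 0 < betaSeq w k :=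
  Finset.prod_pos fun i hi => hpos i (Finset.mem_Icc.1 hi).1

lemma betaSeq_inv (w : ℕ → ℝ) (k : ℕ) : betaSeq (fun k => (w k)⁻¹) k = (betaSeq w k)⁻¹ := by
  simp [betaSeq]

lemma summable_beta {w : ℕ → ℝ} (hpos : ∀ k, 1 ≤ k → 0 < w k)
    (hlim : Tendsto w atTop (nhds 1)) {r : ℝ} (hr : 0 < r) (hr1 : r < 1) :
    Summable (fun k => betaSeq w k * r ^ k) := by
  refine summable_of_ratio_test_tendsto_lt_one hr1
    (Eventually.of_forall fun k => (mul_pos (betaSeq_pos hpos k) (pow_pos hr k)).ne') ?_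
  have : (fun k => ‖betaSeq w (k+1) * r ^ (k+1)‖ / ‖betaSeq w k * r ^ k‖) =
      fun k => w (k+1) * r := by
    ext k
    have h1 := betaSeq_pos hpos k
    have h2 := betaSeq_pos hpos (k+1)
    rw [Real.norm_of_nonneg (by positivity), Real.norm_of_nonneg (by positivity), betaSeq_succ]
    field_simp
    ring
  rw [this]
  simpa using ((tendsto_add_atTop_iff_nat 1).2 hlim).mul_const r

lemma summable_R {w : ℕ → ℝ} (hpos : ∀ k, 1 ≤ k → 0 < w k)
    (hlim : Tendsto w atTop (nhds 1)) {t : ℝ} (ht : t ∈ Set.Ioo (0:ℝ) 1) (n : ℕ) :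
    Summable (fun k => cf t 0 n k ^ 2 * (betaSeq w n / betaSeq w k) ^ 2) := by
  obtain ⟨ρ, h1, h2⟩ := exists_between ht.2
  have hρ : 0 < ρ := ht.1.trans h1
  obtain ⟨C, hC⟩ := cf_bound ht.1 h1 0 n
  have hl : Tendsto (fun k => ((w k)⁻¹)^2) atTop (nhds 1) := by
    simpa using (hlim.inv₀ one_ne_zero).pow 2
  have hs := (summable_beta (w := fun k => ((w k)⁻¹)^2)
    (fun k hk => by have := hpos k hk; positivity) hl (r := ρ^2) (by positivity)
    (by nlinarith)).mul_left (C^2 * betaSeq w n ^ 2)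
  refine Summable.of_nonneg_of_le (fun k => by positivity) (fun k => ?_) hs
  have a2 : cf t 0 n k ^ 2 ≤ (C * ρ^k)^2 := by
    rw [← sq_abs]; gcongr; exact hC k
  have e : betaSeq (fun k => ((w k)⁻¹)^2) k = ((betaSeq w k)⁻¹)^2 := by
    rw [← betaSeq_inv]; simp [betaSeq, Finset.prod_pow]
  rw [e]
  calc _ ≤ (C * ρ^k)^2 * (betaSeq w n / betaSeq w k) ^ 2 := by gcongr
    _ = _ := by ring

lemma rep_coef {w : ℕ → ℝ} (hpos : ∀ k, 1 ≤ k → 0 < w k)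
    (hlim : Tendsto w atTop (nhds 1)) {t : ℝ} (ht : t ∈ Set.Ioo (0:ℝ) 1)
    {T : H2 →L[ℂ] H2} (hT : RepComp (betaSeq w) (mobius (t:ℂ)) T) (n k : ℕ) :
    (T (lp.single 2 n (1:ℂ))) k = ((cf t 0 n k * (betaSeq w k / betaSeq w n) : ℝ) : ℂ) := by
  set g : ℂ → ℂ := fun z => mobius (t:ℂ) z ^ n / (betaSeq w n : ℂ) with hg
  have hb : ∀ k, (betaSeq w k : ℂ) ≠ 0 := fun k => by
    exact_mod_cast (betaSeq_pos hpos k).ne'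
  have A : ∀ z ∈ unitDisk, HasSum (fun k => ((cf t 0 n k : ℂ) / (betaSeq w n : ℂ)) * z ^ k) (g z) := by
    intro z hz
    have := (cf_hasSum ht hz n).div_const (betaSeq w n : ℂ)
    convert! this using 1
    ext k; ring
  set a := T (lp.single 2 n (1:ℂ)) with ha
  have B : ∀ z ∈ unitDisk, HasSum (fun k => (a k / (betaSeq w k : ℂ)) * z ^ k) (g z) := by
    intro z hz
    have hz1 : ‖z‖ < 1 := by simpa [unitDisk] using hz
    obtain ⟨r, hr1, hr2⟩ := exists_between hz1
    have hr0 : 0 < r := (norm_nonneg z).trans_lt hr1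
    have hl : Tendsto (fun k => ((w k)⁻¹)) atTop (nhds 1) := by
      simpa using (hlim.inv₀ one_ne_zero)
    have hs := (summable_beta (w := fun k => (w k)⁻¹)
      (fun k hk => by have := hpos k hk; positivity) hl hr0 hr2).mul_left ‖a‖
    have hs2 : Summable (fun k => (a k / (betaSeq w k : ℂ)) * z ^ k) := by
      refine Summable.of_norm_bounded hs (fun k => ?_)
      have hp := betaSeq_pos hpos k
      rw [norm_mul, norm_div, norm_pow, Complex.norm_real, Real.norm_of_nonneg hp.le,
        betaSeq_inv, ← mul_assoc, ← div_eq_mul_inv]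
      gcongr
      exact lp.norm_apply_le_norm two_ne_zero a k
    have e := hT (lp.single 2 n (1:ℂ)) z hz
    have e2 : repFun (betaSeq w) (lp.single 2 n (1:ℂ)) (mobius (t:ℂ) z) = g z := by
      unfold repFun
      rw [tsum_eq_single n]
      · rw [lp.single_apply_self]; simp [hg]; ring
      · intro k hk
        rw [lp.single_apply_ne _ _ _ hk]; simp
    rw [e2] at e
    rw [← e]
    exact hs2.hasSum
  have := (taylor_unique A k).symm.trans (taylor_unique B k)
  have h1 := hb k
  have h2 := hb n
  push_cast
  field_simp at this ⊢
  rw [this]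

lemma lp_sq (a : H2) : HasSum (fun k => ‖a k‖ ^ 2) (‖a‖ ^ 2) := by
  have := lp.hasSum_norm (p := 2) (by simp) a
  simpa using this

lemma norm_e (n : ℕ) : ‖(lp.single 2 n (1:ℂ) : H2)‖ = 1 := by
  rw [lp.norm_single (by simp)]; simp

lemma bound1 {w : ℕ → ℝ} (hpos : ∀ k, 1 ≤ k → 0 < w k)
    (hlim : Tendsto w atTop (nhds 1)) {t : ℝ} (ht : t ∈ Set.Ioo (0:ℝ) 1)
    {T : H2 →L[ℂ] H2} (hT : RepComp (fun k => (betaSeq w k)⁻¹) (mobius (t:ℂ)) T) (n : ℕ) :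
    ∑' k, cf t 0 n k ^ 2 * (betaSeq w n / betaSeq w k) ^ 2 ≤ ‖T‖ ^ 2 := by
  have hl : Tendsto (fun k => ((w k)⁻¹)) atTop (nhds 1) := by
    simpa using (hlim.inv₀ one_ne_zero)
  have hT' : RepComp (betaSeq (fun k => (w k)⁻¹)) (mobius (t:ℂ)) T := by
    convert! hT using 1
    ext k; exact betaSeq_inv w k
  have hc := rep_coef (fun k hk => by have := hpos k hk; positivity) hl ht hT' n
  have hs := lp_sq (T (lp.single 2 n (1:ℂ)))
  have : (fun k => cf t 0 n k ^ 2 * (betaSeq w n / betaSeq w k) ^ 2) =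
      fun k => ‖(T (lp.single 2 n (1:ℂ))) k‖ ^ 2 := by
    ext k
    rw [hc, Complex.norm_real, Real.norm_eq_abs, sq_abs, betaSeq_inv, betaSeq_inv, mul_pow]
    congr 2
    rw [div_inv_eq_mul, div_eq_mul_inv, mul_comm]
  rw [this, hs.tsum_eq]
  have := T.le_opNorm (lp.single 2 n (1:ℂ))
  rw [norm_e, mul_one] at this
  gcongr

lemma bound2a {w : ℕ → ℝ} (hpos : ∀ k, 1 ≤ k → 0 < w k)
    (hlim : Tendsto w atTop (nhds 1)) {t : ℝ} (ht : t ∈ Set.Ioo (0:ℝ) 1)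
    {T : H2 →L[ℂ] H2} (hT : RepComp (betaSeq w) (mobius (t:ℂ)) T) (n : ℕ) :
    ∃ S, S ≤ ‖T‖ ^ 2 ∧ HasSum (fun k => cf t 0 k n ^ 2 * (betaSeq w n / betaSeq w k) ^ 2) S := by
  set b : H2 := ContinuousLinearMap.adjoint T (lp.single 2 n (1:ℂ)) with hb
  refine ⟨‖b‖^2, ?_, ?_⟩
  · have := (ContinuousLinearMap.adjoint T).le_opNorm (lp.single 2 n (1:ℂ))
    rw [norm_e, mul_one, LinearIsometryEquiv.norm_map] at this
    gcongr
  · convert! lp_sq b using 1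
    ext k
    have h1 := ContinuousLinearMap.adjoint_inner_left T (lp.single 2 k (1:ℂ)) (lp.single 2 n (1:ℂ))
    rw [lp.inner_single_left, rep_coef hpos hlim ht hT, lp.inner_single_right, ← hb] at h1
    have h2 := congrArg norm h1
    have h3 : ‖b k‖ = |cf t 0 k n * (betaSeq w n / betaSeq w k)| := by
      simpa [abs_div] using h2
    rw [h3, sq_abs, mul_pow]

lemma cf_rec (t : ℝ) (k n : ℕ) :
    cf t 0 (k+1) (n+1) - t * cf t 0 (k+1) n = t * cf t 0 k (n+1) - cf t 0 k n := by
  have e : (1 - PowerSeries.C t * PowerSeries.X) * FF t 0 (k+1) =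
      (PowerSeries.C t - PowerSeries.X) * FF t 0 k := by
    rw [FF_step, FF_down t 0 k]; ring
  have := congrArg (PowerSeries.coeff (n+1)) e
  rw [sub_mul, sub_mul, one_mul, map_sub, map_sub, mul_assoc, PowerSeries.coeff_C_mul,
    PowerSeries.coeff_C_mul, PowerSeries.coeff_succ_X_mul, PowerSeries.coeff_succ_X_mul] at this
  exact this

lemma cf_k_zero (t : ℝ) (k : ℕ) : cf t 0 (k+1) 0 = t * cf t 0 k 0 := by
  rw [cf_step_zero, ← cf_down_zero]

lemma cf_k_zero' (t : ℝ) (k : ℕ) : cf t 0 k 0 = t ^ k := by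
  induction k with
  | zero => simp [cf_zero_zero]
  | succ k ih => rw [cf_k_zero, ih]; ring

lemma cf_k_one (t : ℝ) (k : ℕ) : cf t 0 (k+1) 1 = -(1 - t^2) * (k+1) * t^k := by
  induction k with
  | zero =>
    have := cf_rec t 0 0
    simp [cf_zero_zero, cf_k_zero'] at this
    simp; linarith
  | succ k ih =>
    have := cf_rec t (k+1) 0
    rw [cf_k_zero', cf_k_zero', zero_add, ih] at this
    push_cast
    rw [sub_eq_iff_eq_add] at this
    rw [this]; ring

lemma cf_one_k (t : ℝ) (k : ℕ) : cf t 0 1 (k+1) = -(1 - t^2) * t^k := by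
  induction k with
  | zero => have := cf_k_one t 0; simpa using this
  | succ k ih =>
    have := cf_rec t 0 (k+1)
    simp [cf_zero_zero] at this
    rw [sub_eq_zero.1 this, ih]; ring

lemma tri (t : ℝ) (n : ℕ) : (1-t^2) * cf t 0 (n+1) 0 = -t * cf t 0 1 (n+1) ∧
    ∀ k, (1-t^2) * cf t 0 (n+1) (k+1) =
      -t * cf t 0 (k+2) (n+1) + (1+t^2) * cf t 0 (k+1) (n+1) - t * cf t 0 k (n+1) := by
  induction n with
  | zero =>
    refine ⟨by rw [cf_k_zero', cf_one_k]; ring, fun k => ?_⟩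
    rw [zero_add, cf_one_k, cf_k_one, cf_k_one]
    cases k with
    | zero => simp [cf_zero_zero]; ring
    | succ k => rw [cf_k_one]; push_cast; ring
  | succ n ih =>
    obtain ⟨ih0, ih1⟩ := ih
    have z0 : ∀ m, cf t 0 0 (m+1) = 0 := fun m => by simp [cf_zero_zero]
    have r0 := cf_rec t 0 (n+1)
    rw [z0, z0] at r0
    have first : (1-t^2) * cf t 0 (n+1+1) 0 = -t * cf t 0 1 (n+1+1) := by
      rw [cf_k_zero]
      linear_combination t * ih0 + t * r0
    refine ⟨first, fun k => ?_⟩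
    induction k with
    | zero =>
      have r1 := cf_rec t 1 (n+1)
      have q := cf_rec t (n+1) 0
      have i1 := ih1 0
      simp only [zero_add, z0] at *
      linear_combination (1-t^2) * q + t * i1 - ih0 + t * first + t * r1 - (1+t^2) * r0
    | succ k ihk =>
      have r1 := cf_rec t k (n+1)
      have r2 := cf_rec t (k+1) (n+1)
      have r3 := cf_rec t (k+2) (n+1)
      have q := cf_rec t (n+1) (k+1)
      have i1 := ih1 (k+1)
      have i0 := ih1 k
      simp only [add_assoc, Nat.reduceAdd] at *
      linear_combination (1-t^2) * q + t * i1 - i0 + t * ihk + t * r3 - (1+t^2) * r2 + t * r1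

lemma w_bdd {w : ℕ → ℝ} (hlim : Tendsto w atTop (nhds 1)) : ∃ V, 0 < V ∧ ∀ k, |w k| ≤ V := by
  obtain ⟨V, hV⟩ := (hlim.abs).bddAbove_range
  refine ⟨max V 1, by positivity, fun k => le_max_of_le_left (hV ⟨k, rfl⟩)⟩

lemma bound2 {w : ℕ → ℝ} (hpos : ∀ k, 1 ≤ k → 0 < w k)
    (hlim : Tendsto w atTop (nhds 1)) {t : ℝ} (ht : t ∈ Set.Ioo (0:ℝ) 1)
    {T : H2 →L[ℂ] H2} (hT : RepComp (betaSeq w) (mobius (t:ℂ)) T) : ∃ K, ∀ n : ℕ, 1 ≤ n →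
    ∑' k, cf t 0 n k ^ 2 * (betaSeq w n / betaSeq w k) ^ 2 ≤ K := by
  have h1 : 0 < 1 - t^2 := by nlinarith [ht.1, ht.2]
  have hl : Tendsto (fun k => ((w k)⁻¹)) atTop (nhds 1) := by
    simpa using (hlim.inv₀ one_ne_zero)
  obtain ⟨V, hV0, hV⟩ := w_bdd hlim
  obtain ⟨U, hU0, hU⟩ := w_bdd hl
  refine ⟨12 / (1-t^2)^2 * (V^2 * ‖T‖^2 + ‖T‖^2 + U^2 * ‖T‖^2), fun n hn => ?_⟩
  obtain ⟨m, rfl⟩ : ∃ m, n = m + 1 := ⟨n - 1, by omega⟩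
  obtain ⟨S, hS, hs⟩ := bound2a hpos hlim ht hT (m+1)
  set β := betaSeq w with hβ
  set a : ℕ → ℝ := fun k => cf t 0 k (m+1) ^ 2 * (β (m+1) / β k) ^ 2 with ha
  have hbp : ∀ k, 0 < β k := betaSeq_pos hpos
  have ha0 : ∀ k, 0 ≤ a k := fun k => by positivity
  have hsV := (hasSum_nat_add_iff' 1).2 hs
  set p : ℕ → ℝ := fun k => Nat.casesOn k 0 a with hp
  have hsU : HasSum p S := by
    have := (hasSum_nat_add_iff (f := p) (g := S) 1).1 hs
    simpa [hp] using this
  have tot := (((hsV.mul_left (V^2)).add hs).add (hsU.mul_left (U^2))).mul_left (12 / (1-t^2)^2)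
  have hle := hasSum_le (fun k => ?_) (summable_R hpos hlim ht (m+1)).hasSum tot
  · refine hle.trans ?_
    have q0 : S - ∑ i ∈ Finset.range 1, a i ≤ ‖T‖^2 := by
      simp only [Finset.range_one, Finset.sum_singleton]
      have := ha0 0; linarith
    gcongr
  · have sq : (β (m+1) / β k)^2 * cf t 0 (k+1) (m+1)^2 ≤ V^2 * a (k+1) := by
      have e : (β (m+1) / β k)^2 * cf t 0 (k+1) (m+1)^2 = (w (k+1))^2 * a (k+1) := by
        have := hbp k
        have := hpos (k+1) (by omega)
        simp only [ha, hβ, betaSeq_succ w k]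
        rw [← hβ]
        field_simp
      rw [e]
      have : w (k+1)^2 ≤ V^2 := by rw [← sq_abs]; gcongr; exact hV _
      have := ha0 (k+1)
      gcongr
    have sq1 : (β (m+1) / β k)^2 * cf t 0 k (m+1)^2 = a k := by simp only [ha]; ring
    have key : (1-t^2)^2 * (cf t 0 (m+1) k ^ 2 * (β (m+1) / β k) ^ 2) ≤
        12 * (V^2 * a (k+1) + a k + U^2 * p k) := by
      have ht2 : t^2 ≤ 1 := by linarith
      have ht4 : (1+t^2)^2 ≤ 4 := by nlinarith
      set B := (β (m+1) / β k)^2 with hB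
      have hB0 : 0 ≤ B := by positivity
      cases k with
      | zero =>
        have e := (tri t m).1
        have : (1-t^2)^2 * (cf t 0 (m+1) 0 ^ 2 * B) = t^2 * (B * cf t 0 1 (m+1) ^ 2) := by
          linear_combination (B * ((1-t^2) * cf t 0 (m+1) 0 - t * cf t 0 1 (m+1))) * e
        rw [this]
        have hp0 : p 0 = 0 := rfl
        rw [hp0]
        have A0 := ha0 0
        have A1 := ha0 1
        simp only [zero_add] at *
        have : 0 ≤ B * cf t 0 1 (m+1) ^ 2 := by positivity
        have : 0 ≤ V^2 * a 1 := by positivity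
        nlinarith
      | succ j =>
        have e := (tri t m).2 j
        have hpj : p (j+1) = a j := rfl
        rw [hpj]
        have sq2 : B * cf t 0 j (m+1)^2 ≤ U^2 * a j := by
          have e : B * cf t 0 j (m+1)^2 = ((w (j+1))⁻¹)^2 * a j := by
            have := hbp j
            have := hpos (j+1) (by omega)
            simp only [hB, ha, hβ, betaSeq_succ w j]
            rw [← hβ]
            field_simp
          rw [e]
          have : (w (j+1))⁻¹^2 ≤ U^2 := by rw [← sq_abs]; gcongr; exact hU _
          have := ha0 j
          gcongr
        have e2 : (1-t^2)^2 * (cf t 0 (m+1) (j+1) ^ 2 * B) =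
          B * (-t * cf t 0 (j+2) (m+1) + (1+t^2) * cf t 0 (j+1) (m+1) - t * cf t 0 j (m+1))^2 := by
          rw [← e]; ring
        rw [e2]
        set x := cf t 0 (j+2) (m+1)
        set y := cf t 0 (j+1) (m+1)
        set z := cf t 0 j (m+1)
        have i1 : (-t * x + (1+t^2) * y - t * z)^2 ≤
            3 * (t^2 * x^2 + (1+t^2)^2 * y^2 + t^2 * z^2) := by
          nlinarith [sq_nonneg (-t*x - (1+t^2)*y), sq_nonneg (-t*x + t * z),
            sq_nonneg ((1+t^2)*y + t*z)]
        have i2 : 3 * (t^2 * x^2 + (1+t^2)^2 * y^2 + t^2 * z^2) ≤ 12 * (x^2 + y^2 + z^2) := by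
          nlinarith [mul_le_mul_of_nonneg_right ht2 (sq_nonneg x),
            mul_le_mul_of_nonneg_right ht2 (sq_nonneg z),
            mul_le_mul_of_nonneg_right ht4 (sq_nonneg y), sq_nonneg x, sq_nonneg z]
        have i3 := mul_le_mul_of_nonneg_left (i1.trans i2) hB0
        have sq' : B * x^2 ≤ V^2 * a (j+1+1) := sq
        nlinarith
    rw [div_mul_eq_mul_div, le_div_iff₀ (by positivity)]
    linarith

lemma berg_pos {α : ℝ} (hα : 0 < α) (k : ℕ) : 0 < bergBeta α k :=
  Finset.prod_pos fun i _ => Real.sqrt_pos.2 (by positivity)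

lemma berg_succ (α : ℝ) (k : ℕ) : bergBeta α (k+1) =
    bergBeta α k * Real.sqrt (((k:ℝ) + 2) / ((k:ℝ) + 2 * α + 2)) := by
  unfold bergBeta; rw [Finset.prod_Icc_succ_top (by omega)]
  congr 2
  push_cast; ring

lemma berg_ratio {α : ℝ} (hα : 0 < α) {k n : ℕ} (hk : k ≤ n) :
    1 + 2 * α * ((n:ℝ) - k) / (n + 1) ≤ (bergBeta α k / bergBeta α n)^2 := by
  have key : ∀ m, k ≤ m → m ≤ n →
      1 + 2 * α * ((m:ℝ) - k) / (n + 1) ≤ (bergBeta α k / bergBeta α m)^2 := by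
    intro m hm
    induction m, hm using Nat.le_induction with
    | base =>
      intro _
      rw [div_self (berg_pos hα k).ne']; simp
    | succ m hm ih =>
      intro hmn
      have i := ih (by omega)
      have hb := berg_pos hα m
      have e : (bergBeta α k / bergBeta α (m+1))^2 =
          (bergBeta α k / bergBeta α m)^2 * (1 + 2 * α / (m + 2)) := by
        rw [berg_succ, div_pow, mul_pow, Real.sq_sqrt (by positivity)]
        field_simp
        ring
      rw [e]
      have hmk : (k:ℝ) ≤ m := by exact_mod_cast hm
      have hX : 1 ≤ (bergBeta α k / bergBeta α m)^2 := by
        refine le_trans ?_ i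
        have : 0 ≤ (m:ℝ) - k := by linarith
        have : 0 ≤ 2 * α * ((m:ℝ) - k) / (n + 1) := by positivity
        linarith
      have hmn' : (m:ℝ) + 2 ≤ n + 1 := by
        have : ((m+1:ℕ):ℝ) ≤ n := by exact_mod_cast hmn
        push_cast at this; linarith
      have f : 2 * α / (n+1) ≤ 2 * α / ((m:ℝ)+2) := by gcongr
      have f0 : 0 ≤ 2 * α / ((m:ℝ)+2) := by positivity
      have g : 1 + 2 * α * (((m+1:ℕ):ℝ) - k) / (n + 1) =
          1 + 2 * α * ((m:ℝ) - k) / (n + 1) + 2 * α / (n+1) := by push_cast; ring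
      rw [g]
      nlinarith
  exact key n hk le_rfl

lemma R_tendsto {w : ℕ → ℝ} (hpos : ∀ k, 1 ≤ k → 0 < w k)
    (hlim : Tendsto w atTop (nhds 1)) {t : ℝ} (ht : t ∈ Set.Ioo (0:ℝ) 1)
    (a : ℕ → ℝ) (n : ℕ → ℕ) (ha : ∀ j, 0 < a j) (haT : Tendsto a atTop atTop)
    (hn : Tendsto n atTop atTop)
    (h : ∀ j k : ℕ, k ≤ n j →
        bergBeta (a j) k / bergBeta (a j) (n j) ≤ betaSeq w (n j) / betaSeq w k) :
    Tendsto (fun j => ∑' k, cf t 0 (n j) k ^ 2 * (betaSeq w (n j) / betaSeq w k) ^ 2)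
      atTop atTop := by
  obtain ⟨ε, hε, hd⟩ := deficit ht
  refine tendsto_atTop_mono' atTop ?_ (haT.const_mul_atTop hε)
  filter_upwards [hn.eventually_ge_atTop 3] with j hj
  have h1 := (summable_R hpos hlim ht (n j)).sum_le_tsum (Finset.range (n j + 1))
    (fun k _ => by positivity)
  refine le_trans ?_ h1
  have hα := ha j
  have hN : (3:ℝ) ≤ n j := by exact_mod_cast hj
  have h2 : 2 * a j / ((n j:ℝ) + 1) *
      ∑ k ∈ Finset.range (n j+1), ((n j:ℝ) - k) * cf t 0 (n j) k ^ 2 ≤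
      ∑ k ∈ Finset.range (n j + 1),
        cf t 0 (n j) k ^ 2 * (betaSeq w (n j) / betaSeq w k) ^ 2 := by
    rw [Finset.mul_sum]
    refine Finset.sum_le_sum fun k hk => ?_
    have hk' : k ≤ n j := Nat.lt_succ_iff.1 (Finset.mem_range.1 hk)
    have b1 := berg_ratio hα hk'
    have b2 : (bergBeta (a j) k / bergBeta (a j) (n j))^2 ≤ (betaSeq w (n j) / betaSeq w k)^2 := by
      have := berg_pos hα k
      have := berg_pos hα (n j)
      have := h j k hk'
      gcongr
    calc _ = cf t 0 (n j) k ^ 2 * (2 * a j * ((n j:ℝ) - k) / (n j + 1)) := by ring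
      _ ≤ _ := by gcongr; linarith
  refine le_trans ?_ h2
  have h3 : 2 * a j / ((n j:ℝ) + 1) * (ε * n j) ≤ 2 * a j / ((n j:ℝ) + 1) *
      ∑ k ∈ Finset.range (n j+1), ((n j:ℝ) - k) * cf t 0 (n j) k ^ 2 := by
    gcongr; exact hd _ hj
  refine le_trans ?_ h3
  rw [div_mul_eq_mul_div, le_div_iff₀ (by positivity)]
  have : 0 < a j * ε := by positivity
  nlinarith

lemma part1 {w : ℕ → ℝ} (hpos : ∀ k, 1 ≤ k → 0 < w k)
    (hlim : Tendsto w atTop (nhds 1)) {t : ℝ} (ht : t ∈ Set.Ioo (0:ℝ) 1)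
    (a : ℕ → ℝ) (n : ℕ → ℕ) (ha : ∀ j, 0 < a j) (haT : Tendsto a atTop atTop)
    (hn : Tendsto n atTop atTop)
    (h : ∀ j k : ℕ, k ≤ n j →
        bergBeta (a j) k / bergBeta (a j) (n j) ≤ betaSeq w (n j) / betaSeq w k) :
    Tendsto (fun j : ℕ =>
            wNormSq (fun k => (betaSeq w k)⁻¹) (fun z => mobius (t : ℂ) z ^ n j) /
              ((betaSeq w (n j))⁻¹) ^ 2) atTop atTop ∧
        (¬ ∃ T : H2 →L[ℂ] H2, RepComp (fun k => (betaSeq w k)⁻¹) (mobius (t : ℂ)) T) ∧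
        (¬ ∃ T : H2 →L[ℂ] H2, RepComp (betaSeq w) (mobius (t : ℂ)) T) := by
  have R := R_tendsto hpos hlim ht a n ha haT hn h
  refine ⟨?_, ?_, ?_⟩
  · convert! R using 1
    ext j
    unfold wNormSq
    rw [← tsum_div_const]
    congr 1
    ext k
    rw [taylor_unique (fun z hz => cf_hasSum ht hz (n j)) k, Complex.norm_real,
      Real.norm_eq_abs, sq_abs]
    have := betaSeq_pos hpos k
    have := betaSeq_pos hpos (n j)
    field_simp
  · rintro ⟨T, hT⟩
    obtain ⟨j, hj⟩ := (R.eventually_gt_atTop (‖T‖^2)).exists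
    exact absurd (bound1 hpos hlim ht hT (n j)) (not_le.2 hj)
  · rintro ⟨T, hT⟩
    obtain ⟨K, hK⟩ := bound2 hpos hlim ht hT
    obtain ⟨j, hj, hj2⟩ := ((R.eventually_gt_atTop K).and (hn.eventually_ge_atTop 1)).exists
    exact absurd (hK (n j) hj2) (not_le.2 hj)

lemma q_tendsto {w : ℕ → ℝ} (hpos : ∀ k, 1 ≤ k → 0 < w k)
    (hT : Tendsto (fun k : ℕ => ((k : ℝ) + 1) * (w k - 1)) atTop atTop) {α : ℝ} (hα : 0 < α) :
    Tendsto (fun k => betaSeq w k * bergBeta α k) atTop atTop := by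
  obtain ⟨N, hN⟩ := eventually_atTop.1 (hT.eventually_ge_atTop (α + 1))
  set q : ℕ → ℝ := fun k => betaSeq w k * bergBeta α k with hq
  have hq0 : ∀ k, 0 < q k := fun k => mul_pos (betaSeq_pos hpos k) (berg_pos hα k)
  have step : ∀ k, N ≤ k → q k * (k + 3 + α) ≤ q (k+1) * (k + 2 + α) := by
    intro k hk
    have h1 := hN (k+1) (by omega)
    push_cast at h1
    have e : q (k+1) = q k * (w (k+1) * Real.sqrt (((k:ℝ) + 2) / ((k:ℝ) + 2 * α + 2))) := by
      simp only [hq]; rw [betaSeq_succ, berg_succ]; ring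
    have h2 : ((k:ℝ) + 2) / (k + 2 + α) ≤ Real.sqrt (((k:ℝ) + 2) / ((k:ℝ) + 2 * α + 2)) := by
      apply Real.le_sqrt_of_sq_le
      rw [div_pow, div_le_div_iff₀ (by positivity) (by positivity)]
      have hk0 : (0:ℝ) ≤ k := Nat.cast_nonneg k
      nlinarith [mul_nonneg (by linarith : (0:ℝ) ≤ k + 2) (sq_nonneg α)]
    have h3 : ((k:ℝ) + 3 + α) / (k + 2) ≤ w (k+1) := by
      rw [div_le_iff₀ (by positivity)]; linarith
    have h4 : ((k:ℝ) + 3 + α) / (k + 2 + α) ≤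
        w (k+1) * Real.sqrt (((k:ℝ) + 2) / ((k:ℝ) + 2 * α + 2)) := by
      have := hpos (k+1) (by omega)
      calc _ = ((k:ℝ) + 3 + α) / (k + 2) * (((k:ℝ) + 2) / (k + 2 + α)) := by field_simp
        _ ≤ _ := by gcongr
    rw [div_le_iff₀ (by positivity)] at h4
    rw [e]
    have h5 := mul_le_mul_of_nonneg_left h4 (hq0 k).le
    calc q k * (k + 3 + α) ≤ _ := h5
      _ = _ := by ring
  set c := q N / (N + 2 + α) with hc
  have hc0 : 0 < c := div_pos (hq0 N) (by positivity)
  have low : ∀ k, N ≤ k → c * (k + 2 + α) ≤ q k := by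
    intro k hk
    induction k, hk using Nat.le_induction with
    | base => rw [hc]; field_simp; rfl
    | succ k hk ih =>
      have s := step k hk
      have p2 : (0:ℝ) < k + 2 + α := by positivity
      have p3 : (0:ℝ) < k + 3 + α := by positivity
      have : (c * (((k+1:ℕ):ℝ) + 2 + α)) * (k + 2 + α) ≤ q (k+1) * (k + 2 + α) := by
        refine le_trans ?_ s
        push_cast
        nlinarith
      exact le_of_mul_le_mul_right this p2
  refine tendsto_atTop_mono' atTop (f₁ := fun k : ℕ => c * (k:ℝ)) ?_
    (tendsto_natCast_atTop_atTop.const_mul_atTop hc0)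
  filter_upwards [eventually_ge_atTop N] with k hk
  have := low k hk
  nlinarith

lemma part2 {w : ℕ → ℝ} (hpos : ∀ k, 1 ≤ k → 0 < w k)
    (hlim : Tendsto w atTop (nhds 1))
    (hT : Tendsto (fun k : ℕ => ((k : ℝ) + 1) * (w k - 1)) atTop atTop)
    {t : ℝ} (ht : t ∈ Set.Ioo (0:ℝ) 1) :
    (¬ ∃ T : H2 →L[ℂ] H2, RepComp (fun k => (betaSeq w k)⁻¹) (mobius (t : ℂ)) T) ∧
        (¬ ∃ T : H2 →L[ℂ] H2, RepComp (betaSeq w) (mobius (t : ℂ)) T) := by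
  have hx : ∀ j : ℕ, (0:ℝ) < j + 1 := fun j => by positivity
  choose n hn1 hn2 using fun j : ℕ => high_scores (q_tendsto hpos hT (hx j)) j
  refine (part1 hpos hlim ht (fun j => (j:ℝ) + 1) n hx ?_ ?_ ?_).2
  · exact tendsto_atTop_add_const_right _ _ tendsto_natCast_atTop_atTop
  · exact tendsto_atTop_mono hn1 tendsto_id
  · intro j k hk
    have b1 := berg_pos (hx j) (n j)
    have b2 := betaSeq_pos hpos k
    rw [div_le_div_iff₀ b1 b2]
    rcases hk.lt_or_eq with h | h
    · have := hn2 j k h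
      linarith
    · rw [h, mul_comm]

/-- Let `H²_β` come from a weight sequence `w_k → 1`.  If there are
positive reals `α_j → ∞` and integers `n_j → ∞` with
`β_{n_j}/β_k ≥ β^{(α_j)}_k/β^{(α_j)}_{n_j}` for all `0 ≤ k ≤ n_j`, then for every
`t ∈ (0,1)` the ratios `‖φ_t^{n_j}‖²_{β⁻¹}/‖z^{n_j}‖²_{β⁻¹}` tend to infinity and
`C_{φ_t}` is unbounded on `H²_{β⁻¹}` and on `H²_β`.  In particular this holds
whenever `(k+1)(w_k - 1) → +∞` or `(k+1)(w_k - 1) → −∞`. -/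
theorem statement16 (w : ℕ → ℝ) (hpos : ∀ k, 1 ≤ k → 0 < w k)
    (hlim : Tendsto w atTop (nhds 1)) :
    (∀ (a : ℕ → ℝ) (n : ℕ → ℕ), (∀ j, 0 < a j) → Tendsto a atTop atTop →
      Tendsto n atTop atTop →
      (∀ j k : ℕ, k ≤ n j →
        bergBeta (a j) k / bergBeta (a j) (n j) ≤ betaSeq w (n j) / betaSeq w k) →
      ∀ t : ℝ, t ∈ Set.Ioo (0:ℝ) 1 →
        Tendsto (fun j : ℕ =>
            wNormSq (fun k => (betaSeq w k)⁻¹) (fun z => mobius (t : ℂ) z ^ n j) /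
              ((betaSeq w (n j))⁻¹) ^ 2) atTop atTop ∧
        (¬ ∃ T : H2 →L[ℂ] H2, RepComp (fun k => (betaSeq w k)⁻¹) (mobius (t : ℂ)) T) ∧
        (¬ ∃ T : H2 →L[ℂ] H2, RepComp (betaSeq w) (mobius (t : ℂ)) T)) ∧
    ((Tendsto (fun k : ℕ => ((k : ℝ) + 1) * (w k - 1)) atTop atTop ∨
        Tendsto (fun k : ℕ => ((k : ℝ) + 1) * (w k - 1)) atTop atBot) →
      ∀ t : ℝ, t ∈ Set.Ioo (0:ℝ) 1 →
        (¬ ∃ T : H2 →L[ℂ] H2, RepComp (fun k => (betaSeq w k)⁻¹) (mobius (t : ℂ)) T) ∧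
        (¬ ∃ T : H2 →L[ℂ] H2, RepComp (betaSeq w) (mobius (t : ℂ)) T)) := by
  refine ⟨fun a n ha haT hn h t ht => part1 hpos hlim ht a n ha haT hn h, ?_⟩
  rintro (hT | hT) t ht
  · exact part2 hpos hlim hT ht
  · have hl : Tendsto (fun k => ((w k)⁻¹)) atTop (nhds 1) := by
      simpa using (hlim.inv₀ one_ne_zero)
    have hT' : Tendsto (fun k : ℕ => ((k : ℝ) + 1) * ((w k)⁻¹ - 1)) atTop atTop := by
      have := (tendsto_neg_atBot_atTop.comp hT).atTop_mul_pos one_pos hl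
      refine this.congr' ?_
      filter_upwards [eventually_ge_atTop 1] with k hk
      have := hpos k hk
      simp only [Function.comp]
      field_simp
      ring
    have := part2 (w := fun k => (w k)⁻¹)
      (fun k hk => by have := hpos k hk; positivity) hl hT' ht
    have e : betaSeq (fun k => (w k)⁻¹) = fun k => (betaSeq w k)⁻¹ := by
      ext k; exact betaSeq_inv w k
    rw [e] at this
    simp only [inv_inv] at this
    exact ⟨this.2, this.1⟩
end
end
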